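/- arXiv:1806.08855 — 4 statements merged into one kernel-verified Lean document; each statement's English description precedes it below -/
import Mathlib

section
/- Suppose m, l, t are positive integers with m ≥ tl and t ≥ 2. Let G be a family of l-element subsets of [m] and α := |G|/C(m,l). Let B = (B_1,…,B_t) be a uniformly random ordered tuple of t pairwise disjoint l-element subsets of [m], and for i ∈ [t] let η_i be the indicator of the event that B_i ∈ G. Then for any i ≠ j in [t], |Cov(η_i, η_j)| ≤ α(1−α)/(t−1). -/
open Finset

/-- The set of ordered tuples of `t` pairwise disjoint `l`-element subsets of
`{0,…,m-1}` (ordered `t`-matchings of `l`-sets). -/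
noncomputable def tupleSpace (m l t : ℕ) : Finset (Fin t → Finset ℕ) :=
  (Fintype.piFinset fun _ : Fin t => (Finset.range m).powersetCard l).filter
    fun B => ∀ i j : Fin t, i ≠ j → Disjoint (B i) (B j)

/-- `hits G B` is the number of indices `i` with `B i ∈ G`. -/
noncomputable def hits (G : Finset (Finset ℕ)) {t : ℕ} (B : Fin t → Finset ℕ) : ℕ :=
  (Finset.univ.filter fun i : Fin t => B i ∈ G).card

/-- The indicator (as a real number) of the event that the `i`-th set of the
tuple `B` belongs to `G`. -/
noncomputable def indG (G : Finset (Finset ℕ)) {t : ℕ} (i : Fin t)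
    (B : Fin t → Finset ℕ) : ℝ :=
  if B i ∈ G then 1 else 0


namespace CovAux

variable {V : Finset ℕ}

lemma reindex (k : ℕ) (φ : Finset ℕ → ℕ → ℝ) :
    ∑ S ∈ V.powersetCard (k+1), ∑ x ∈ S, φ S x
      = ∑ A ∈ V.powersetCard k, ∑ x ∈ V \ A, φ (insert x A) x := by
  rw [Finset.sum_sigma', Finset.sum_sigma']
  refine Finset.sum_bij' (fun p _ => ⟨p.1.erase p.2, p.2⟩) (fun p _ => ⟨insert p.2 p.1, p.2⟩)
    ?_ ?_ ?_ ?_ ?_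
  · rintro ⟨S, x⟩ h
    simp only [mem_sigma, mem_powersetCard, mem_sdiff, mem_erase] at h ⊢
    obtain ⟨⟨h1, h2⟩, h3⟩ := h
    refine ⟨⟨(erase_subset _ _).trans h1, ?_⟩, h1 h3, by simp⟩
    rw [card_erase_of_mem h3, h2]; rfl
  · rintro ⟨A, x⟩ h
    simp only [mem_sigma, mem_powersetCard, mem_sdiff] at h ⊢
    obtain ⟨⟨h1, h2⟩, h3, h4⟩ := h
    refine ⟨⟨insert_subset h3 h1, ?_⟩, by simp⟩
    rw [card_insert_of_notMem h4, h2]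
  · rintro ⟨S, x⟩ h
    simp only [mem_sigma] at h
    simp [insert_erase h.2]
  · rintro ⟨A, x⟩ h
    simp only [mem_sigma, mem_sdiff] at h
    simp [erase_insert h.2.2]
  · rintro ⟨S, x⟩ h
    simp only [mem_sigma] at h
    simp [insert_erase h.2]

noncomputable def up (f : Finset ℕ → ℝ) (S : Finset ℕ) : ℝ := ∑ x ∈ S, f (S.erase x)
noncomputable def dn (V : Finset ℕ) (f : Finset ℕ → ℝ) (T : Finset ℕ) : ℝ :=
  ∑ x ∈ V \ T, f (insert x T)

/-- adjointness -/
lemma adj (k : ℕ) (f g : Finset ℕ → ℝ) :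
    ∑ S ∈ V.powersetCard (k+1), g S * up f S = ∑ T ∈ V.powersetCard k, dn V g T * f T := by
  simp only [up, dn, Finset.mul_sum, Finset.sum_mul]
  rw [reindex k (fun S x => g S * f (S.erase x))]
  refine sum_congr rfl fun A _ => sum_congr rfl fun x hx => ?_
  rw [erase_insert (mem_sdiff.1 hx).2]

lemma comm (f : Finset ℕ → ℝ) (A : Finset ℕ) (hA : A ⊆ V) :
    dn V (up f) A - up (dn V f) A = ((V.card : ℝ) - 2 * A.card) * f A := by
  have h1 : dn V (up f) A = (V \ A).card * f A
      + ∑ x ∈ V \ A, ∑ y ∈ A, f ((insert x A).erase y) := by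
    unfold dn up
    rw [← nsmul_eq_mul, ← sum_const, ← sum_add_distrib]
    refine sum_congr rfl fun x hx => ?_
    have := (mem_sdiff.1 hx).2
    rw [sum_insert this, erase_insert this]
  have h2 : up (dn V f) A = A.card * f A
      + ∑ y ∈ A, ∑ x ∈ V \ A, f ((insert x A).erase y) := by
    unfold dn up
    rw [← nsmul_eq_mul, ← sum_const, ← sum_add_distrib]
    refine sum_congr rfl fun y hy => ?_
    have e : V \ A.erase y = insert y (V \ A) := by
      ext z; simp only [mem_sdiff, mem_erase, mem_insert]
      by_cases hz : z = y
      · subst hz; simp [hA hy]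
      · simp [hz]
    beta_reduce
    rw [e, sum_insert (by simp [hy]), insert_erase hy]
    congr 1
    refine sum_congr rfl fun x hx => ?_
    have hxA := (mem_sdiff.1 hx).2
    have hne : x ≠ y := by rintro rfl; exact hxA hy
    rw [erase_insert_of_ne hne]
  rw [h1, h2, sum_comm, card_sdiff_of_subset hA, Nat.cast_sub (card_le_card hA)]
  ring

lemma norm_rel (k : ℕ) (f : Finset ℕ → ℝ) :
    ∑ S ∈ V.powersetCard (k+2), up f S ^ 2
      = ∑ T ∈ V.powersetCard k, dn V f T ^ 2
        + ((V.card : ℝ) - 2 * (k+1)) * ∑ A ∈ V.powersetCard (k+1), f A ^ 2 := by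
  have h1 := adj (V := V) (k+1) f (up f)
  have h2 := adj (V := V) k (dn V f) f
  simp only [pow_two]
  rw [h1, ← h2, mul_sum, ← sum_add_distrib]
  refine sum_congr rfl fun A hA => ?_
  rw [mem_powersetCard] at hA
  have := comm f A hA.1
  rw [hA.2] at this
  push_cast at this
  linear_combination f A * this

lemma sum_up (k : ℕ) (f : Finset ℕ → ℝ) :
    ∑ S ∈ V.powersetCard (k+1), up f S
      = ((V.card : ℝ) - k) * ∑ A ∈ V.powersetCard k, f A := by
  have := adj (V := V) k f (fun _ => 1)
  simp only [one_mul] at this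
  rw [this, mul_sum]
  refine sum_congr rfl fun A hA => ?_
  rw [mem_powersetCard] at hA
  simp only [dn, sum_const, nsmul_eq_mul, mul_one]
  rw [card_sdiff_of_subset hA.1, Nat.cast_sub (card_le_card hA.1), hA.2]

lemma sum_dn (k : ℕ) (f : Finset ℕ → ℝ) :
    ∑ T ∈ V.powersetCard k, dn V f T
      = ((k : ℝ) + 1) * ∑ A ∈ V.powersetCard (k+1), f A := by
  have := adj (V := V) k (fun _ => 1) f
  simp only [mul_one] at this
  rw [← this, mul_sum]
  refine sum_congr rfl fun A hA => ?_
  rw [mem_powersetCard] at hA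
  simp [up, hA.2, mul_comm]

lemma up_bound (k : ℕ) (hk : k + 1 ≤ V.card) (f : Finset ℕ → ℝ)
    (hf : ∑ A ∈ V.powersetCard k, f A = 0) :
    ∑ S ∈ V.powersetCard (k+1), up f S ^ 2
      ≤ (k : ℝ) * ((V.card : ℝ) - k - 1) * ∑ A ∈ V.powersetCard k, f A ^ 2 := by
  induction k generalizing f with
  | zero =>
    simp at hf
    have : ∑ S ∈ V.powersetCard 1, up f S ^ 2 = 0 := by
      refine sum_eq_zero fun S hS => ?_
      rw [mem_powersetCard] at hS
      obtain ⟨x, rfl⟩ := card_eq_one.1 hS.2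
      simp [up, hf]
    simp [this]
  | succ k ih =>
    rw [norm_rel]
    have hs : ∑ T ∈ V.powersetCard k, dn V f T = 0 := by rw [sum_dn, hf, mul_zero]
    have h := ih (by omega) (dn V f) hs
    have h2 := adj (V := V) k (dn V f) f
    have cs := sum_mul_sq_le_sq_mul_sq (V.powersetCard (k+1)) f (up (dn V f))
    rw [h2] at cs
    simp only [← pow_two (dn V f _)] at cs
    have hkc : ((k : ℝ) + 1 + 1) ≤ V.card := by exact_mod_cast hk
    set p := ∑ T ∈ V.powersetCard k, dn V f T ^ 2 with hp
    set q := ∑ A ∈ V.powersetCard (k+1), f A ^ 2 with hq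
    have hp0 : 0 ≤ p := sum_nonneg fun _ _ => sq_nonneg _
    have hq0 : 0 ≤ q := sum_nonneg fun _ _ => sq_nonneg _
    have ha : 0 ≤ (k : ℝ) * ((V.card : ℝ) - k - 1) := by
      apply mul_nonneg <;> [positivity; linarith]
    have key : p ≤ (k : ℝ) * ((V.card : ℝ) - k - 1) * q := by
      have h3 := cs.trans (mul_le_mul_of_nonneg_left h hq0)
      rcases hp0.eq_or_lt with h0 | h0
      · rw [← h0]; positivity
      · refine le_of_mul_le_mul_right ?_ h0
        linarith
    push_cast
    linarith

noncomputable def F (l : ℕ) (f : Finset ℕ → ℝ) (S : Finset ℕ) : ℝ :=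
  ∑ B ∈ S.powersetCard l, f B

lemma up_F (l n : ℕ) (f : Finset ℕ → ℝ) (S : Finset ℕ) (hS : S.card = l + n) :
    up (F l f) S = n * F l f S := by
  have h : ∀ x ∈ S, F l f (S.erase x) = ∑ B ∈ S.powersetCard l, if x ∉ B then f B else 0 := by
    intro x _
    unfold F
    rw [← sum_filter]
    refine sum_congr ?_ fun _ _ => rfl
    ext B
    simp only [mem_powersetCard, mem_filter, subset_erase]
    tauto
  unfold up
  rw [sum_congr rfl h, sum_comm]
  unfold F
  rw [mul_sum]
  refine sum_congr rfl fun B hB => ?_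
  rw [mem_powersetCard] at hB
  rw [← sum_filter, sum_const, nsmul_eq_mul]
  have : S.filter (fun x => x ∉ B) = S \ B := by ext; simp
  rw [this, card_sdiff_of_subset hB.1, hS, hB.2]
  simp

lemma F_bound (l n r : ℕ) (hV : V.card = l + 2 + r) (hn : n ≤ r + 1) (f : Finset ℕ → ℝ)
    (hf : ∑ A ∈ V.powersetCard (l+1), f A = 0) :
    ∑ S ∈ V.powersetCard (l+1+n), F (l+1) f S = 0 ∧
    ∑ S ∈ V.powersetCard (l+1+n), F (l+1) f S ^ 2
      ≤ ((l+n).choose n : ℝ) * (r.choose n : ℝ) * ∑ A ∈ V.powersetCard (l+1), f A ^ 2 := by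
  induction n with
  | zero =>
    have : ∀ S ∈ V.powersetCard (l+1), F (l+1) f S = f S := by
      intro S hS
      rw [mem_powersetCard] at hS
      unfold F
      rw [← hS.2, powersetCard_self, sum_singleton]
    constructor
    · rw [add_zero, sum_congr rfl this, hf]
    · rw [add_zero, sum_congr rfl fun S hS => by rw [this S hS]]
      simp
  | succ n ih =>
    obtain ⟨h0, hb⟩ := ih (by omega)
    have hu : ∀ S ∈ V.powersetCard (l+1+n+1), up (F (l+1) f) S = ((n:ℝ)+1) * F (l+1) f S := by
      intro S hS
      rw [mem_powersetCard] at hS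
      rw [up_F (l+1) (n+1) f S (by omega)]
      push_cast; rfl
    have h1 := sum_up (V := V) (l+1+n) (F (l+1) f)
    rw [sum_congr rfl hu, h0, mul_zero, ← mul_sum] at h1
    have hn1 : (0:ℝ) < (n:ℝ)+1 := by positivity
    refine ⟨(mul_eq_zero.1 h1).resolve_left hn1.ne', ?_⟩
    have h2 := up_bound (V := V) (l+1+n) (by omega) _ h0
    rw [sum_congr rfl fun S hS => by rw [hu S hS, mul_pow], ← mul_sum, hV] at h2
    set q := ∑ A ∈ V.powersetCard (l+1), f A ^ 2 with hq
    have e1 : ((l+(n+1)).choose (n+1) : ℝ) * (n+1) = (l+n+1) * (l+n).choose n := by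
      have := Nat.add_one_mul_choose_eq (l+n) n
      rw [← add_assoc]
      exact_mod_cast this.symm
    have e2 : (r.choose (n+1) : ℝ) * (n+1) = r.choose n * ((r:ℝ) - n) := by
      have := Nat.choose_succ_right_eq r n
      by_cases hnr : n ≤ r
      · rw [← Nat.cast_sub hnr]; exact_mod_cast this
      · omega
    have hnr : n ≤ r := by omega
    have hnr' : (0:ℝ) ≤ (r:ℝ) - n := by rw [sub_nonneg]; exact_mod_cast hnr
    refine le_of_mul_le_mul_left ?_ (pow_pos hn1 2)
    refine h2.trans ?_
    push_cast
    have h3 := mul_le_mul_of_nonneg_left hb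
      (show (0:ℝ) ≤ ((l:ℝ)+n+1) * ((r:ℝ)-n) by positivity)
    have e3 : ((n:ℝ)+1)^2 * (((l+(n+1)).choose (n+1) : ℝ) * (r.choose (n+1) : ℝ) * q)
       = ((l:ℝ)+n+1) * ((r:ℝ)-n) * (((l+n).choose n : ℝ) * (r.choose n : ℝ) * q) := by
      linear_combination q * (r.choose (n+1) : ℝ) * (n+1) * e1 + (l+n+1) * (l+n).choose n * q * e2
    rw [e3]
    refine le_trans (le_of_eq ?_) h3
    ring

lemma kneser_bound (l m : ℕ) (hl : 0 < l) (hm : 2 * l ≤ m) (hV : V.card = m) (f : Finset ℕ → ℝ)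
    (hf : ∑ A ∈ V.powersetCard l, f A = 0) :
    |∑ A ∈ V.powersetCard l, f A * ∑ B ∈ (V \ A).powersetCard l, f B|
      ≤ ((m-l-1).choose (l-1) : ℝ) * ∑ A ∈ V.powersetCard l, f A ^ 2 := by
  obtain ⟨l, rfl⟩ : ∃ k, l = k + 1 := ⟨l-1, by omega⟩
  obtain ⟨n, rfl⟩ : ∃ n, m = 2 * (l+1) + n := ⟨m - 2*(l+1), by omega⟩
  obtain ⟨-, hb⟩ := F_bound (V := V) l n (l+n) (by omega) (by omega) f hf
  have hrw : 2 * (l+1) + n - (l+1) - 1 = l + n := by omega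
  rw [hrw, Nat.add_sub_cancel, Nat.choose_symm_add]
  have hc : ∑ A ∈ V.powersetCard (l+1), F (l+1) f (V \ A) ^ 2
      = ∑ S ∈ V.powersetCard (l+1+n), F (l+1) f S ^ 2 := by
    refine sum_bij' (fun A _ => V \ A) (fun A _ => V \ A) ?_ ?_ ?_ ?_ ?_
    · intro A hA
      rw [mem_powersetCard] at hA ⊢
      refine ⟨sdiff_subset, ?_⟩
      rw [card_sdiff_of_subset hA.1]; omega
    · intro A hA
      rw [mem_powersetCard] at hA ⊢
      refine ⟨sdiff_subset, ?_⟩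
      rw [card_sdiff_of_subset hA.1]; omega
    · intro A hA
      rw [mem_powersetCard] at hA
      simp [inter_eq_right.2 hA.1]
    · intro A hA
      rw [mem_powersetCard] at hA
      simp [inter_eq_right.2 hA.1]
    · intros; rfl
  have cs := sum_mul_sq_le_sq_mul_sq (V.powersetCard (l+1)) f (fun A => F (l+1) f (V \ A))
  rw [hc] at cs
  have hq0 : 0 ≤ ∑ A ∈ V.powersetCard (l+1), f A ^ 2 := sum_nonneg fun _ _ => sq_nonneg _
  apply abs_le_of_sq_le_sq _ (by positivity)
  refine cs.trans ((mul_le_mul_of_nonneg_left hb hq0).trans (le_of_eq ?_))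
  ring

lemma exists_perm (X Y X' Y' : Finset ℕ) (hX : X ⊆ V) (hY : Y ⊆ V) (hX' : X' ⊆ V) (hY' : Y' ⊆ V)
    (h : Disjoint X Y) (h' : Disjoint X' Y') (cX : X.card = X'.card) (cY : Y.card = Y'.card) :
    ∃ σ : Equiv.Perm ℕ, X.map σ.toEmbedding = X' ∧ Y.map σ.toEmbedding = Y' ∧
      V.map σ.toEmbedding = V := by
  classical
  let col : Finset ℕ → Finset ℕ → ℕ → Fin 4 := fun X Y n =>
    if n ∈ X then 0 else if n ∈ Y then 1 else if n ∈ V then 2 else 3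
  have c0 : ∀ X Y n, col X Y n = 0 ↔ n ∈ X := by
    intro X Y n; simp only [col]; split_ifs <;> simp_all
  have c1 : ∀ X Y, Disjoint X Y → ∀ n, col X Y n = 1 ↔ n ∈ Y := by
    intro X Y h n
    have : n ∈ X → n ∉ Y := fun a => Finset.disjoint_left.1 h a
    simp only [col]; split_ifs <;> simp_all
  have c2 : ∀ X Y n, col X Y n = 2 ↔ n ∈ V \ (X ∪ Y) := by
    intro X Y n; simp only [col]; split_ifs <;> simp_all
  have c3 : ∀ X Y, X ⊆ V → Y ⊆ V → ∀ n, col X Y n = 3 ↔ n ∉ V := by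
    intro X Y hX hY n
    have := @hX n
    have := @hY n
    simp only [col]; split_ifs <;> simp_all
  have c23 : (V \ (X ∪ Y)).card = (V \ (X' ∪ Y')).card := by
    rw [card_sdiff_of_subset (union_subset hX hY), card_sdiff_of_subset (union_subset hX' hY'),
      card_union_of_disjoint h, card_union_of_disjoint h', cX, cY]
  have e : ∀ c, Nonempty ({n // col X Y n = c} ≃ {n // col X' Y' n = c}) := by
    intro c
    fin_cases c
    · exact ⟨(Equiv.subtypeEquivRight (c0 X Y)).trans ((Finset.equivOfCardEq cX).trans
        (Equiv.subtypeEquivRight (c0 X' Y')).symm)⟩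
    · exact ⟨(Equiv.subtypeEquivRight (c1 X Y h)).trans ((Finset.equivOfCardEq cY).trans
        (Equiv.subtypeEquivRight (c1 X' Y' h')).symm)⟩
    · exact ⟨(Equiv.subtypeEquivRight (c2 X Y)).trans ((Finset.equivOfCardEq c23).trans
        (Equiv.subtypeEquivRight (c2 X' Y')).symm)⟩
    · exact ⟨(Equiv.subtypeEquivRight (c3 X Y hX hY)).trans
        (Equiv.subtypeEquivRight (c3 X' Y' hX' hY')).symm⟩
  let σ : Equiv.Perm ℕ := Equiv.ofFiberEquiv fun c => (e c).some
  have hσ : ∀ n, col X' Y' (σ n) = col X Y n := fun n => Equiv.ofFiberEquiv_map _ n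
  have hmem : ∀ (A A' : Finset ℕ), (∀ n, σ n ∈ A' ↔ n ∈ A) → A.map σ.toEmbedding = A' := by
    intro A A' hA
    ext n
    rw [Finset.mem_map_equiv, ← hA, Equiv.apply_symm_apply]
  refine ⟨σ, hmem _ _ fun n => ?_, hmem _ _ fun n => ?_, hmem _ _ fun n => ?_⟩
  · rw [← c0 X' Y', hσ, c0]
  · rw [← c1 X' Y' h', hσ, c1 X Y h]
  · rw [← not_iff_not, ← c3 X' Y' hX' hY', hσ, c3 X Y hX hY]

lemma fiber_le (m l t : ℕ) (i j : Fin t) (X Y X' Y' : Finset ℕ)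
    (hX : X ∈ (range m).powersetCard l) (hY : Y ∈ (range m \ X).powersetCard l)
    (hX' : X' ∈ (range m).powersetCard l) (hY' : Y' ∈ (range m \ X').powersetCard l) :
    ((tupleSpace m l t).filter fun B => B i = X ∧ B j = Y).card
      ≤ ((tupleSpace m l t).filter fun B => B i = X' ∧ B j = Y').card := by
  simp only [mem_powersetCard, subset_sdiff] at hX hY hX' hY'
  obtain ⟨σ, s1, s2, s3⟩ := exists_perm (V := range m) X Y X' Y' hX.1 hY.1.1 hX'.1 hY'.1.1
    hY.1.2.symm hY'.1.2.symm (by omega) (by omega)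
  refine card_le_card_of_injOn (fun B k => (B k).map σ.toEmbedding) ?_ ?_
  · intro B hB
    simp only [tupleSpace, coe_filter, mem_filter, Fintype.mem_piFinset, mem_powersetCard,
      Set.mem_ofPred_eq] at hB ⊢
    obtain ⟨⟨h1, h2⟩, h3, h4⟩ := hB
    refine ⟨⟨fun k => ⟨?_, ?_⟩, fun a b hab => ?_⟩, ?_, ?_⟩
    · rw [← s3]; exact map_subset_map.2 (h1 k).1
    · rw [card_map]; exact (h1 k).2
    · exact (disjoint_map _).2 (h2 a b hab)
    · rw [h3, s1]
    · rw [h4, s2]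
  · intro B _ B' _ h
    funext k
    exact map_injective σ.toEmbedding (congrFun h k)

lemma pair_sum (m l t : ℕ) (i j : Fin t) (hij : i ≠ j) :
    ∃ N : ℝ, ∀ g : Finset ℕ → Finset ℕ → ℝ,
      ∑ B ∈ tupleSpace m l t, g (B i) (B j)
        = N * ∑ X ∈ (range m).powersetCard l, ∑ Y ∈ (range m \ X).powersetCard l, g X Y := by
  classical
  have hfib : ∀ g : Finset ℕ → Finset ℕ → ℝ, ∑ B ∈ tupleSpace m l t, g (B i) (B j) =
      ∑ X ∈ (range m).powersetCard l, ∑ Y ∈ (range m \ X).powersetCard l,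
        (((tupleSpace m l t).filter fun B => B i = X ∧ B j = Y).card : ℝ) * g X Y := by
    intro g
    rw [sum_sigma']
    rw [← sum_fiberwise_of_maps_to (s := tupleSpace m l t)
      (t := ((range m).powersetCard l).sigma fun X => (range m \ X).powersetCard l)
      (g := fun B => (⟨B i, B j⟩ : Σ _ : Finset ℕ, Finset ℕ))]
    · refine sum_congr rfl ?_
      rintro ⟨X, Y⟩ _
      rw [← nsmul_eq_mul, ← sum_const]
      refine sum_congr ?_ ?_
      · ext B; simp
      · intro B hB
        simp only [mem_filter] at hB
        simp [hB.2.1, hB.2.2]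
    · intro B hB
      simp only [tupleSpace, mem_filter, Fintype.mem_piFinset, mem_powersetCard] at hB
      simp only [mem_sigma, mem_powersetCard, subset_sdiff]
      exact ⟨hB.1 i, ⟨(hB.1 j).1, hB.2 j i hij.symm⟩, (hB.1 j).2⟩
  by_cases hex : ∃ X₀ ∈ (range m).powersetCard l, ∃ Y₀, Y₀ ∈ (range m \ X₀).powersetCard l
  · obtain ⟨X₀, hX₀, Y₀, hY₀⟩ := hex
    refine ⟨((tupleSpace m l t).filter fun B => B i = X₀ ∧ B j = Y₀).card, fun g => ?_⟩
    rw [hfib, mul_sum]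
    refine sum_congr rfl fun X hX => ?_
    rw [mul_sum]
    refine sum_congr rfl fun Y hY => ?_
    rw [(fiber_le m l t i j X Y X₀ Y₀ hX hY hX₀ hY₀).antisymm
      (fiber_le m l t i j X₀ Y₀ X Y hX₀ hY₀ hX hY)]
  · refine ⟨0, fun g => ?_⟩
    rw [hfib, zero_mul]
    refine sum_eq_zero fun X hX => sum_eq_zero fun Y hY => ?_
    exact absurd ⟨X, hX, Y, hY⟩ hex

end CovAux

theorem covariance_bound (m l t : ℕ) (hm : 0 < m) (hl : 0 < l) (ht : 2 ≤ t)
    (hml : t * l ≤ m) (G : Finset (Finset ℕ)) (hG : G ⊆ (Finset.range m).powersetCard l)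
    (α : ℝ) (hα : α = (G.card : ℝ) / (m.choose l : ℝ)) (i j : Fin t) (hij : i ≠ j) :
    |(∑ B ∈ tupleSpace m l t, indG G i B * indG G j B) / ((tupleSpace m l t).card : ℝ) -
        (∑ B ∈ tupleSpace m l t, indG G i B) / ((tupleSpace m l t).card : ℝ) *
          ((∑ B ∈ tupleSpace m l t, indG G j B) / ((tupleSpace m l t).card : ℝ))| ≤
      α * (1 - α) / ((t : ℝ) - 1) := by
  classical
  have h2l : 2 * l ≤ m := le_trans (Nat.mul_le_mul_right l ht) hml
  obtain ⟨N, hN⟩ := CovAux.pair_sum m l t i j hij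
  set P := (Finset.range m).powersetCard l with hP
  set d : ℝ := ((m - l).choose l : ℝ) with hd
  have hd0 : 0 < d := by rw [hd]; exact_mod_cast Nat.choose_pos (by omega)
  have hM0 : (0:ℝ) < (m.choose l : ℝ) := by exact_mod_cast Nat.choose_pos (by omega)
  have hPc : (P.card : ℝ) = (m.choose l : ℝ) := by rw [hP, card_powersetCard, card_range]
  have hdeg : ∀ X ∈ P, (((Finset.range m \ X).powersetCard l).card : ℝ) = d := by
    intro X hX
    rw [hP, mem_powersetCard] at hX
    rw [card_powersetCard, card_sdiff_of_subset hX.1, card_range, hX.2]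
  let g : Finset ℕ → ℝ := fun X => if X ∈ G then 1 else 0
  have hgs : ∑ X ∈ P, g X = G.card := by
    simp only [g, sum_boole]
    rw [filter_mem_eq_inter, inter_eq_right.2 hG]
  have left : ∀ h : Finset ℕ → ℝ,
      ∑ X ∈ P, ∑ Y ∈ (Finset.range m \ X).powersetCard l, h X = d * ∑ X ∈ P, h X := by
    intro h
    rw [mul_sum]
    refine sum_congr rfl fun X hX => ?_
    rw [sum_const, nsmul_eq_mul, hdeg X hX]
  have right : ∀ h : Finset ℕ → ℝ,
      ∑ X ∈ P, ∑ Y ∈ (Finset.range m \ X).powersetCard l, h Y = d * ∑ X ∈ P, h X := by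
    intro h
    rw [← left]
    refine sum_comm' fun X Y => ?_
    simp only [hP, mem_powersetCard, subset_sdiff]
    constructor
    · rintro ⟨⟨a, b⟩, ⟨c, e⟩, k⟩; exact ⟨⟨⟨a, e.symm⟩, b⟩, c, k⟩
    · rintro ⟨⟨⟨a, e⟩, b⟩, c, k⟩; exact ⟨⟨a, b⟩, ⟨c, e.symm⟩, k⟩
  have hcard : ((tupleSpace m l t).card : ℝ) = N * (d * (m.choose l : ℝ)) := by
    have := hN (fun _ _ => 1)
    rw [left (fun _ => 1)] at this
    simpa [hPc] using this
  have hi : ∑ B ∈ tupleSpace m l t, indG G i B = N * (d * G.card) := by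
    have := hN (fun X _ => g X)
    rw [left g, hgs] at this
    exact this
  have hj : ∑ B ∈ tupleSpace m l t, indG G j B = N * (d * G.card) := by
    have := hN (fun _ Y => g Y)
    rw [right g, hgs] at this
    exact this
  set E := ∑ X ∈ P, ∑ Y ∈ (Finset.range m \ X).powersetCard l, g X * g Y with hE
  have hij' : ∑ B ∈ tupleSpace m l t, indG G i B * indG G j B = N * E :=
    hN (fun X Y => g X * g Y)
  have hGM : (G.card : ℝ) = α * (m.choose l : ℝ) := by rw [hα, div_mul_cancel₀ _ hM0.ne']
  have hα0 : 0 ≤ α := by rw [hα]; exact div_nonneg (Nat.cast_nonneg _) hM0.le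
  have hα1 : α ≤ 1 := by
    rw [hα, div_le_one hM0, ← hPc]; exact_mod_cast card_le_card hG
  have hαα : 0 ≤ α * (1 - α) := mul_nonneg hα0 (by linarith)
  have ht1 : (0:ℝ) < (t:ℝ) - 1 := by
    have : (2:ℝ) ≤ t := by exact_mod_cast ht
    linarith
  rw [hij', hi, hj, hcard]
  by_cases hN0 : N = 0
  · subst hN0
    simp only [zero_mul, div_zero, mul_zero, sub_zero, abs_zero]
    positivity
  let f : Finset ℕ → ℝ := fun X => g X - α
  have hf0 : ∑ X ∈ P, f X = 0 := by
    simp only [f, sum_sub_distrib, sum_const, nsmul_eq_mul]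
    rw [hgs, hPc, hGM]; ring
  have hf2 : ∑ X ∈ P, f X ^ 2 = (m.choose l : ℝ) * (α * (1 - α)) := by
    have : ∀ X ∈ P, f X ^ 2 = (1 - 2 * α) * g X + α ^ 2 := by
      intro X _
      simp only [f, g]; split_ifs <;> ring
    rw [sum_congr rfl this, sum_add_distrib, ← mul_sum, hgs, sum_const, nsmul_eq_mul, hPc, hGM]
    ring
  have hff : ∑ X ∈ P, f X * ∑ Y ∈ (Finset.range m \ X).powersetCard l, f Y
      = E - α ^ 2 * (m.choose l : ℝ) * d := by
    have : ∀ X ∈ P, f X * ∑ Y ∈ (Finset.range m \ X).powersetCard l, f Y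
        = ∑ Y ∈ (Finset.range m \ X).powersetCard l, g X * g Y
          - α * ∑ Y ∈ (Finset.range m \ X).powersetCard l, g X
          - α * ∑ Y ∈ (Finset.range m \ X).powersetCard l, g Y
          + ∑ Y ∈ (Finset.range m \ X).powersetCard l, α ^ 2 := by
      intro X _
      rw [mul_sum, mul_sum, mul_sum, ← sum_sub_distrib, ← sum_sub_distrib, ← sum_add_distrib]
      refine sum_congr rfl fun Y _ => ?_
      simp only [f]; ring
    rw [sum_congr rfl this, sum_add_distrib, sum_sub_distrib, sum_sub_distrib, ← mul_sum,
      ← mul_sum, left, right, left (fun _ => α ^ 2), sum_const, nsmul_eq_mul, hPc, hgs, hGM]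
    ring
  have hk := CovAux.kneser_bound (V := Finset.range m) l m hl h2l (card_range m) f hf0
  rw [hff, hf2] at hk
  have e1 : N * E / (N * (d * (m.choose l : ℝ))) -
      N * (d * (G.card : ℝ)) / (N * (d * (m.choose l : ℝ))) *
        (N * (d * (G.card : ℝ)) / (N * (d * (m.choose l : ℝ))))
      = (E - α ^ 2 * (m.choose l : ℝ) * d) / (d * (m.choose l : ℝ)) := by
    rw [hGM]; field_simp
  rw [e1, abs_div, abs_of_pos (mul_pos hd0 hM0), div_le_div_iff₀ (mul_pos hd0 hM0) ht1]
  have hch : ((m - l - 1).choose (l - 1) : ℝ) * ((t:ℝ) - 1) ≤ d := by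
    have hb := Nat.add_one_mul_choose_eq (m - l - 1) (l - 1)
    have q1 : m - l - 1 + 1 = m - l := by omega
    have q2 : l - 1 + 1 = l := by omega
    rw [q1, q2] at hb
    have hb' : ((m:ℝ) - l) * ((m - l - 1).choose (l - 1) : ℝ) = d * l := by
      rw [hd, ← Nat.cast_sub (by omega)]; exact_mod_cast hb
    have hlr : (0:ℝ) < l := by exact_mod_cast hl
    have hmlr : (t:ℝ) * l ≤ m := by exact_mod_cast hml
    refine le_of_mul_le_mul_right ?_ hlr
    rw [← hb']
    have : ((t:ℝ) - 1) * l ≤ (m:ℝ) - l := by linarith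
    have := mul_le_mul_of_nonneg_right this
      (Nat.cast_nonneg (α := ℝ) ((m - l - 1).choose (l - 1)))
    linarith
  have h1 := mul_le_mul_of_nonneg_right hk ht1.le
  have h2 := mul_le_mul_of_nonneg_right hch (mul_nonneg hM0.le hαα)
  linarith
end

section
/- Suppose m, l, t are positive integers with m ≥ tl. Let G be a family of l-element subsets of [m] and α := |G|/C(m,l). Let B = (B_1,…,B_t) be a uniformly random ordered tuple of t pairwise disjoint l-element subsets of [m], and let η := |{i ∈ [t] : B_i ∈ G}|. Then for any real β > 0, Pr[|η − αt| ≥ 2β√t] ≤ 2·e^{−β²/2}. -/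
open Finset

namespace IA

noncomputable def dens (g : Finset ℕ → ℝ) (l : ℕ) (R : Finset ℕ) : ℝ :=
  (∑ B ∈ R.powersetCard l, g B) / (R.card.choose l : ℝ)

lemma sum_exp_le {ι : Type*} (s : Finset ι) (x : ι → ℝ) (V : ℝ)
    (h0 : ∑ i ∈ s, x i = 0) (h1 : ∀ i ∈ s, |x i| ≤ 1)
    (h2 : ∑ i ∈ s, x i ^ 2 ≤ s.card * V) :
    ∑ i ∈ s, Real.exp (x i) ≤ s.card * Real.exp V := by
  have : ∀ i ∈ s, Real.exp (x i) ≤ 1 + x i + x i ^ 2 := by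
    intro i hi
    have := (abs_le.1 (Real.abs_exp_sub_one_sub_id_le (h1 i hi))).2
    linarith
  calc _ ≤ ∑ i ∈ s, (1 + x i + x i ^ 2) := Finset.sum_le_sum this
    _ = s.card + ∑ i ∈ s, x i ^ 2 := by
      rw [Finset.sum_add_distrib, Finset.sum_add_distrib, h0]; simp
    _ ≤ s.card * (V + 1) := by linarith
    _ ≤ _ := by gcongr; exact Real.add_one_le_exp V

lemma sum_exp_le' {ι : Type*} (s : Finset ι) (Y : ι → ℝ) (lam L mu : ℝ)
    (h0 : ∑ i ∈ s, Y i = s.card * mu) (h1 : ∀ i ∈ s, 0 ≤ Y i ∧ Y i ≤ L)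
    (hs : 0 < s.card)
    (hL : |lam| * L ≤ 1) :
    ∑ i ∈ s, Real.exp (lam * (Y i - mu)) ≤ s.card * Real.exp (lam ^ 2 * L ^ 2 / 4) := by
  have hs' : (0:ℝ) < s.card := by exact_mod_cast hs
  have hmu0 : 0 ≤ mu := by
    have : 0 ≤ ∑ i ∈ s, Y i := Finset.sum_nonneg fun i hi => (h1 i hi).1
    rw [h0] at this
    exact nonneg_of_mul_nonneg_right this hs'
  have hmuL : mu ≤ L := by
    have : ∑ i ∈ s, Y i ≤ ∑ i ∈ s, L := Finset.sum_le_sum fun i hi => (h1 i hi).2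
    rw [h0, Finset.sum_const, nsmul_eq_mul] at this
    exact le_of_mul_le_mul_left this hs'
  apply sum_exp_le
  · rw [← Finset.mul_sum, Finset.sum_sub_distrib, h0]; simp
  · intro i hi
    rw [abs_mul]
    refine le_trans ?_ hL
    gcongr
    rw [abs_le]; constructor <;> linarith [(h1 i hi).1, (h1 i hi).2]
  · have h3 : ∑ i ∈ s, (Y i - mu) ^ 2 ≤ ∑ i ∈ s, ((L - 2 * mu) * Y i + mu ^ 2) := by
      apply Finset.sum_le_sum
      intro i hi
      nlinarith [mul_nonneg (h1 i hi).1 (sub_nonneg.2 (h1 i hi).2)]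
    rw [Finset.sum_add_distrib, ← Finset.mul_sum, h0, Finset.sum_const, nsmul_eq_mul] at h3
    simp_rw [mul_pow]
    rw [← Finset.mul_sum]
    have h4 : ∑ i ∈ s, (Y i - mu) ^ 2 ≤ s.card * (L ^ 2 / 4) := by
      refine h3.trans ?_
      have : (L - 2 * mu) * (s.card * mu) + s.card * mu ^ 2 = s.card * (L * mu - mu ^ 2) := by ring
      rw [this]
      gcongr
      nlinarith [sq_nonneg (L - 2 * mu)]
    calc _ ≤ lam ^ 2 * (s.card * (L ^ 2 / 4)) := by gcongr
      _ = _ := by ring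

lemma sum_erase_comm (R : Finset ℕ) (l : ℕ) (F : ℕ → Finset ℕ → ℝ) :
    ∑ a ∈ R, ∑ B ∈ (R.erase a).powersetCard l, F a B
      = ∑ B ∈ R.powersetCard l, ∑ a ∈ R \ B, F a B := by
  apply Finset.sum_comm'
  intro a B
  simp only [Finset.mem_powersetCard, Finset.mem_sdiff, Finset.subset_erase]
  tauto

lemma sum_remove (R : Finset ℕ) (k : ℕ) (F : Finset ℕ → ℝ) :
    ((k : ℝ) + 1) * ∑ A ∈ R.powersetCard (k + 1), F (R \ A)
      = ∑ a ∈ R, ∑ A ∈ (R.erase a).powersetCard k, F (R.erase a \ A) := by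
  have : ((k : ℝ) + 1) * ∑ A ∈ R.powersetCard (k + 1), F (R \ A)
      = ∑ A ∈ R.powersetCard (k + 1), ∑ a ∈ A, F (R \ A) := by
    rw [Finset.mul_sum]
    apply Finset.sum_congr rfl
    intro A hA
    rw [Finset.sum_const, (Finset.mem_powersetCard.1 hA).2]
    simp
  rw [this, Finset.sum_sigma', Finset.sum_sigma']
  refine Finset.sum_bij' (fun p _ => ⟨p.2, p.1.erase p.2⟩) (fun p _ => ⟨insert p.1 p.2, p.1⟩)
    ?_ ?_ ?_ ?_ ?_
  · rintro ⟨A, a⟩ h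
    simp only [Finset.mem_sigma, Finset.mem_powersetCard] at h ⊢
    refine ⟨h.1.1 h.2, Finset.erase_subset_erase _ h.1.1, ?_⟩
    rw [Finset.card_erase_of_mem h.2, h.1.2]; simp
  · rintro ⟨a, A⟩ h
    simp only [Finset.mem_sigma, Finset.mem_powersetCard, Finset.subset_erase] at h ⊢
    refine ⟨⟨Finset.insert_subset h.1 h.2.1.1, ?_⟩, Finset.mem_insert_self _ _⟩
    rw [Finset.card_insert_of_notMem h.2.1.2, h.2.2]
  · rintro ⟨A, a⟩ h
    simp only [Finset.mem_sigma] at h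
    simp [Finset.insert_erase h.2]
  · rintro ⟨a, A⟩ h
    simp only [Finset.mem_sigma, Finset.mem_powersetCard, Finset.subset_erase] at h
    simp [Finset.erase_insert h.2.1.2]
  · rintro ⟨A, a⟩ h
    simp only [Finset.mem_sigma, Finset.mem_powersetCard] at h
    congr 1
    ext z
    simp only [Finset.mem_sdiff, Finset.mem_erase]
    grind

/-- monotone removal induction -/
lemma remove_le (Φ : Finset ℕ → ℝ) (V : ℝ) (n0 : ℕ) 
    (h : ∀ R : Finset ℕ, n0 < R.card →
      ∑ a ∈ R, Real.exp (Φ (R.erase a)) ≤ R.card * Real.exp (Φ R + V)) (k : ℕ) :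
    ∀ R : Finset ℕ, n0 + k ≤ R.card →
      ∑ A ∈ R.powersetCard k, Real.exp (Φ (R \ A)) ≤
        (R.card.choose k : ℝ) * Real.exp (Φ R + k * V) := by
  induction k with
  | zero => intro R _; simp
  | succ k ih =>
    intro R hR
    have h1 := sum_remove R k (fun S => Real.exp (Φ S))
    have hc : ∀ a ∈ R, (R.erase a).card = R.card - 1 := fun a ha => Finset.card_erase_of_mem ha
    have h2 : ∑ a ∈ R, ∑ A ∈ (R.erase a).powersetCard k, Real.exp (Φ (R.erase a \ A))
        ≤ ∑ a ∈ R, ((R.card - 1).choose k : ℝ) * (Real.exp (k * V) * Real.exp (Φ (R.erase a))) := by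
      apply Finset.sum_le_sum
      intro a ha
      have := ih (R.erase a) (by rw [hc a ha]; omega)
      rw [hc a ha, Real.exp_add] at this
      linarith
    rw [← Finset.mul_sum, ← Finset.mul_sum] at h2
    have h3 := h R (by omega)
    have h4 : (R.card : ℝ) * ((R.card - 1).choose k : ℝ) = (k + 1) * (R.card.choose (k+1) : ℝ) := by
      obtain ⟨n, hn⟩ : ∃ n, R.card = n + 1 := ⟨R.card - 1, by omega⟩
      rw [hn]
      have := Nat.add_one_mul_choose_eq n k
      simp only [Nat.add_sub_cancel]
      rw [mul_comm ((k:ℝ)+1)]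
      exact_mod_cast this
    have hk : (0:ℝ) < k + 1 := by positivity
    apply le_of_mul_le_mul_left _ hk
    rw [h1]
    refine h2.trans ?_
    calc _ ≤ ((R.card - 1).choose k : ℝ) * (Real.exp (k * V) * (R.card * Real.exp (Φ R + V))) := by
          gcongr
      _ = (R.card : ℝ) * ((R.card - 1).choose k : ℝ) * (Real.exp (k * V) *  Real.exp (Φ R + V)) := by ring
      _ = _ := by rw [h4, ← Real.exp_add, mul_assoc]; congr 3; push_cast; ring

lemma remove_eq (Φ : Finset ℕ → ℝ) (n0 : ℕ) 
    (h : ∀ R : Finset ℕ, n0 < R.card →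
      ∑ a ∈ R, Φ (R.erase a) = R.card * Φ R) (k : ℕ) :
    ∀ R : Finset ℕ, n0 + k ≤ R.card →
      ∑ A ∈ R.powersetCard k, Φ (R \ A) = (R.card.choose k : ℝ) * Φ R := by
  induction k with
  | zero => intro R _; simp
  | succ k ih =>
    intro R hR
    have h1 := sum_remove R k Φ
    have hc : ∀ a ∈ R, (R.erase a).card = R.card - 1 := fun a ha => Finset.card_erase_of_mem ha
    have h2 : ∑ a ∈ R, ∑ A ∈ (R.erase a).powersetCard k, Φ (R.erase a \ A)
        = ∑ a ∈ R, ((R.card - 1).choose k : ℝ) * Φ (R.erase a) := by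
      apply Finset.sum_congr rfl
      intro a ha
      have := ih (R.erase a) (by rw [hc a ha]; omega)
      rwa [hc a ha] at this
    rw [← Finset.mul_sum, h R (by omega)] at h2
    have h4 : (R.card : ℝ) * ((R.card - 1).choose k : ℝ) = (k + 1) * (R.card.choose (k+1) : ℝ) := by
      obtain ⟨n, hn⟩ : ∃ n, R.card = n + 1 := ⟨R.card - 1, by omega⟩
      rw [hn]
      have := Nat.add_one_mul_choose_eq n k
      simp only [Nat.add_sub_cancel]
      rw [mul_comm ((k:ℝ)+1)]
      exact_mod_cast this
    have hk : (0:ℝ) < k + 1 := by positivity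
    apply mul_left_cancel₀ hk.ne'
    rw [h1, h2, ← mul_assoc, ← mul_assoc, ← h4]; ring

lemma dens_mem (g : Finset ℕ → ℝ) (hg : ∀ B, 0 ≤ g B ∧ g B ≤ 1) (l : ℕ) (R : Finset ℕ) :
    0 ≤ dens g l R ∧ dens g l R ≤ 1 := by
  unfold dens
  refine ⟨div_nonneg (Finset.sum_nonneg fun B _ => (hg B).1) (by positivity), ?_⟩
  apply div_le_one_of_le₀ _ (by positivity)
  calc _ ≤ ∑ B ∈ R.powersetCard l, (1:ℝ) := Finset.sum_le_sum fun B _ => (hg B).2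
    _ = _ := by simp

lemma choose_rel (n l : ℕ) (h : l ≤ n + 1) :
    ((n + 1).choose l : ℝ) * ((n : ℝ) + 1 - l) = (n.choose l : ℝ) * (n + 1) := by
  have := Nat.choose_mul_succ_eq n l
  have h2 : ((n + 1 - l : ℕ) : ℝ) = (n : ℝ) + 1 - l := by push_cast [Nat.cast_sub h]; ring
  rw [← h2]
  exact_mod_cast this.symm

lemma dens_mul (g : Finset ℕ → ℝ) (l : ℕ) (R : Finset ℕ) (h : l ≤ R.card) :
    (R.card.choose l : ℝ) * dens g l R = ∑ B ∈ R.powersetCard l, g B := by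
  unfold dens
  have : (R.card.choose l : ℝ) ≠ 0 := by
    exact_mod_cast (Nat.choose_pos h).ne'
  field_simp

lemma dens_erase_sum (g : Finset ℕ → ℝ) (l : ℕ) (R : Finset ℕ) (h : l < R.card) :
    ∑ a ∈ R, dens g l (R.erase a) = R.card * dens g l R := by
  obtain ⟨n, hn⟩ : ∃ n, R.card = n + 1 := ⟨R.card - 1, by omega⟩
  have hc : ∀ a ∈ R, (R.erase a).card = n := fun a ha => by
    rw [Finset.card_erase_of_mem ha]; omega
  have hpos : (0:ℝ) < (n.choose l : ℝ) := by exact_mod_cast Nat.choose_pos (by omega)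
  apply mul_left_cancel₀ hpos.ne'
  rw [Finset.mul_sum]
  have h1 : ∑ a ∈ R, (n.choose l : ℝ) * dens g l (R.erase a)
      = ∑ a ∈ R, ∑ B ∈ (R.erase a).powersetCard l, g B := by
    apply Finset.sum_congr rfl
    intro a ha
    rw [← dens_mul _ _ _ (by rw [hc a ha]; omega), hc a ha]
  rw [h1, sum_erase_comm R l (fun _ B => g B)]
  have h2 : ∑ B ∈ R.powersetCard l, ∑ a ∈ R \ B, g B
      = ∑ B ∈ R.powersetCard l, ((n:ℝ) + 1 - l) * g B := by
    apply Finset.sum_congr rfl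
    intro B hB
    rw [Finset.mem_powersetCard] at hB
    rw [Finset.sum_const, Finset.card_sdiff_of_subset hB.1, hB.2, hn, nsmul_eq_mul,
      Nat.cast_sub (by omega)]
    push_cast; ring
  rw [h2, ← Finset.mul_sum, ← dens_mul _ _ _ h.le, hn]
  have := choose_rel n l (by omega)
  push_cast
  linear_combination (dens g l R) * this

lemma dens_erase_abs (g : Finset ℕ → ℝ) (hg : ∀ B, 0 ≤ g B ∧ g B ≤ 1) (l : ℕ) (R : Finset ℕ)
    (h : l < R.card) (a : ℕ) (ha : a ∈ R) :
    |dens g l (R.erase a) - dens g l R| * ((R.card : ℝ) - l) ≤ l := by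
  obtain ⟨n, hn⟩ : ∃ n, R.card = n + 1 := ⟨R.card - 1, by omega⟩
  have hc : (R.erase a).card = n := by
    rw [Finset.card_erase_of_mem ha]; omega
  have hpos : (0:ℝ) < (n.choose l : ℝ) := by exact_mod_cast Nat.choose_pos (by omega)
  have hrel := choose_rel n l (by omega)
  have e1 := dens_mul g l R h.le
  have e2 := dens_mul g l (R.erase a) (by omega)
  rw [hn] at e1
  rw [hc] at e2
  have hsub : (R.erase a).powersetCard l ⊆ R.powersetCard l :=
    Finset.powersetCard_mono (Finset.erase_subset _ _)
  have h1 : ∑ B ∈ (R.erase a).powersetCard l, g B ≤ ∑ B ∈ R.powersetCard l, g B :=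
    Finset.sum_le_sum_of_subset_of_nonneg hsub fun B _ _ => (hg B).1
  have h2 : ∑ B ∈ (R.erase a).powersetCard l, (1 - g B) ≤ ∑ B ∈ R.powersetCard l, (1 - g B) :=
    Finset.sum_le_sum_of_subset_of_nonneg hsub fun B _ _ => by linarith [(hg B).2]
  simp only [Finset.sum_sub_distrib, Finset.sum_const, Finset.card_powersetCard, hn, hc,
    nsmul_eq_mul, mul_one] at h2
  rw [← e1, ← e2] at h1 h2
  have hd := dens_mem g hg l R
  set d := dens g l R
  set d' := dens g l (R.erase a)
  set N : ℝ := ((n+1).choose l : ℝ)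
  set c : ℝ := (n.choose l : ℝ)
  have hln : (l:ℝ) ≤ n := by exact_mod_cast (by omega : l ≤ n)
  have hp : (0:ℝ) < n + 1 - l := by linarith
  have hl0 : (0:ℝ) ≤ l := by positivity
  rw [hn]; push_cast
  -- scaled by c
  have u1 : c * ((d' - d) * (n + 1 - l)) ≤ c * l := by
    have : c * d' * (n + 1 - l) ≤ N * d * (n+1-l) := by gcongr
    have h3 : N * d * (n+1-l) = c * (n+1) * d := by linear_combination d * hrel
    have h4 : c * l * d ≤ c * l * 1 := by gcongr; exact hd.2
    nlinarith
  have u2 : -(c * l) ≤ c * ((d' - d) * (n + 1 - l)) := by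
    have : (c - c * d') * (n + 1 - l) ≤ (N - N * d) * (n+1-l) := by gcongr
    have h3 : (N - N * d) * (n+1-l) = c * (n+1) * (1 - d) := by linear_combination (1-d) * hrel
    have h4 : c * l * (1-d) ≤ c * l * 1 := by gcongr; linarith [hd.1]
    nlinarith
  rw [← abs_of_pos hp, ← abs_mul, abs_le]
  constructor
  · apply le_of_mul_le_mul_left _ hpos; linarith
  · apply le_of_mul_le_mul_left _ hpos; linarith

lemma dens_var (g : Finset ℕ → ℝ) (hg : ∀ B, 0 ≤ g B ∧ g B ≤ 1) (l : ℕ) (R : Finset ℕ)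
    (h : l < R.card) (h2 : 2 ≤ R.card) :
    (∑ a ∈ R, (dens g l (R.erase a) - dens g l R) ^ 2) * (4 * ((R.card : ℝ) - l) * (R.card - 1))
      ≤ R.card * l := by
  obtain ⟨q, hn⟩ : ∃ q, R.card = q + 2 := ⟨R.card - 2, by omega⟩
  have hc : ∀ a ∈ R, (R.erase a).card = q + 1 := fun a ha => by
    rw [Finset.card_erase_of_mem ha]; omega
  set x : ℕ → ℝ := fun a => dens g l (R.erase a) - dens g l R with hx
  change (∑ a ∈ R, (x a) ^ 2) * _ ≤ _
  have hx0 : ∑ a ∈ R, x a = 0 := by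
    simp only [hx, Finset.sum_sub_distrib, dens_erase_sum g l R h, Finset.sum_const, nsmul_eq_mul]
    ring
  set N : ℝ := ((q+2).choose l : ℝ) with hN
  set c : ℝ := ((q+1).choose l : ℝ) with hcdef
  set c2 : ℝ := (q.choose l : ℝ) with hc2
  have r1 : N * ((q:ℝ) + 2 - l) = c * (q + 2) := by
    have := choose_rel (q+1) l (by omega)
    push_cast at this
    linear_combination this
  have r2 : c * ((q:ℝ) + 1 - l) = c2 * (q + 1) := choose_rel q l (by omega)
  have hcpos : 0 < c := by rw [hcdef]; exact_mod_cast Nat.choose_pos (by omega)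
  set y : Finset ℕ → ℝ := fun B => ∑ a ∈ R \ B, x a with hy
  set Q := ∑ a ∈ R, (x a) ^ 2 with hQ
  -- sum of y
  have y0 : ∑ B ∈ R.powersetCard l, y B = 0 := by
    simp only [hy]
    rw [← sum_erase_comm R l (fun a _ => x a)]
    have : ∀ a ∈ R, ∑ B ∈ (R.erase a).powersetCard l, x a = c * x a := by
      intro a ha
      rw [Finset.sum_const, Finset.card_powersetCard, hc a ha, nsmul_eq_mul]
    rw [Finset.sum_congr rfl this, ← Finset.mul_sum, hx0, mul_zero]
  have yg : ∑ B ∈ R.powersetCard l, (g B - 1/2) * y B = c * Q := by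
    have e1 : ∑ B ∈ R.powersetCard l, (g B - 1/2) * y B = ∑ B ∈ R.powersetCard l, g B * y B := by
      simp only [sub_mul, Finset.sum_sub_distrib, ← Finset.mul_sum, y0]; ring
    rw [e1]
    simp only [hy, Finset.mul_sum]
    rw [← sum_erase_comm R l (fun a B => g B * x a)]
    have : ∀ a ∈ R, ∑ B ∈ (R.erase a).powersetCard l, g B * x a
        = c * (x a)^2 + c * dens g l R * x a := by
      intro a ha
      rw [← Finset.sum_mul, ← dens_mul _ _ _ (by rw [hc a ha]; omega), hc a ha]
      simp only [hx]; ring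
    rw [Finset.sum_congr rfl this, Finset.sum_add_distrib, ← Finset.mul_sum, ← Finset.mul_sum,
      hx0, mul_zero, add_zero]
  have yy : ∑ B ∈ R.powersetCard l, y B ^ 2 = (c - c2) * Q := by
    have e1 : ∀ B ∈ R.powersetCard l, y B ^ 2 = ∑ a ∈ R \ B, x a * y B := by
      intro B _
      rw [← Finset.sum_mul, sq]
    rw [Finset.sum_congr rfl e1, ← sum_erase_comm R l (fun a B => x a * y B), hQ, Finset.mul_sum]
    apply Finset.sum_congr rfl
    intro a ha
    rw [← Finset.mul_sum]
    have e2 : ∀ B ∈ (R.erase a).powersetCard l, y B = x a + ∑ b ∈ R.erase a \ B, x b := by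
      intro B hB
      rw [Finset.mem_powersetCard, Finset.subset_erase] at hB
      have : R \ B = insert a (R.erase a \ B) := by
        ext z; simp only [Finset.mem_sdiff, Finset.mem_insert, Finset.mem_erase]
        grind
      simp only [hy]
      rw [this, Finset.sum_insert (by simp)]
    rw [Finset.sum_congr rfl e2, Finset.sum_add_distrib, Finset.sum_const,
      Finset.card_powersetCard, hc a ha, nsmul_eq_mul,
      ← sum_erase_comm (R.erase a) l (fun b _ => x b)]
    have e3 : ∀ b ∈ R.erase a, ∑ B ∈ ((R.erase a).erase b).powersetCard l, x b = c2 * x b := by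
      intro b hb
      rw [Finset.sum_const, Finset.card_powersetCard, Finset.card_erase_of_mem hb, hc a ha,
        nsmul_eq_mul]
      rfl
    rw [Finset.sum_congr rfl e3, ← Finset.mul_sum]
    have e4 : ∑ b ∈ R.erase a, x b = - x a := by
      have := Finset.add_sum_erase R x ha
      linarith
    rw [e4]; ring
  have gg : ∑ B ∈ R.powersetCard l, (g B - 1/2) ^ 2 ≤ N / 4 := by
    calc _ ≤ ∑ B ∈ R.powersetCard l, (1/4 : ℝ) := by
          apply Finset.sum_le_sum
          intro B _
          nlinarith [(hg B).1, (hg B).2]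
      _ = _ := by
          rw [Finset.sum_const, Finset.card_powersetCard, hn, nsmul_eq_mul]; ring
  have cs := Finset.sum_mul_sq_le_sq_mul_sq (R.powersetCard l) (fun B => g B - 1/2) y
  rw [yg, yy] at cs
  have hQ0 : 0 ≤ Q := Finset.sum_nonneg fun a _ => sq_nonneg _
  have hlq : (l:ℝ) ≤ q + 1 := by exact_mod_cast (by omega : l ≤ q + 1)
  have hcc : (c - c2) * (q + 1) = c * l := by linear_combination r2
  have hcc0 : 0 ≤ c - c2 := by
    have : 0 ≤ c * l := by positivity
    rw [← hcc] at this
    exact nonneg_of_mul_nonneg_left this (by positivity)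
  have cs2 : (c * Q) ^ 2 ≤ N / 4 * ((c - c2) * Q) :=
    cs.trans (mul_le_mul_of_nonneg_right gg (mul_nonneg hcc0 hQ0))
  rw [hn]; push_cast
  have hgoal : Q * (4 * ((q:ℝ) + 2 - l) * (q + 1)) ≤ (q + 2) * l := by
    rcases hQ0.eq_or_lt with hq | hq
    · rw [← hq, zero_mul]; positivity
    · have k1 : c ^ 2 * Q * 4 ≤ N * (c - c2) := by
        apply le_of_mul_le_mul_right _ hq
        nlinarith
      have hp : (0:ℝ) ≤ (q:ℝ) + 2 - l := by linarith
      have k2 : c ^ 2 * Q * 4 * (((q:ℝ) + 2 - l) * (q + 1)) ≤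
          N * (c - c2) * (((q:ℝ) + 2 - l) * (q + 1)) := by gcongr
      have k3 : N * (c - c2) * (((q:ℝ) + 2 - l) * (q + 1)) = c^2 * ((q + 2) * l) := by
        calc _ = (N * ((q:ℝ) + 2 - l)) * ((c - c2) * (q+1)) := by ring
          _ = _ := by rw [r1, hcc]; ring
      rw [k3] at k2
      apply le_of_mul_le_mul_left _ (pow_pos hcpos 2)
      linarith
  calc _ = Q * (4 * ((q:ℝ) + 2 - l) * (q + 1)) := by ring
    _ ≤ _ := hgoal

/-- one element step -/
lemma step (g : Finset ℕ → ℝ) (hg : ∀ B, 0 ≤ g B ∧ g B ≤ 1) (l t : ℕ) (hl : 0 < l) (ht : 2 ≤ t)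
    (lam : ℝ) (hlam : |lam| ≤ 1/4) (R : Finset ℕ) (h : t * l < R.card) :
    ∑ a ∈ R, Real.exp (2 * lam * t * dens g l (R.erase a)) ≤
      R.card * Real.exp (2 * lam * t * dens g l R + 2 * lam ^ 2 / l) := by
  have hlR : 2 * l < R.card := lt_of_le_of_lt (Nat.mul_le_mul_right l ht) h
  set n : ℝ := (R.card : ℝ) with hn
  have hl' : (1:ℝ) ≤ l := by exact_mod_cast hl
  have ht' : (2:ℝ) ≤ t := by exact_mod_cast ht
  have hnt : (t:ℝ) * l + 1 ≤ n := by rw [hn]; exact_mod_cast h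
  have h0 := dens_erase_sum g l R (by omega)
  have hv := dens_var g hg l R (by omega) (by omega)
  rw [← hn] at h0 hv
  have hnl : (t - 1 : ℝ) * l + 1 ≤ n - l := by linarith
  have hpos : 0 < n - l := by nlinarith
  have key := sum_exp_le R (fun a => 2 * lam * t * (dens g l (R.erase a) - dens g l R))
    (2 * lam ^ 2 / l) (by
      rw [← Finset.mul_sum, Finset.sum_sub_distrib, h0, Finset.sum_const, nsmul_eq_mul, ← hn]
      ring) (by
      intro a ha
      have hb := dens_erase_abs g hg l R (by omega) a ha
      rw [← hn] at hb
      rw [abs_mul]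
      set X := |dens g l (R.erase a) - dens g l R|
      have hX : 0 ≤ X := abs_nonneg _
      have : t * X ≤ 2 := by
        apply le_of_mul_le_mul_right _ hpos
        have : t * (X * (n - l)) ≤ t * l := by gcongr
        nlinarith
      have h4 : |2 * lam * t| = 2 * |lam| * t := by
        rw [abs_mul, abs_mul]; simp
      rw [h4]
      have : 2 * |lam| * t * X = 2 * |lam| * (t * X) := by ring
      rw [this]
      have : 0 ≤ t * X := by positivity
      nlinarith [abs_nonneg lam]) (by
      simp only [mul_pow]
      rw [← Finset.mul_sum, ← hn]
      set Q := ∑ a ∈ R, (dens g l (R.erase a) - dens g l R) ^ 2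
      have hQ0 : 0 ≤ Q := Finset.sum_nonneg fun a _ => sq_nonneg _
      have hlow : 2 * (t:ℝ)^2 * l^2 ≤ 4 * (n - l) * (n - 1) := by
        have a1 : (t:ℝ) * l ≤ 2 * (n - l) := by nlinarith
        have a2 : (t:ℝ) * l ≤ n - 1 := by linarith
        have : (t * l : ℝ) * (t * l) ≤ (2 * (n - l)) * (n - 1) :=
          mul_le_mul a1 a2 (by positivity) (by linarith)
        nlinarith
      have h5 : Q * (2 * (t:ℝ)^2 * l^2) ≤ n * l := le_trans (by gcongr) hv
      have h6 : 2 * (t:ℝ)^2 * Q ≤ n / l := by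
        rw [le_div_iff₀ (by linarith)]
        apply le_of_mul_le_mul_right _ (by linarith : (0:ℝ) < l)
        linarith
      calc _ = 2 * lam ^ 2 * (2 * (t:ℝ)^2 * Q) := by ring
        _ ≤ 2 * lam ^ 2 * (n / l) := by gcongr
        _ = _ := by ring)
  have hsplit : ∀ a, Real.exp (2 * lam * t * dens g l (R.erase a)) =
      Real.exp (2 * lam * t * dens g l R) *
        Real.exp (2 * lam * t * (dens g l (R.erase a) - dens g l R)) := by
    intro a; rw [← Real.exp_add]; congr 1; ring
  simp_rw [hsplit]
  rw [← Finset.mul_sum, Real.exp_add]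
  have := mul_le_mul_of_nonneg_left key (Real.exp_pos (2 * lam * t * dens g l R)).le
  linarith

lemma block (g : Finset ℕ → ℝ) (hg : ∀ B, 0 ≤ g B ∧ g B ≤ 1) (l t : ℕ) (hl : 0 < l)
    (lam : ℝ) (hlam : |lam| ≤ 1/4) (R : Finset ℕ) (h : (t + 1) * l ≤ R.card) :
    ∑ A ∈ R.powersetCard l, Real.exp (lam * g A + lam * t * dens g l (R \ A)) ≤
      (R.card.choose l : ℝ) * Real.exp (lam * (t + 1) * dens g l R + 2 * lam ^ 2) := by
  have hlR : l ≤ R.card := le_trans (by nlinarith) h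
  have hcard : (R.powersetCard l).card = R.card.choose l := Finset.card_powersetCard _ _
  have hcpos : 0 < (R.powersetCard l).card := by rw [hcard]; exact Nat.choose_pos hlR
  have hgs : ∑ A ∈ R.powersetCard l, g A = (R.powersetCard l).card * dens g l R := by
    rw [hcard, dens_mul _ _ _ hlR]
  have hl2 : 0 ≤ lam ^ 2 := sq_nonneg _
  rcases Nat.lt_or_ge t 2 with ht | ht
  · have hY : ∃ Y : Finset ℕ → ℝ, (∀ A ∈ R.powersetCard l, 0 ≤ Y A ∧ Y A ≤ 2) ∧
        (∀ A, Y A = g A + t * dens g l (R \ A)) ∧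
        ∑ A ∈ R.powersetCard l, Y A = (R.powersetCard l).card * ((t + 1) * dens g l R) := by
      refine ⟨fun A => g A + t * dens g l (R \ A), ?_, fun _ => rfl, ?_⟩
      · intro A _
        have h1 := dens_mem g hg l (R \ A)
        have h2 := hg A
        have h3 : (0:ℝ) ≤ t := by positivity
        have h4 : (t:ℝ) ≤ 1 := by exact_mod_cast (by omega : t ≤ 1)
        constructor
        · have := mul_nonneg h3 h1.1
          linarith
        · nlinarith
      · rw [Finset.sum_add_distrib, hgs, ← Finset.mul_sum]
        interval_cases t
        · simp
        · have := remove_eq (dens g l) l (fun R hR => dens_erase_sum g l R hR) l R (by omega)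
          rw [this, hcard]; push_cast; ring
    obtain ⟨Y, hY1, hY2, hY3⟩ := hY
    have := sum_exp_le' _ Y lam 2 _ hY3 hY1 hcpos (by linarith)
    have hsplit : ∀ A, Real.exp (lam * g A + lam * t * dens g l (R \ A)) =
        Real.exp (lam * (t + 1) * dens g l R) *
          Real.exp (lam * (Y A - (t + 1) * dens g l R)) := by
      intro A; rw [← Real.exp_add, hY2]; congr 1; ring
    simp_rw [hsplit]
    rw [← Finset.mul_sum, Real.exp_add, ← hcard]
    have h5 : Real.exp (lam ^ 2 * 2 ^ 2 / 4) ≤ Real.exp (2 * lam ^ 2) := by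
      apply Real.exp_le_exp.2; linarith
    calc _ ≤ Real.exp (lam * (t + 1) * dens g l R) *
        ((R.powersetCard l).card * Real.exp (2 * lam ^ 2)) := by
          gcongr
          exact this.trans (by gcongr)
      _ = _ := by ring
  · have hX := sum_exp_le' (R.powersetCard l) g (2 * lam) 1 _ hgs (fun A _ => hg A) hcpos (by
      rw [abs_mul]; simp; linarith)
    have hZ := remove_le (fun S => 2 * lam * t * dens g l S) (2 * lam ^ 2 / l) (t * l)
      (fun R hR => step g hg l t hl ht lam hlam R hR) l R (by linarith)
    have hlne : (l:ℝ) ≠ 0 := by exact_mod_cast hl.ne'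
    have e1 : (l:ℝ) * (2 * lam ^ 2 / l) = 2 * lam ^ 2 := by field_simp
    rw [e1] at hZ
    set d := dens g l R
    have hZ' : ∑ A ∈ R.powersetCard l, Real.exp (2 * (lam * t * (dens g l (R \ A) - d))) ≤
        (R.powersetCard l).card * Real.exp (2 * lam ^ 2) := by
      have hs : ∀ A, Real.exp (2 * (lam * t * (dens g l (R \ A) - d))) =
          Real.exp (-(2 * lam * t * d)) * Real.exp (2 * lam * t * dens g l (R \ A)) := by
        intro A; rw [← Real.exp_add]; congr 1; ring
      simp_rw [hs]
      rw [← Finset.mul_sum]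
      calc _ ≤ Real.exp (-(2 * lam * t * d)) *
            ((R.card.choose l : ℝ) * Real.exp (2 * lam * t * d + 2 * lam ^ 2)) := by gcongr
        _ = (R.card.choose l : ℝ) * (Real.exp (-(2 * lam * t * d)) *
            Real.exp (2 * lam * t * d + 2 * lam ^ 2)) := by ring
        _ = _ := by rw [← Real.exp_add, hcard]; congr 2; ring
    have hX' : ∑ A ∈ R.powersetCard l, Real.exp (2 * (lam * (g A - d))) ≤
        (R.powersetCard l).card * Real.exp (2 * lam ^ 2) := by
      have h5 : Real.exp ((2 * lam) ^ 2 * 1 ^ 2 / 4) ≤ Real.exp (2 * lam ^ 2) := by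
        apply Real.exp_le_exp.2; nlinarith
      simp_rw [← mul_assoc]
      exact hX.trans (by gcongr)
    have hpt : ∀ A, Real.exp (lam * g A + lam * t * dens g l (R \ A)) ≤
        Real.exp (lam * (t + 1) * d) * ((Real.exp (2 * (lam * (g A - d))) +
          Real.exp (2 * (lam * t * (dens g l (R \ A) - d)))) / 2) := by
      intro A
      have : Real.exp (lam * g A + lam * t * dens g l (R \ A)) =
          Real.exp (lam * (t + 1) * d) * (Real.exp (lam * (g A - d)) *
          Real.exp (lam * t * (dens g l (R \ A) - d))) := by
        rw [← Real.exp_add, ← Real.exp_add]; congr 1; ring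
      rw [this]
      gcongr
      set u := lam * (g A - d)
      set v := lam * t * (dens g l (R \ A) - d)
      have a1 : Real.exp (2 * u) = Real.exp u ^ 2 := by
        rw [← Real.exp_nat_mul]; norm_num
      have a2 : Real.exp (2 * v) = Real.exp v ^ 2 := by
        rw [← Real.exp_nat_mul]; norm_num
      rw [a1, a2]
      nlinarith [sq_nonneg (Real.exp u - Real.exp v)]
    refine (Finset.sum_le_sum fun A _ => hpt A).trans ?_
    rw [← Finset.mul_sum, ← Finset.sum_div, Finset.sum_add_distrib, Real.exp_add, ← hcard]
    calc _ ≤ Real.exp (lam * (t + 1) * d) * ((((R.powersetCard l).card * Real.exp (2 * lam ^ 2)) +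
          ((R.powersetCard l).card * Real.exp (2 * lam ^ 2))) / 2) := by gcongr
      _ = _ := by ring

noncomputable def tup (R : Finset ℕ) (l t : ℕ) : Finset (Fin t → Finset ℕ) :=
  (Fintype.piFinset fun _ : Fin t => R.powersetCard l).filter
    fun B => ∀ i j : Fin t, i ≠ j → Disjoint (B i) (B j)

lemma mem_tup {R : Finset ℕ} {l t : ℕ} {B : Fin t → Finset ℕ} :
    B ∈ tup R l t ↔ (∀ i, B i ⊆ R ∧ (B i).card = l) ∧
      ∀ i j : Fin t, i ≠ j → Disjoint (B i) (B j) := by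
  simp [tup, Finset.mem_powersetCard]

lemma cons_mem_tup {R : Finset ℕ} {l t : ℕ} {A : Finset ℕ} {B : Fin t → Finset ℕ} :
    (Fin.cons A B : Fin (t+1) → Finset ℕ) ∈ tup R l (t + 1) ↔
      A ∈ R.powersetCard l ∧ B ∈ tup (R \ A) l t := by
  simp only [mem_tup, Fin.forall_fin_succ, Fin.cons_zero, Fin.cons_succ, Finset.mem_powersetCard,
    Finset.subset_sdiff]
  constructor
  · rintro ⟨⟨h1, h2⟩, ⟨h3, h4⟩, h5⟩
    refine ⟨h1, fun i => ⟨⟨(h2 i).1, ?_⟩, (h2 i).2⟩, ?_⟩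
    · exact (h5 i).1 (Fin.succ_ne_zero i)
    · intro i j hij
      exact (h5 i).2 j (fun h => hij (Fin.succ_injective _ h))
  · rintro ⟨h1, h2, h3⟩
    refine ⟨⟨h1, fun i => ⟨(h2 i).1.1, (h2 i).2⟩⟩, ⟨fun h => absurd rfl h, fun i _ => (h2 i).1.2.symm⟩, 
      fun i => ⟨fun _ => (h2 i).1.2, fun j hij => h3 i j fun h => hij (by rw [h])⟩⟩

lemma sum_tup_succ (R : Finset ℕ) (l t : ℕ) (F : (Fin (t+1) → Finset ℕ) → ℝ) :
    ∑ B ∈ tup R l (t+1), F B =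
      ∑ A ∈ R.powersetCard l, ∑ B ∈ tup (R \ A) l t, F (Fin.cons A B) := by
  rw [Finset.sum_sigma']
  refine Finset.sum_bij' (fun B _ => ⟨B 0, Fin.tail B⟩) (fun p _ => Fin.cons p.1 p.2) ?_ ?_ ?_ ?_ ?_
  · intro B hB
    rw [Finset.mem_sigma, ← cons_mem_tup]
    simpa using hB
  · rintro ⟨A, B⟩ h
    rw [Finset.mem_sigma] at h
    exact cons_mem_tup.2 h
  · intro B hB; simp
  · rintro ⟨A, B⟩ h; simp
  · intro B hB; simp

noncomputable def cnt (l : ℕ) : ℕ → ℕ → ℝ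
  | 0, _ => 1
  | t + 1, n => (n.choose l : ℝ) * cnt l t (n - l)

lemma cnt_nonneg (l t n : ℕ) : 0 ≤ cnt l t n := by
  induction t generalizing n with
  | zero => simp [cnt]
  | succ t ih => exact mul_nonneg (by positivity) (ih _)

lemma card_tup (l t : ℕ) : ∀ R : Finset ℕ, ((tup R l t).card : ℝ) = cnt l t R.card := by
  induction t with
  | zero =>
    intro R
    have : tup R l 0 = Finset.univ := by
      ext B; simp only [mem_tup, Finset.mem_univ, iff_true]; exact ⟨fun i => i.elim0, fun i => i.elim0⟩
    simp [this, cnt]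
  | succ t ih =>
    intro R
    have := sum_tup_succ R l t (fun _ => 1)
    simp only [Finset.sum_const, nsmul_eq_mul, mul_one] at this
    rw [this, cnt]
    have : ∀ A ∈ R.powersetCard l, ((tup (R \ A) l t).card : ℝ) = cnt l t (R.card - l) := by
      intro A hA
      rw [Finset.mem_powersetCard] at hA
      rw [ih, Finset.card_sdiff_of_subset hA.1, hA.2]
    rw [Finset.sum_congr rfl this]
    simp

lemma mgf (g : Finset ℕ → ℝ) (hg : ∀ B, 0 ≤ g B ∧ g B ≤ 1) (l : ℕ) (hl : 0 < l)
    (lam : ℝ) (hlam : |lam| ≤ 1/4) (t : ℕ) : ∀ R : Finset ℕ, t * l ≤ R.card →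
    ∑ B ∈ tup R l t, Real.exp (lam * ∑ i, g (B i)) ≤
      cnt l t R.card * Real.exp (lam * t * dens g l R + 2 * lam ^ 2 * t) := by
  induction t with
  | zero =>
    intro R _
    have : tup R l 0 = Finset.univ := by
      ext B; simp only [mem_tup, Finset.mem_univ, iff_true]; exact ⟨fun i => i.elim0, fun i => i.elim0⟩
    simp [this, cnt]
  | succ t ih =>
    intro R hR
    rw [sum_tup_succ]
    have h1 : ∀ A ∈ R.powersetCard l,
        ∑ B ∈ tup (R \ A) l t, Real.exp (lam * ∑ i, g ((Fin.cons A B : Fin (t+1) → Finset ℕ) i))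
        ≤ cnt l t (R.card - l) * Real.exp (2 * lam ^ 2 * t) *
          Real.exp (lam * g A + lam * t * dens g l (R \ A)) := by
      intro A hA
      rw [Finset.mem_powersetCard] at hA
      have hc : (R \ A).card = R.card - l := by rw [Finset.card_sdiff_of_subset hA.1, hA.2]
      have := ih (R \ A) (by rw [hc]; apply Nat.le_sub_of_add_le; linarith)
      rw [hc] at this
      simp only [Fin.sum_univ_succ, Fin.cons_zero, Fin.cons_succ, mul_add, Real.exp_add]
      rw [← Finset.mul_sum]
      rw [Real.exp_add] at this
      calc _ ≤ Real.exp (lam * g A) * _ := mul_le_mul_of_nonneg_left this (Real.exp_pos _).le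
        _ = _ := by ring
    refine (Finset.sum_le_sum h1).trans ?_
    rw [← Finset.mul_sum]
    have h2 := block g hg l t hl lam hlam R hR
    refine (mul_le_mul_of_nonneg_left h2
      (mul_nonneg (cnt_nonneg l t (R.card - l)) (Real.exp_pos _).le)).trans (le_of_eq ?_)
    rw [cnt]
    have : lam * ((t + 1 : ℕ) : ℝ) * dens g l R + 2 * lam ^ 2 * ((t + 1 : ℕ) : ℝ)
        = 2 * lam ^ 2 * t + (lam * (t + 1) * dens g l R + 2 * lam ^ 2) := by push_cast; ring
    rw [this, Real.exp_add (2 * lam ^ 2 * t)]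
    ring

/-- one-sided tail -/
lemma tail (g : Finset ℕ → ℝ) (hg : ∀ B, 0 ≤ g B ∧ g B ≤ 1) (l : ℕ) (hl : 0 < l)
    (lam : ℝ) (hlam : |lam| ≤ 1/4) (t : ℕ) (R : Finset ℕ) (hR : t * l ≤ R.card) (s : ℝ) :
    (((tup R l t).filter fun B => s ≤ lam * ((∑ i, g (B i)) - dens g l R * t)).card : ℝ) ≤
      (tup R l t).card * Real.exp (2 * lam ^ 2 * t - s) := by
  have h1 := mgf g hg l hl lam hlam t R hR
  rw [← card_tup] at h1
  set d := dens g l R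
  have h2 : (((tup R l t).filter fun B => s ≤ lam * ((∑ i, g (B i)) - d * t)).card : ℝ) *
      Real.exp (s + lam * t * d) ≤ ∑ B ∈ tup R l t, Real.exp (lam * ∑ i, g (B i)) := by
    rw [← nsmul_eq_mul, ← Finset.sum_const]
    refine (Finset.sum_le_sum ?_).trans (Finset.sum_le_sum_of_subset_of_nonneg
      (Finset.filter_subset _ _) fun _ _ _ => (Real.exp_pos _).le)
    intro B hB
    rw [Finset.mem_filter] at hB
    apply Real.exp_le_exp.2
    linarith [hB.2]
  have h3 := h2.trans h1
  apply le_of_mul_le_mul_right _ (Real.exp_pos (s + lam * t * d))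
  refine h3.trans (le_of_eq ?_)
  rw [mul_assoc (((tup R l t).card : ℝ)), ← Real.exp_add]
  congr 2; ring

end IA

theorem intersection_azuma (m l t : ℕ) (hm : 0 < m) (hl : 0 < l) (ht : 0 < t)
    (hml : t * l ≤ m) (G : Finset (Finset ℕ)) (hG : G ⊆ (Finset.range m).powersetCard l)
    (α : ℝ) (hα : α = (G.card : ℝ) / (m.choose l : ℝ)) :
    ∀ β : ℝ, 0 < β →
      (((tupleSpace m l t).filter
            fun B => 2 * β * Real.sqrt t ≤ |(hits G B : ℝ) - α * t|).card : ℝ) /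
          ((tupleSpace m l t).card : ℝ) ≤
        2 * Real.exp (-β ^ 2 / 2) := by
  intro β hβ
  apply div_le_of_le_mul₀ (by positivity) (by positivity)
  set g : Finset ℕ → ℝ := fun B => if B ∈ G then 1 else 0 with hgdef
  have hg : ∀ B, 0 ≤ g B ∧ g B ≤ 1 := by
    intro B; simp only [hgdef]; split_ifs <;> norm_num
  have hd : α = IA.dens g l (Finset.range m) := by
    rw [hα, IA.dens, Finset.card_range]
    congr 1
    simp only [hgdef]
    rw [Finset.sum_boole, Finset.filter_mem_eq_inter, Finset.inter_eq_right.2 hG]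
  have hhits : ∀ B : Fin t → Finset ℕ, (hits G B : ℝ) = ∑ i, g (B i) := by
    intro B
    simp only [hgdef, hits]
    rw [Finset.sum_boole]
  have hts : tupleSpace m l t = IA.tup (Finset.range m) l t := rfl
  have ht' : (0:ℝ) < t := by exact_mod_cast ht
  set r := Real.sqrt t with hr
  have hr0 : 0 < r := Real.sqrt_pos.2 ht'
  have hrr : r ^ 2 = t := Real.sq_sqrt ht'.le
  rcases le_or_gt (2 * β) r with hb | hb
  · set lam := β / (2 * r) with hlam
    have hlam0 : 0 < lam := by positivity
    have hlam1 : lam ≤ 1/4 := by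
      rw [hlam, div_le_iff₀ (by positivity)]; linarith
    have hR : t * l ≤ (Finset.range m).card := by simpa using hml
    have t1 := IA.tail g hg l hl lam (by rw [abs_of_pos hlam0]; exact hlam1) t _ hR (β ^ 2)
    have t2 := IA.tail g hg l hl (-lam) (by rw [abs_neg, abs_of_pos hlam0]; exact hlam1) t _ hR (β ^ 2)
    have he : 2 * lam ^ 2 * t - β ^ 2 = -β ^ 2 / 2 := by
      rw [hlam, ← hrr]; field_simp; ring
    rw [neg_sq] at t2
    rw [he, ← hd, ← hts] at t1 t2
    have hsub : ((tupleSpace m l t).filter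
            fun B => 2 * β * r ≤ |(hits G B : ℝ) - α * t|) ⊆
        ((tupleSpace m l t).filter fun B => β ^ 2 ≤ lam * ((∑ i, g (B i)) - α * t)) ∪
        ((tupleSpace m l t).filter fun B => β ^ 2 ≤ -lam * ((∑ i, g (B i)) - α * t)) := by
      intro B hB
      rw [Finset.mem_union, Finset.mem_filter, Finset.mem_filter]
      rw [Finset.mem_filter, hhits, le_abs] at hB
      have hmul : lam * (2 * β * r) = β ^ 2 := by rw [hlam]; field_simp
      rcases hB.2 with h | h
      · left
        refine ⟨hB.1, ?_⟩
        rw [← hmul]; gcongr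
      · right
        refine ⟨hB.1, ?_⟩
        rw [← hmul, neg_mul_comm]; gcongr
    have h1 := (Finset.card_le_card hsub).trans (Finset.card_union_le _ _)
    have h2 : (((tupleSpace m l t).filter
            fun B => 2 * β * r ≤ |(hits G B : ℝ) - α * t|).card : ℝ) ≤
        (((tupleSpace m l t).filter fun B => β ^ 2 ≤ lam * ((∑ i, g (B i)) - α * t)).card : ℝ) +
        (((tupleSpace m l t).filter fun B => β ^ 2 ≤ -lam * ((∑ i, g (B i)) - α * t)).card : ℝ) := by
      exact_mod_cast h1
    linarith
  · have : ((tupleSpace m l t).filter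
            fun B => 2 * β * r ≤ |(hits G B : ℝ) - α * t|) = ∅ := by
      rw [Finset.filter_eq_empty_iff]
      intro B _
      rw [not_le]
      have h1 : |(hits G B : ℝ) - α * t| ≤ t := by
        have a1 : (hits G B : ℝ) ≤ t := by
          have : hits G B ≤ t := by
            simpa [hits] using Finset.card_filter_le (Finset.univ : Finset (Fin t)) (fun i => B i ∈ G)
          exact_mod_cast this
        have a2 : (0:ℝ) ≤ hits G B := by positivity
        have a3 := IA.dens_mem g hg l (Finset.range m)
        rw [← hd] at a3
        have a4 : α * t ≤ 1 * t := by gcongr; exact a3.2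
        have a5 : 0 ≤ α * t := mul_nonneg a3.1 ht'.le
        rw [abs_le]; constructor <;> linarith
      nlinarith
    rw [this]; simp; positivity
end

section
/- Suppose m, l, t are positive integers with m ≥ tl. Let G be a family of l-element subsets of [m] and α := |G|/C(m,l). Let B = (B_1,…,B_t) be a uniformly random ordered tuple of t pairwise disjoint l-element subsets of [m], and let η := |{i ∈ [t] : B_i ∈ G}|. Fix a real constant C with 0 < C ≤ 1/2, C ≥ α and C²t ≥ 16. Then Pr[η ≥ 4Ct] ≤ 2·e^{−C²t/2}·Pr[|η − 2Ct| ≤ Ct]. -/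
open Finset

section scal
/-- scalar inequality used in the local lemma -/
lemma sc_exp {a : ℝ} (h0 : 0 ≤ a) (h1 : a ≤ 1) :
    Real.exp a - 1 - a ≤ (1 - a) * Real.log (1 - a) + a := by
  have key : ∀ b ∈ Set.Ico (0:ℝ) 1, Real.exp b - 1 ≤ - Real.log (1 - b) := by
    have hm : MonotoneOn (fun b : ℝ => - Real.log (1 - b) - Real.exp b) (Set.Ico 0 1) := by
      have hd : ∀ b ∈ Set.Ico (0:ℝ) 1, HasDerivAt (fun b : ℝ => - Real.log (1 - b) - Real.exp b)
          (1 / (1 - b) - Real.exp b) b := by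
        intro b hb
        have h := (((hasDerivAt_id b).const_sub 1).log (by have := hb.2; simp only [id]; linarith)).neg.sub
          (Real.hasDerivAt_exp b)
        refine HasDerivAt.congr_deriv (f' := _) h ?_
        simp only [id, neg_div, neg_neg]
      apply monotoneOn_of_deriv_nonneg (convex_Ico 0 1)
      · intro b hb; exact (hd b hb).continuousAt.continuousWithinAt
      · intro b hb; rw [interior_Ico] at hb
        exact (hd b ⟨hb.1.le, hb.2⟩).differentiableAt.differentiableWithinAt
      · intro b hb; rw [interior_Ico] at hb
        rw [(hd b ⟨hb.1.le, hb.2⟩).deriv]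
        have h1 : 0 < 1 - b := by linarith [hb.2]
        have h2 := Real.add_one_le_exp (-b)
        have h3 : Real.exp b * (1 - b) ≤ 1 := by
          calc Real.exp b * (1 - b) ≤ Real.exp b * Real.exp (-b) := by gcongr; linarith
            _ = 1 := by rw [← Real.exp_add]; simp
        rw [sub_nonneg, le_div_iff₀ h1]; exact h3
    intro b hb
    have := hm (Set.left_mem_Ico.2 one_pos) hb hb.1
    simp at this; linarith
  have hm : MonotoneOn (fun b : ℝ => (1 - b) * Real.log (1 - b) + 2 * b - Real.exp b) (Set.Icc 0 1) := by
    apply monotoneOn_of_deriv_nonneg (convex_Icc 0 1)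
    · apply ContinuousOn.sub
      · apply ContinuousOn.add
        · exact (Real.continuous_mul_log.comp (continuous_const.sub continuous_id)).continuousOn
        · fun_prop
      · fun_prop
    all_goals
      rw [interior_Icc]
      have hd : ∀ b ∈ Set.Ioo (0:ℝ) 1, HasDerivAt
          (fun b : ℝ => (1 - b) * Real.log (1 - b) + 2 * b - Real.exp b)
          (- Real.log (1 - b) - 1 + 2 - Real.exp b) b := by
        intro b hb
        have hb1 : (1 - b) ≠ 0 := by linarith [hb.2]
        have h := (((hasDerivAt_id b).const_sub 1).mul
          (((hasDerivAt_id b).const_sub 1).log hb1)).add ((hasDerivAt_id b).const_mul 2) |>.sub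
          (Real.hasDerivAt_exp b)
        refine HasDerivAt.congr_deriv (f' := _) h ?_
        simp only [id]; field_simp; ring
    · intro b hb; exact (hd b hb).differentiableAt.differentiableWithinAt
    · intro b hb; rw [(hd b hb).deriv]
      have := key b ⟨hb.1.le, hb.2⟩
      linarith
  have := hm (Set.left_mem_Icc.2 zero_le_one) ⟨h0, h1⟩ h0
  simp at this; linarith

lemma sc_young {a v : ℝ} (hv : 0 < v) :
    a * (v - 1) ≤ (v * Real.log v - v + 1) + (Real.exp a - 1 - a) := by
  have h := Real.add_one_le_exp (a - Real.log v)
  rw [Real.exp_sub, Real.exp_log hv, le_div_iff₀ hv] at h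
  nlinarith

lemma sc_main_aux {u v : ℝ} (hu : 0 ≤ u) (hu1 : u ≤ 1) (hv : 1 ≤ v) :
    -((u - 1) * (v - 1)) ≤ (u * Real.log u - u + 1) + (v * Real.log v - v + 1) := by
  have h1 := sc_exp (a := 1 - u) (by linarith) (by linarith)
  have h2 := sc_young (a := 1 - u) (v := v) (by linarith)
  rw [sub_sub_cancel] at h1
  linarith

lemma phi_nonneg {u : ℝ} (hu : 0 ≤ u) : 0 ≤ u * Real.log u - u + 1 := by
  rcases hu.eq_or_lt with rfl | h
  · simp
  · have := sc_young (a := 0) h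
    simp at this; linarith

lemma sc_main {u v : ℝ} (hu : 0 ≤ u) (hv : 0 ≤ v) :
    -((u - 1) * (v - 1)) ≤ (u * Real.log u - u + 1) + (v * Real.log v - v + 1) := by
  have p1 := phi_nonneg hu
  have p2 := phi_nonneg hv
  rcases le_total u 1 with h | h <;> rcases le_total v 1 with h' | h'
  · nlinarith
  · exact sc_main_aux hu h h'
  · have := sc_main_aux hv h' h; linarith
  · nlinarith

lemma log_ge {r : ℝ} (hr : 0 < r) : 1 - 1 / r ≤ Real.log r := by
  have := Real.one_sub_inv_le_log_of_pos hr
  simpa using this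

end scal

/-- Hoeffding's lemma for a finite average. -/
lemma hoeff {Ω : Type*} [Fintype Ω] (C : Finset Ω) (hC : C.Nonempty) (f : Ω → ℝ)
    (h01 : ∀ σ, 0 ≤ f σ ∧ f σ ≤ 1) (lam : ℝ) :
    (∑ σ ∈ C, Real.exp (lam * f σ)) / #C ≤
      Real.exp (lam * ((∑ σ ∈ C, f σ) / #C) + lam ^ 2 / 8) := by
  classical
  let _ : MeasurableSpace Ω := ⊤
  have : MeasurableSingletonClass Ω := ⟨fun _ => trivial⟩
  let p : PMF Ω := PMF.uniformOfFinset C hC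
  have hint : ∀ φ : Ω → ℝ, ∫ ω, φ ω ∂p.toMeasure = (∑ σ ∈ C, φ σ) / #C := by
    intro φ
    rw [PMF.integral_eq_sum, Finset.sum_div, ← Finset.sum_filter_add_sum_filter_not univ (· ∈ C)]
    rw [Finset.sum_eq_zero (s := univ.filter (¬ · ∈ C)), add_zero]
    · simp only [filter_univ_mem]
      refine Finset.sum_congr rfl fun σ hσ => ?_
      simp [p, hσ]; ring
    · intro σ hσ
      simp at hσ
      simp [p, hσ]
  have := ProbabilityTheory.hasSubgaussianMGF_of_mem_Icc (μ := p.toMeasure) (X := f) (a := 0) (b := 1)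
    (measurable_from_top.aemeasurable) (Filter.Eventually.of_forall fun ω => ⟨(h01 ω).1, (h01 ω).2⟩)
  have h2 := this.mgf_le lam
  unfold ProbabilityTheory.mgf at h2
  rw [hint, hint] at h2
  set a := (∑ σ ∈ C, f σ) / #C
  rw [Real.exp_add]
  have e : ∀ σ, Real.exp (lam * f σ) = Real.exp (lam * a) * Real.exp (lam * (f σ - a)) := by
    intro σ; rw [← Real.exp_add]; ring_nf
  simp_rw [e]
  rw [← Finset.mul_sum, mul_div_assoc]
  refine mul_le_mul_of_nonneg_left (h2.trans (le_of_eq ?_)) (Real.exp_pos _).le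
  congr 1
  simp; ring

section classlemma
variable {Ω V : Type*} [DecidableEq V]

/-- number of elements of `S` with the same value of `f` as `σ` -/
def cf (S : Finset Ω) (f : Ω → V) (σ : Ω) : ℕ := #{τ ∈ S | f τ = f σ}

lemma cf_pos {S : Finset Ω} {f : Ω → V} {σ : Ω} (h : σ ∈ S) : 0 < cf S f σ :=
  Finset.card_pos.2 ⟨σ, by simp [h]⟩

lemma sum_cf (S : Finset Ω) (f : Ω → V) (W : Finset V) (hf : ∀ σ ∈ S, f σ ∈ W) (φ : ℕ → ℝ) :
    ∑ σ ∈ S, φ (cf S f σ) = ∑ v ∈ W, (#{τ ∈ S | f τ = v} : ℝ) * φ #{τ ∈ S | f τ = v} := by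
  rw [← Finset.sum_fiberwise_of_maps_to hf]
  refine Finset.sum_congr rfl fun v _ => ?_
  rw [← nsmul_eq_mul, ← Finset.sum_const]
  refine Finset.sum_congr rfl fun σ hσ => ?_
  simp only [mem_filter] at hσ
  rw [cf, hσ.2]

lemma sum_dens (S : Finset Ω) (f : Ω → V) (W : Finset V) (hf : ∀ σ ∈ S, f σ ∈ W) :
    ∑ v ∈ W, (#{τ ∈ S | f τ = v} : ℝ) = #S := by
  rw [Finset.card_eq_sum_card_fiberwise hf]; push_cast; rfl

lemma class_ent (S : Finset Ω) (hS : S.Nonempty) (f : Ω → V) (W : Finset V)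
    (hf : ∀ σ ∈ S, f σ ∈ W) :
    ∑ σ ∈ S, Real.log (cf S f σ * #W / #S) =
      (#S / #W : ℝ) * ∑ v ∈ W, ((#{τ ∈ S | f τ = v} * #W / #S : ℝ) *
        Real.log (#{τ ∈ S | f τ = v} * #W / #S) - (#{τ ∈ S | f τ = v} * #W / #S : ℝ) + 1) := by
  have hS0 : (0:ℝ) < #S := by exact_mod_cast hS.card_pos
  obtain ⟨σ, hσ⟩ := hS
  have hW0 : (0:ℝ) < #W := by exact_mod_cast Finset.card_pos.2 ⟨_, hf σ hσ⟩
  rw [sum_cf S f W hf (fun k => Real.log (k * #W / #S))]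
  rw [Finset.sum_add_distrib, Finset.sum_sub_distrib]
  have h1 : ∑ v ∈ W, (#{τ ∈ S | f τ = v} * #W / #S : ℝ) = #W := by
    rw [← Finset.sum_div, ← Finset.sum_mul, sum_dens S f W hf]; field_simp
  rw [h1]
  simp only [sum_const, nsmul_eq_mul, mul_one, sub_add_cancel]
  rw [Finset.mul_sum]
  refine Finset.sum_congr rfl fun v _ => ?_
  field_simp

lemma class_mono (S : Finset Ω) (hS : S.Nonempty) (f : Ω → V) (W : Finset V)
    (hf : ∀ σ ∈ S, f σ ∈ W) :
    0 ≤ ∑ σ ∈ S, Real.log (cf S f σ * #W / #S) := by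
  rw [class_ent S hS f W hf]
  apply mul_nonneg (by positivity)
  exact Finset.sum_nonneg fun v _ => phi_nonneg (by positivity)

lemma class_local (S : Finset Ω) (hS : S.Nonempty) (f g : Ω → V) (W : Finset V)
    (hf : ∀ σ ∈ S, f σ ∈ W) (hg : ∀ σ ∈ S, g σ ∈ W) (hfg : ∀ σ ∈ S, f σ ≠ g σ) :
    -(1 / ((#W : ℝ) - 1)) * (∑ σ ∈ S, Real.log (cf S f σ * #W / #S) +
        ∑ σ ∈ S, Real.log (cf S g σ * #W / #S)) ≤
      ∑ σ ∈ S, Real.log ((cf S (fun τ => (f τ, g τ)) σ * #S * (#W - 1)) /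
        (cf S f σ * cf S g σ * #W)) := by
  have hS0 : (0:ℝ) < #S := by exact_mod_cast hS.card_pos
  have hW2 : (1:ℝ) < #W := by
    obtain ⟨σ, hσ⟩ := hS
    exact_mod_cast Finset.one_lt_card.2 ⟨_, hf σ hσ, _, hg σ hσ, hfg σ hσ⟩
  set n : ℝ := ((#W : ℕ) : ℝ) with hn
  set a : V → ℝ := fun v => ((#{τ ∈ S | f τ = v} : ℕ) : ℝ) with ha
  set b : V → ℝ := fun v => ((#{τ ∈ S | g τ = v} : ℕ) : ℝ) with hb
  have hsa : ∑ v ∈ W, a v = #S := sum_dens S f W hf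
  have hsb : ∑ v ∈ W, b v = #S := sum_dens S g W hg
  have step1 : ∑ σ ∈ S, (cf S f σ * cf S g σ / cf S (fun τ => (f τ, g τ)) σ : ℝ) ≤
      #S ^ 2 - ∑ v ∈ W, a v * b v := by
    have hm : ∀ σ ∈ S, (f σ, g σ) ∈ W.offDiag := fun σ hσ => by
      simp [hf σ hσ, hg σ hσ, hfg σ hσ]
    rw [← Finset.sum_fiberwise_of_maps_to hm]
    have h2 : ∑ x ∈ W.offDiag, a x.1 * b x.2 = #S ^ 2 - ∑ v ∈ W, a v * b v := by
      have h3 : ∑ x ∈ W ×ˢ W, a x.1 * b x.2 = #S ^ 2 := by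
        rw [Finset.sum_product, ← Finset.sum_mul_sum, hsa, hsb, sq]
      rw [← Finset.diag_union_offDiag, Finset.sum_union (Finset.disjoint_diag_offDiag _),
        Finset.sum_diag] at h3
      linarith
    rw [← h2]
    refine Finset.sum_le_sum fun x _ => ?_
    by_cases he : (S.filter fun τ => (f τ, g τ) = x).Nonempty
    · have hc : (0:ℝ) < #{τ ∈ S | (f τ, g τ) = x} := by exact_mod_cast he.card_pos
      have : ∀ σ ∈ S.filter (fun τ => (f τ, g τ) = x),
          (cf S f σ * cf S g σ / cf S (fun τ => (f τ, g τ)) σ : ℝ) =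
            a x.1 * b x.2 / #{τ ∈ S | (f τ, g τ) = x} := by
        intro σ hσ
        simp only [mem_filter] at hσ
        obtain ⟨_, rfl⟩ := hσ
        simp [cf, ha, hb]
      rw [Finset.sum_congr rfl this]
      simp only [sum_const, nsmul_eq_mul]
      apply le_of_eq; field_simp
    · rw [Finset.not_nonempty_iff_eq_empty] at he
      rw [he]; simp only [sum_empty]; positivity
  have step2 : ∑ σ ∈ S, (1 - n / (#S * (n - 1)) *
      (cf S f σ * cf S g σ / cf S (fun τ => (f τ, g τ)) σ : ℝ)) ≤
      ∑ σ ∈ S, Real.log ((cf S (fun τ => (f τ, g τ)) σ * #S * (n - 1)) /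
        (cf S f σ * cf S g σ * n)) := by
    refine Finset.sum_le_sum fun σ hσ => ?_
    have p1 : (0:ℝ) < cf S f σ := by exact_mod_cast cf_pos hσ
    have p2 : (0:ℝ) < cf S g σ := by exact_mod_cast cf_pos hσ
    have p3 : (0:ℝ) < cf S (fun τ => (f τ, g τ)) σ := by exact_mod_cast cf_pos hσ
    have p4 : 0 < n - 1 := by linarith
    refine le_trans (le_of_eq ?_) (log_ge (by positivity))
    field_simp
  refine le_trans ?_ step2
  rw [Finset.sum_sub_distrib, ← Finset.mul_sum]
  simp only [sum_const, nsmul_eq_mul, mul_one]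
  have p4 : 0 < n - 1 := by linarith
  have p5 : 0 < n := by linarith
  rw [class_ent S hS f W hf, class_ent S hS g W hg, ← mul_add, ← Finset.sum_add_distrib]
  have step3 : ∑ v ∈ W, -((a v * n / #S - 1) * (b v * n / #S - 1)) ≤ _ :=
    Finset.sum_le_sum fun v _ => sc_main (u := a v * n / #S) (v := b v * n / #S)
      (by positivity) (by positivity)
  have step4 : ∑ v ∈ W, -((a v * n / #S - 1) * (b v * n / #S - 1)) =
      n - n ^ 2 / #S ^ 2 * ∑ v ∈ W, a v * b v := by
    have : ∀ v ∈ W, -((a v * n / #S - 1) * (b v * n / #S - 1)) =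
        (n / #S) * a v + (n / #S) * b v - 1 - n ^ 2 / #S ^ 2 * (a v * b v) := by
      intro v _; field_simp; ring
    rw [Finset.sum_congr rfl this]
    simp only [Finset.sum_sub_distrib, Finset.sum_add_distrib, ← Finset.mul_sum, hsa, hsb]
    simp only [sum_const, nsmul_eq_mul, mul_one]
    rw [← hn]; field_simp; ring
  rw [step4] at step3
  set Φ : ℝ := ∑ v ∈ W, ((a v * n / #S * Real.log (a v * n / #S) - a v * n / #S + 1) +
    (b v * n / #S * Real.log (b v * n / #S) - b v * n / #S + 1)) with hΦ
  have step5 : n / (#S * (n - 1)) * ∑ σ ∈ S, (cf S f σ * cf S g σ / cf S (fun τ => (f τ, g τ)) σ : ℝ)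
      ≤ n / (#S * (n - 1)) * (#S ^ 2 - ∑ v ∈ W, a v * b v) := by gcongr
  have step6 : (#S / (n * (n-1)) : ℝ) * (n - n ^ 2 / #S ^ 2 * ∑ v ∈ W, a v * b v) ≤
      (#S / (n * (n-1)) : ℝ) * Φ := by gcongr
  have e1 : (#S / (n * (n-1)) : ℝ) * (n - n ^ 2 / #S ^ 2 * ∑ v ∈ W, a v * b v) =
     n / (#S * (n - 1)) * (#S ^ 2 - ∑ v ∈ W, a v * b v) - #S := by
    field_simp; ring
  have e2 : -(1 / (n - 1)) * (#S / n * Φ) = -((#S / (n * (n-1)) : ℝ) * Φ) := by field_simp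
  rw [e2]
  linarith

end classlemma

set_option linter.unusedSectionVars false

section emb
variable {I V : Type*} [Fintype I] [DecidableEq I] [Fintype V] [DecidableEq V]

/-- elements of `E` agreeing with `σ` on `A` -/
def cls (E : Finset (I ↪ V)) (A : Finset I) (σ : I ↪ V) : Finset (I ↪ V) :=
  E.filter fun τ => ∀ p ∈ A, τ p = σ p

lemma mem_cls {E : Finset (I ↪ V)} {A : Finset I} {σ τ : I ↪ V} :
    τ ∈ cls E A σ ↔ τ ∈ E ∧ ∀ p ∈ A, τ p = σ p := by simp [cls]

lemma self_mem_cls {E : Finset (I ↪ V)} {A : Finset I} {σ : I ↪ V} (h : σ ∈ E) : σ ∈ cls E A σ := by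
  simp [cls, h]

lemma cls_congr {E : Finset (I ↪ V)} {A : Finset I} {σ τ : I ↪ V} (h : ∀ p ∈ A, τ p = σ p) :
    cls E A τ = cls E A σ := by
  unfold cls
  refine Finset.filter_congr fun ρ _ => ?_
  exact forall₂_congr fun p hp => by rw [h p hp]

/-- post-composition with a transposition -/
def sw (v w : V) (σ : I ↪ V) : I ↪ V := σ.trans (Equiv.swap v w).toEmbedding

lemma sw_apply (v w : V) (σ : I ↪ V) (p : I) : sw v w σ p = Equiv.swap v w (σ p) := rfl

lemma sw_sw (v w : V) (σ : I ↪ V) : sw v w (sw v w σ) = σ := by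
  ext p; simp [sw_apply]

lemma card_cls_fiber (A : Finset I) (x : I) (hx : x ∉ A) (σ : I ↪ V) (v : V)
    (hv : ∀ p ∈ A, σ p ≠ v) :
    #((cls univ A σ).filter fun τ => τ x = v) = #(cls univ (insert x A) σ) := by
  have hx' : ∀ p ∈ A, σ p ≠ σ x := fun p hp h => hx (σ.injective h ▸ hp)
  refine Finset.card_bij' (fun τ _ => sw (σ x) v τ) (fun τ _ => sw (σ x) v τ) ?_ ?_ ?_ ?_
  · intro τ hτ
    simp only [mem_filter, mem_cls, mem_univ, true_and, mem_insert, forall_eq_or_imp] at hτ ⊢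
    refine ⟨by rw [sw_apply, hτ.2, Equiv.swap_apply_right], fun p hp => ?_⟩
    rw [sw_apply, hτ.1 p hp, Equiv.swap_apply_of_ne_of_ne (hx' p hp) (hv p hp)]
  · intro τ hτ
    simp only [mem_filter, mem_cls, mem_univ, true_and, mem_insert, forall_eq_or_imp] at hτ ⊢
    refine ⟨fun p hp => ?_, by rw [sw_apply, hτ.1, Equiv.swap_apply_left]⟩
    rw [sw_apply, hτ.2 p hp, Equiv.swap_apply_of_ne_of_ne (hx' p hp) (hv p hp)]
  · intro τ _; exact sw_sw _ _ _
  · intro τ _; exact sw_sw _ _ _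

/-- values available after fixing `A` -/
def avail (A : Finset I) (σ : I ↪ V) : Finset V := univ \ A.image σ

lemma card_avail (A : Finset I) (σ : I ↪ V) : #(avail A σ) = Fintype.card V - #A := by
  rw [avail, Finset.card_sdiff_of_subset (subset_univ _), Finset.card_image_of_injective _ σ.injective,
    Finset.card_univ]

lemma mem_avail {A : Finset I} {σ : I ↪ V} {v : V} : v ∈ avail A σ ↔ ∀ p ∈ A, σ p ≠ v := by
  simp [avail]

lemma val_mem_avail {E : Finset (I ↪ V)} {A : Finset I} {x : I} (hx : x ∉ A) {σ τ : I ↪ V}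
    (h : τ ∈ cls E A σ) : τ x ∈ avail A σ := by
  rw [mem_avail]
  intro p hp he
  rw [← (mem_cls.1 h).2 p hp] at he
  exact hx (τ.injective he ▸ hp)

lemma card_cls_step (A : Finset I) (x : I) (hx : x ∉ A) (σ : I ↪ V) :
    #(cls univ A σ) = (Fintype.card V - #A) * #(cls univ (insert x A) σ) := by
  rw [Finset.card_eq_sum_card_fiberwise (f := fun τ : I ↪ V => τ x) (t := avail A σ)
    (fun τ hτ => val_mem_avail hx hτ)]
  rw [Finset.sum_congr rfl fun v hv => card_cls_fiber A x hx σ v (mem_avail.1 hv)]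
  rw [Finset.sum_const, card_avail, smul_eq_mul]

variable (I V) in
/-- number of extensions of a partial injection of size `k` -/
def Nn (k : ℕ) : ℕ := (Fintype.card V - k).descFactorial (Fintype.card I - k)

lemma card_cls_univ (A : Finset I) (σ : I ↪ V) : #(cls univ A σ) = Nn I V #A := by
  obtain ⟨d, hd⟩ : ∃ d, d = Fintype.card I - #A := ⟨_, rfl⟩
  induction d generalizing A with
  | zero =>
    have hA : A = univ := by
      rw [← Finset.card_eq_iff_eq_univ]
      have := Finset.card_le_univ A; omega
    subst hA
    simp only [Nn, card_univ, tsub_self, Nat.descFactorial_zero]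
    rw [Finset.card_eq_one]
    refine ⟨σ, ?_⟩
    ext τ; simp [mem_cls, DFunLike.ext_iff]
  | succ d ih =>
    obtain ⟨x, hx⟩ : ∃ x, x ∉ A := by
      by_contra! h
      have : A = univ := by ext; simp [h]
      subst this; simp at hd
    have hc : #(insert x A) = #A + 1 := Finset.card_insert_of_notMem hx
    rw [card_cls_step A x hx, ih _ (by rw [hc]; omega), hc]
    have hV : #A + 1 ≤ Fintype.card V := by
      have h1 := Fintype.card_le_of_embedding σ
      omega
    obtain ⟨k, hk⟩ : ∃ k, Fintype.card V = #A + 1 + k := Nat.exists_eq_add_of_le hV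
    unfold Nn
    rw [show Fintype.card I - #A = Fintype.card I - (#A + 1) + 1 by omega,
      show Fintype.card V - #A = k + 1 by omega, show Fintype.card V - (#A + 1) = k by omega,
      Nat.succ_descFactorial_succ]

lemma Nn_step (A : Finset I) (x : I) (hx : x ∉ A) (σ : I ↪ V) :
    (Nn I V #A : ℝ) = ((Fintype.card V - #A : ℕ) : ℝ) * Nn I V (#A + 1) := by
  have := card_cls_step A x hx σ
  rw [card_cls_univ, card_cls_univ, Finset.card_insert_of_notMem hx] at this
  exact_mod_cast this

lemma Nn_pos (A : Finset I) (σ : I ↪ V) : (0:ℝ) < Nn I V #A := by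
  rw [← card_cls_univ A σ]
  exact_mod_cast Finset.card_pos.2 ⟨σ, self_mem_cls (mem_univ _)⟩

lemma sum_class_nonneg (E : Finset (I ↪ V)) (A : Finset I) (φ : (I ↪ V) → ℝ)
    (h : ∀ σ ∈ E, 0 ≤ ∑ τ ∈ cls E A σ, φ τ) : 0 ≤ ∑ σ ∈ E, φ σ := by
  classical
  rw [← Finset.sum_fiberwise_of_maps_to (g := fun (σ : I ↪ V) (p : A) => σ p)
    (t := E.image fun (σ : I ↪ V) (p : A) => σ p) (fun σ hσ => mem_image_of_mem _ hσ)]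
  refine Finset.sum_nonneg fun b hb => ?_
  obtain ⟨σ, hσ, rfl⟩ := mem_image.1 hb
  refine (h σ hσ).trans (le_of_eq (Finset.sum_congr ?_ fun _ _ => rfl))
  ext τ
  simp [cls, funext_iff]

/-- (un-normalised) relative entropy functional -/
noncomputable def LL (E : Finset (I ↪ V)) (A : Finset I) : ℝ :=
  ∑ σ ∈ E, Real.log (#(cls E A σ) / Nn I V #A)

lemma card_cls_pos {E : Finset (I ↪ V)} {A : Finset I} {σ : I ↪ V} (h : σ ∈ E) :
    (0:ℝ) < #(cls E A σ) := by
  exact_mod_cast Finset.card_pos.2 ⟨σ, self_mem_cls h⟩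

lemma cf_cls {E : Finset (I ↪ V)} {A : Finset I} {σ τ : I ↪ V} (x : I) (h : τ ∈ cls E A σ) :
    cf (cls E A σ) (fun ρ => ρ x) τ = #(cls E (insert x A) τ) := by
  unfold cf
  congr 1
  ext ρ
  rw [mem_cls] at h
  simp only [mem_filter, mem_cls, mem_insert, forall_eq_or_imp]
  constructor
  · rintro ⟨⟨h1, h2⟩, h3⟩
    exact ⟨h1, h3, fun p hp => by rw [h2 p hp, h.2 p hp]⟩
  · rintro ⟨h1, h3, h2⟩
    exact ⟨⟨h1, fun p hp => by rw [h2 p hp, h.2 p hp]⟩, h3⟩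

lemma cf_cls2 {E : Finset (I ↪ V)} {A : Finset I} {σ τ : I ↪ V} (x y : I) (h : τ ∈ cls E A σ) :
    cf (cls E A σ) (fun ρ => (ρ x, ρ y)) τ = #(cls E (insert y (insert x A)) τ) := by
  unfold cf
  congr 1
  ext ρ
  rw [mem_cls] at h
  simp only [mem_filter, mem_cls, mem_insert, forall_eq_or_imp, Prod.mk.injEq]
  constructor
  · rintro ⟨⟨h1, h2⟩, h3, h4⟩
    exact ⟨h1, h4, h3, fun p hp => by rw [h2 p hp, h.2 p hp]⟩
  · rintro ⟨h1, h4, h3, h2⟩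
    exact ⟨⟨h1, fun p hp => by rw [h2 p hp, h.2 p hp]⟩, h3, h4⟩

/-- one-step increments -/
lemma LL_diff (E : Finset (I ↪ V)) (A : Finset I) (x : I) (hx : x ∉ A) :
    LL E (insert x A) - LL E A = ∑ σ ∈ E, Real.log
      (#(cls E (insert x A) σ) * ((Fintype.card V - #A : ℕ) : ℝ) / #(cls E A σ)) := by
  unfold LL
  rw [← Finset.sum_sub_distrib]
  refine Finset.sum_congr rfl fun σ hσ => ?_
  have p1 := card_cls_pos (A := A) hσ
  have p2 := card_cls_pos (A := insert x A) hσ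
  have p3 := Nn_pos A σ
  have p4 := Nn_pos (insert x A) σ
  rw [← Real.log_div (by positivity) (by positivity)]
  congr 1
  rw [Finset.card_insert_of_notMem hx] at p4 ⊢
  rw [Nn_step A x hx σ] at p3 ⊢
  have p5 : (0:ℝ) < ((Fintype.card V - #A : ℕ) : ℝ) := by
    by_contra h
    nlinarith
  field_simp

lemma LL_mono_step (E : Finset (I ↪ V)) (A : Finset I) (x : I) (hx : x ∉ A) :
    LL E A ≤ LL E (insert x A) := by
  rw [← sub_nonneg, LL_diff E A x hx]
  apply sum_class_nonneg E A
  intro σ hσ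
  have h := class_mono (cls E A σ) ⟨σ, self_mem_cls hσ⟩ (fun ρ => ρ x) (avail A σ)
    (fun τ hτ => val_mem_avail hx hτ)
  refine h.trans (le_of_eq (Finset.sum_congr rfl fun τ hτ => ?_))
  rw [cf_cls x hτ, card_avail, cls_congr (mem_cls.1 hτ).2]

lemma LL_mono (E : Finset (I ↪ V)) {A B : Finset I} (h : A ⊆ B) : LL E A ≤ LL E B := by
  have key : ∀ D : Finset I, LL E A ≤ LL E (D ∪ A) := by
    intro D
    induction D using Finset.induction_on with
    | empty => simp
    | insert x D _ ih =>
      rw [insert_union]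
      by_cases hx : x ∈ D ∪ A
      · rwa [insert_eq_of_mem hx]
      · exact ih.trans (LL_mono_step E _ x hx)
  have := key B
  rwa [union_eq_left.2 h] at this

lemma LL_local (E : Finset (I ↪ V)) (A : Finset I) (x y : I) (hx : x ∉ A) (hy : y ∉ A) (hxy : x ≠ y) :
    -(1 / (((Fintype.card V - #A : ℕ) : ℝ) - 1)) *
      ((LL E (insert x A) - LL E A) + (LL E (insert y A) - LL E A)) ≤
    LL E (insert y (insert x A)) - LL E (insert x A) - LL E (insert y A) + LL E A := by
  have hy' : y ∉ insert x A := by simp [hy, Ne.symm hxy]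
  have e : LL E (insert y (insert x A)) - LL E (insert x A) - LL E (insert y A) + LL E A =
    (LL E (insert y (insert x A)) - LL E (insert x A)) - (LL E (insert y A) - LL E A) := by ring
  rw [e, ← sub_nonneg, LL_diff E A x hx, LL_diff E A y hy, LL_diff E _ y hy',
    ← Finset.sum_add_distrib, ← Finset.sum_sub_distrib, Finset.mul_sum, ← Finset.sum_sub_distrib]
  apply sum_class_nonneg E A
  intro σ hσ
  have h := class_local (cls E A σ) ⟨σ, self_mem_cls hσ⟩ (fun ρ => ρ x) (fun ρ => ρ y) (avail A σ)
    (fun τ hτ => val_mem_avail hx hτ) (fun τ hτ => val_mem_avail hy hτ)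
    (fun τ _ he => hxy (τ.injective he))
  rw [← sub_nonneg] at h
  refine h.trans (le_of_eq ?_)
  rw [← Finset.sum_add_distrib, Finset.mul_sum, ← Finset.sum_sub_distrib]
  refine Finset.sum_congr rfl fun τ hτ => ?_
  have hτE := (mem_cls.1 hτ).1
  have p1 := card_cls_pos (A := A) hτE
  have p2 := card_cls_pos (A := insert x A) hτE
  have p2' := card_cls_pos (A := insert y A) hτE
  have p3 := card_cls_pos (A := insert y (insert x A)) hτE
  have hn : 2 ≤ Fintype.card V - #A := by
    have h1 := Fintype.card_le_of_embedding σ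
    have h2 := Finset.card_le_univ (insert y (insert x A))
    rw [Finset.card_insert_of_notMem hy', Finset.card_insert_of_notMem hx] at h2
    omega
  rw [cf_cls x hτ, cf_cls y hτ, cf_cls2 x y hτ, card_avail, ← cls_congr (mem_cls.1 hτ).2]
  congr 1
  rw [Finset.card_insert_of_notMem hx]
  have hn' : ((Fintype.card V - (#A + 1) : ℕ) : ℝ) = ((Fintype.card V - #A : ℕ) : ℝ) - 1 := by
    rw [← Nat.sub_sub, Nat.cast_sub (by omega)]; simp
  rw [hn']
  have hn2 : (2:ℝ) ≤ ((Fintype.card V - #A : ℕ) : ℝ) := by exact_mod_cast hn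
  set n := ((Fintype.card V - #A : ℕ) : ℝ)
  have p6 : 0 < n - 1 := by linarith
  have p7 : 0 < n := by linarith
  rw [← Real.log_div (by positivity) (by positivity)]
  congr 1
  field_simp

end emb

lemma dbl (H : ℕ → ℕ → ℝ) (p q : ℕ) (δ : ℝ) (hδ : 0 ≤ δ)
    (hM : ∀ a ≤ p, ∀ b ≤ q, 0 ≤ H a b ∧ H a b ≤ H p q)
    (loc : ∀ a < p, ∀ b < q, -δ * ((H (a+1) b - H a b) + (H a (b+1) - H a b)) ≤
      H (a+1) (b+1) - H (a+1) b - H a (b+1) + H a b) (h0 : H 0 0 = 0) :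
    H p 0 + H 0 q ≤ (1 + δ * (p + q)) * H p q := by
  have h1 : ∑ a ∈ range p, ∑ b ∈ range q, (-δ * ((H (a+1) b - H a b) + (H a (b+1) - H a b))) ≤
      ∑ a ∈ range p, ∑ b ∈ range q, (H (a+1) (b+1) - H (a+1) b - H a (b+1) + H a b) :=
    Finset.sum_le_sum fun a ha => Finset.sum_le_sum fun b hb =>
      loc a (mem_range.1 ha) b (mem_range.1 hb)
  have h2 : ∑ a ∈ range p, ∑ b ∈ range q, (H (a+1) (b+1) - H (a+1) b - H a (b+1) + H a b) =
      H p q - H p 0 - H 0 q := by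
    have : ∀ a, ∑ b ∈ range q, (H (a+1) (b+1) - H (a+1) b - H a (b+1) + H a b) =
        (H (a+1) q - H (a+1) 0) - (H a q - H a 0) := by
      intro a
      rw [← Finset.sum_range_sub (fun b => H (a+1) b), ← Finset.sum_range_sub (fun b => H a b),
        ← Finset.sum_sub_distrib]
      exact Finset.sum_congr rfl fun b _ => by ring
    simp_rw [this]
    rw [Finset.sum_range_sub (fun a => H a q - H a 0), h0]; ring
  have h3 : ∑ a ∈ range p, ∑ b ∈ range q, ((H (a+1) b - H a b) + (H a (b+1) - H a b)) =
      ∑ b ∈ range q, (H p b - H 0 b) + ∑ a ∈ range p, (H a q - H a 0) := by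
    simp_rw [Finset.sum_add_distrib]
    congr 1
    · rw [Finset.sum_comm]
      exact Finset.sum_congr rfl fun b _ => Finset.sum_range_sub (fun a => H a b) p
    · exact Finset.sum_congr rfl fun a _ => Finset.sum_range_sub (fun b => H a b) q
  simp_rw [← Finset.mul_sum] at h1
  rw [h2, h3] at h1
  have h4 : ∑ b ∈ range q, (H p b - H 0 b) ≤ q * H p q := by
    calc _ ≤ ∑ b ∈ range q, H p q := Finset.sum_le_sum fun b hb => by
            have hb' := (mem_range.1 hb).le
            linarith [(hM p le_rfl b hb').2, (hM 0 (Nat.zero_le _) b hb').1]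
      _ = _ := by simp
  have h5 : ∑ a ∈ range p, (H a q - H a 0) ≤ p * H p q := by
    calc _ ≤ ∑ a ∈ range p, H p q := Finset.sum_le_sum fun a ha => by
            have ha' := (mem_range.1 ha).le
            linarith [(hM a ha' q le_rfl).2, (hM a ha' 0 (Nat.zero_le _)).1]
      _ = _ := by simp
  have h6 := mul_le_mul_of_nonneg_left (add_le_add h4 h5) hδ
  linarith

lemma exists_chain {I : Type*} [DecidableEq I] (X : Finset I) :
    ∃ f : ℕ → Finset I, f 0 = ∅ ∧ f #X = X ∧
      (∀ a ≤ #X, f a ⊆ X ∧ #(f a) = a) ∧ ∀ a < #X, ∃ x ∈ X, x ∉ f a ∧ f (a+1) = insert x (f a) := by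
  induction X using Finset.induction_on with
  | empty => exact ⟨fun _ => ∅, rfl, rfl, fun a ha => by simp at ha ⊢; exact ha.symm, by simp⟩
  | insert x X hx ih =>
    obtain ⟨f, h0, hX, hs, hstep⟩ := ih
    have hc : #(insert x X) = #X + 1 := card_insert_of_notMem hx
    refine ⟨fun a => if a ≤ #X then f a else insert x X, by simp [h0], by simp [hc], ?_, ?_⟩
    · intro a ha
      dsimp only
      split_ifs with h
      · exact ⟨(hs a h).1.trans (subset_insert _ _), (hs a h).2⟩
      · exact ⟨subset_rfl, by rw [hc] at ha ⊢; omega⟩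
    · intro a ha
      dsimp only
      rw [hc] at ha
      rcases (Nat.lt_succ_iff.1 ha).lt_or_eq with h | h
      · obtain ⟨y, hy, h1, h2⟩ := hstep a h
        refine ⟨y, mem_insert_of_mem hy, ?_⟩
        rw [if_pos h.le, if_pos (Nat.succ_le_of_lt h)]; exact ⟨h1, h2⟩
      · refine ⟨x, mem_insert_self _ _, ?_⟩
        rw [if_pos h.le, if_neg (by omega), h, hX]; exact ⟨hx, rfl⟩

section pair
variable {I V : Type*} [Fintype I] [DecidableEq I] [Fintype V] [DecidableEq V]

lemma LL_pair (E : Finset (I ↪ V)) (F X Y : Finset I) (hFX : Disjoint F X) (hFY : Disjoint F Y)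
    (hXY : Disjoint X Y) (n : ℕ) (hn : n = Fintype.card V - #F) (hw : #X + #Y < n) :
    (1 - (#X + #Y : ℝ) / n) * ((LL E (F ∪ X) - LL E F) + (LL E (F ∪ Y) - LL E F)) ≤
      LL E (F ∪ (X ∪ Y)) - LL E F := by
  obtain ⟨f, f0, fX, fs, fstep⟩ := exists_chain X
  obtain ⟨g, g0, gY, gs, gstep⟩ := exists_chain Y
  have hw' : (#X + #Y : ℝ) < n := by exact_mod_cast hw
  have hd : 0 < (n : ℝ) - (#X + #Y) := by linarith
  have key := dbl (fun a b => LL E (F ∪ (f a ∪ g b)) - LL E F) #X #Y (1 / (n - (#X + #Y)))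
    (by positivity) ?_ ?_ ?_
  · simp only [f0, g0, fX, gY, empty_union, union_empty] at key
    have hn0 : 0 < (n:ℝ) := by
      have : 0 < n := by omega
      exact_mod_cast this
    have h1 : (1 - (#X + #Y : ℝ) / n) = (n - (#X + #Y)) / n := by field_simp
    have h2 : (1 + 1 / ((n:ℝ) - (#X + #Y)) * (#X + #Y)) = n / (n - (#X + #Y)) := by
      field_simp; ring
    rw [h2] at key
    rw [h1]
    calc _ ≤ (n - (#X + #Y)) / n * (n / (n - (#X + #Y)) * (LL E (F ∪ (X ∪ Y)) - LL E F)) := by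
          gcongr
      _ = _ := by field_simp
  · intro a ha b hb
    refine ⟨sub_nonneg.2 (LL_mono E subset_union_left), ?_⟩
    simp only [fX, gY]
    gcongr
    exact LL_mono E (union_subset_union_right (union_subset_union (fs a ha).1 (gs b hb).1))
  · intro a ha b hb
    obtain ⟨x, hxX, hx, fx⟩ := fstep a ha
    obtain ⟨y, hyY, hy, gy⟩ := gstep b hb
    have hxF : x ∉ F := fun h => disjoint_left.1 hFX h hxX
    have hyF : y ∉ F := fun h => disjoint_left.1 hFY h hyY
    have hxg : x ∉ g b := fun h => disjoint_left.1 hXY hxX ((gs b hb.le).1 h)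
    have hyf : y ∉ f a := fun h => disjoint_left.1 hXY ((fs a ha.le).1 h) hyY
    have hxy : x ≠ y := fun h => disjoint_left.1 hXY hxX (h ▸ hyY)
    have hloc := LL_local E (F ∪ (f a ∪ g b)) x y (by simp [*]) (by simp [*]) hxy
    have e1 : F ∪ (f (a+1) ∪ g b) = insert x (F ∪ (f a ∪ g b)) := by
      rw [fx]; ext; simp
    have e2 : F ∪ (f a ∪ g (b+1)) = insert y (F ∪ (f a ∪ g b)) := by
      rw [gy]; ext; simp
    have e3 : F ∪ (f (a+1) ∪ g (b+1)) = insert y (insert x (F ∪ (f a ∪ g b))) := by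
      rw [fx, gy]; ext; simp
    rw [e1, e2, e3]
    set A := F ∪ (f a ∪ g b)
    have m1 := LL_mono E (subset_insert x A)
    have m2 := LL_mono E (subset_insert y A)
    have hcard : #A ≤ #F + (a + b) := by
      refine (card_union_le _ _).trans ?_
      have := card_union_le (f a) (g b)
      rw [(fs a ha.le).2, (gs b hb.le).2] at this
      omega
    have hge : (n : ℝ) - (#X + #Y) ≤ ((Fintype.card V - #A : ℕ) : ℝ) - 1 := by
      have : n + 1 ≤ (Fintype.card V - #A) + (#X + #Y) := by omega
      have : (n:ℝ) + 1 ≤ ((Fintype.card V - #A : ℕ) : ℝ) + (#X + #Y) := by exact_mod_cast this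
      linarith
    have hinv : 1 / (((Fintype.card V - #A : ℕ) : ℝ) - 1) ≤ 1 / ((n : ℝ) - (#X + #Y)) :=
      one_div_le_one_div_of_le hd hge
    have := mul_le_mul_of_nonneg_right hinv
      (show 0 ≤ (LL E (insert x A) - LL E A) + (LL E (insert y A) - LL E A) by linarith)
    linarith
  · simp [f0, g0]

lemma LL_rows {ι : Type*} [DecidableEq ι] (E : Finset (I ↪ V)) (F : Finset I) (row : ι → Finset I)
    (l : ℕ) (n : ℕ) (hn : n = Fintype.card V - #F) (hn0' : 0 < n) (i : ℕ) (T : Finset ι) (hT : #T = 2 ^ i)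
    (hl : ∀ j ∈ T, #(row j) = l) (hF : ∀ j ∈ T, Disjoint F (row j))
    (hdis : ∀ j ∈ T, ∀ k ∈ T, j ≠ k → Disjoint (row j) (row k)) :
    (1 - 2 * (2 ^ i * l : ℝ) / n) * ∑ j ∈ T, (LL E (F ∪ row j) - LL E F) ≤
      LL E (F ∪ T.biUnion row) - LL E F := by
  have nn : ∀ A, 0 ≤ LL E (F ∪ A) - LL E F := fun A => sub_nonneg.2 (LL_mono E subset_union_left)
  have nns : 0 ≤ ∑ j ∈ T, (LL E (F ∪ row j) - LL E F) := Finset.sum_nonneg fun j _ => nn _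
  by_cases hneg : 1 - 2 * (2 ^ i * l : ℝ) / n ≤ 0
  · exact (mul_nonpos_of_nonpos_of_nonneg hneg nns).trans (nn _)
  push Not at hneg
  induction i generalizing T with
  | zero =>
    obtain ⟨j, rfl⟩ := card_eq_one.1 (by simpa using hT)
    simp only [sum_singleton, singleton_biUnion]
    refine mul_le_of_le_one_left (nn _) ?_
    have : 0 ≤ 2 * (2 ^ 0 * l : ℝ) / n := by positivity
    linarith
  | succ i ih =>
    obtain ⟨A, hAT, hA⟩ := exists_subset_card_eq (s := T) (n := 2 ^ i) (by rw [hT, pow_succ]; omega)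
    have hB : #(T \ A) = 2 ^ i := by
      rw [card_sdiff_of_subset hAT, hT, hA, pow_succ]; omega
    have hBT : T \ A ⊆ T := sdiff_subset
    have hn0 : 0 < (n:ℝ) := by exact_mod_cast hn0'
    set x : ℝ := (2 ^ (i+1) * l : ℝ) / n with hx
    have hx0 : 0 ≤ x := by positivity
    have e1 : 1 - 2 * (2 ^ (i+1) * l : ℝ) / n = 1 - 2 * x := by rw [hx]; ring
    have e2 : 1 - 2 * (2 ^ i * l : ℝ) / n = 1 - x := by rw [hx]; ring
    rw [e1] at hneg ⊢
    rw [e2] at ih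
    have ihA := ih A hA (fun j hj => hl j (hAT hj)) (fun j hj => hF j (hAT hj))
      (fun j hj k hk => hdis j (hAT hj) k (hAT hk)) (Finset.sum_nonneg fun j _ => nn _) (by linarith)
    have ihB := ih (T \ A) hB (fun j hj => hl j (hBT hj)) (fun j hj => hF j (hBT hj))
      (fun j hj k hk => hdis j (hBT hj) k (hBT hk)) (Finset.sum_nonneg fun j _ => nn _) (by linarith)
    have cA : #(A.biUnion row) = 2 ^ i * l := by
      rw [card_biUnion fun j hj k hk => hdis j (hAT hj) k (hAT hk),
        sum_congr rfl fun j hj => hl j (hAT hj), sum_const, hA, smul_eq_mul]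
    have cB : #((T \ A).biUnion row) = 2 ^ i * l := by
      rw [card_biUnion fun j hj k hk => hdis j (hBT hj) k (hBT hk),
        sum_congr rfl fun j hj => hl j (hBT hj), sum_const, hB, smul_eq_mul]
    have ex : ((2 ^ i * l : ℕ) + (2 ^ i * l : ℕ) : ℝ) / n = x := by
      rw [hx]; push_cast; ring
    have hp := LL_pair E F (A.biUnion row) ((T \ A).biUnion row)
      ((disjoint_biUnion_right _ _ _).2 fun j hj => hF j (hAT hj))
      ((disjoint_biUnion_right _ _ _).2 fun j hj => hF j (hBT hj))
      ((disjoint_biUnion_left _ _ _).2 fun j hj => (disjoint_biUnion_right _ _ _).2 fun k hk =>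
        hdis j (hAT hj) k (hBT hk) (fun h => (mem_sdiff.1 hk).2 (h ▸ hj))) n hn (by
        rw [cA, cB]
        have : x < 1 := by linarith
        rw [← ex, div_lt_one hn0] at this
        exact_mod_cast this)
    rw [cA, cB, ex] at hp
    have eU : A.biUnion row ∪ (T \ A).biUnion row = T.biUnion row := by
      rw [← union_biUnion, union_sdiff_of_subset hAT]
    rw [eU] at hp
    have eS : ∑ j ∈ T, (LL E (F ∪ row j) - LL E F) = ∑ j ∈ A, (LL E (F ∪ row j) - LL E F) +
        ∑ j ∈ T \ A, (LL E (F ∪ row j) - LL E F) := by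
      rw [add_comm, sum_sdiff hAT]
    rw [eS] at nns ⊢
    have h1x : 0 ≤ 1 - x := by linarith
    have h7 := mul_le_mul_of_nonneg_left (add_le_add ihA ihB) h1x
    nlinarith [mul_nonneg (sq_nonneg x) nns]

end pair

section dv
variable {I V : Type*} [Fintype I] [DecidableEq I] [Fintype V] [DecidableEq V]

lemma dv_count (E : Finset (I ↪ V)) (F A : Finset I) (hFA : F ⊆ A) (σ0 : I ↪ V)
    (hE : E ⊆ cls univ F σ0) (ψ : (I ↪ V) → ℝ) (hψ : ∀ σ, 0 ≤ ψ σ)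
    (hA : ∀ σ τ : I ↪ V, (∀ p ∈ A, τ p = σ p) → ψ τ = ψ σ) :
    ∑ σ ∈ E, ψ σ / #(cls E A σ) ≤ (∑ σ ∈ cls univ F σ0, ψ σ) / Nn I V #A := by
  have h1 : ∀ σ ∈ E, ψ σ / #(cls E A σ) = ∑ τ ∈ cls univ F σ0,
      if (∀ p ∈ A, τ p = σ p) then ψ τ / (Nn I V #A * #(cls E A τ)) else 0 := by
    intro σ hσ
    rw [← Finset.sum_filter]
    have e : (cls univ F σ0).filter (fun τ => ∀ p ∈ A, τ p = σ p) = cls univ A σ := by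
      ext τ
      simp only [mem_filter, mem_cls, mem_univ, true_and, and_iff_right_iff_imp]
      intro h p hp
      rw [h p (hFA hp), (mem_cls.1 (hE hσ)).2 p hp]
    rw [e, Finset.sum_congr rfl (g := fun _ => ψ σ / (Nn I V #A * #(cls E A σ)))]
    · rw [sum_const, card_cls_univ, nsmul_eq_mul]
      have := Nn_pos A σ
      have := card_cls_pos (A := A) hσ
      field_simp
    · intro τ hτ
      have := (mem_cls.1 hτ).2
      rw [hA σ τ this, cls_congr this]
  rw [Finset.sum_congr rfl h1, Finset.sum_comm, Finset.sum_div]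
  refine Finset.sum_le_sum fun τ _ => ?_
  rw [← Finset.sum_filter]
  have e : E.filter (fun σ : I ↪ V => ∀ p ∈ A, τ p = σ p) = cls E A τ := by
    ext σ; simp only [mem_filter, mem_cls, eq_comm]
  rw [e, sum_const, nsmul_eq_mul]
  have hN := Nn_pos A τ
  rcases Nat.eq_zero_or_pos #(cls E A τ) with h | h
  · rw [h]; simp only [Nat.cast_zero, zero_mul]; exact div_nonneg (hψ τ) hN.le
  · have h' : (0:ℝ) < #(cls E A τ) := by exact_mod_cast h
    apply le_of_eq; field_simp

lemma dv (E : Finset (I ↪ V)) (hEne : E.Nonempty) (F A : Finset I) (hFA : F ⊆ A) (σ0 : I ↪ V)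
    (hE : E ⊆ cls univ F σ0) (g : (I ↪ V) → ℝ)
    (hA : ∀ σ τ : I ↪ V, (∀ p ∈ A, τ p = σ p) → g τ = g σ) (lam : ℝ) :
    lam * ∑ σ ∈ E, g σ - #E * Real.log ((∑ σ ∈ cls univ F σ0, Real.exp (lam * g σ)) /
      #(cls univ F σ0)) ≤ LL E A - LL E F := by
  have hcnt := dv_count E F A hFA σ0 hE (fun σ => Real.exp (lam * g σ))
    (fun σ => (Real.exp_pos _).le) (fun σ τ h => by simp only [hA σ τ h])
  have hEF : ∀ σ ∈ E, cls E F σ = E := by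
    intro σ hσ
    refine Finset.filter_true_of_mem fun τ hτ p hp => ?_
    rw [(mem_cls.1 (hE hτ)).2 p hp, (mem_cls.1 (hE hσ)).2 p hp]
  have hLF : LL E F = ∑ σ ∈ E, Real.log (#E / Nn I V #F) :=
    Finset.sum_congr rfl fun σ hσ => by rw [hEF σ hσ]
  have hCpos : (0:ℝ) < #(cls univ F σ0) := card_cls_pos (mem_univ _)
  set Z := ∑ σ ∈ cls univ F σ0, Real.exp (lam * g σ) with hZ
  have hZ0 : 0 < Z := Finset.sum_pos (fun _ _ => Real.exp_pos _) ⟨σ0, self_mem_cls (mem_univ _)⟩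
  have hEpos : (0:ℝ) < #E := by exact_mod_cast hEne.card_pos
  have hNA := Nn_pos A σ0
  have hNF := Nn_pos F σ0
  rw [card_cls_univ] at *
  rw [hLF, LL, ← Finset.sum_sub_distrib, Finset.mul_sum,
    show (#E : ℝ) * Real.log (Z / Nn I V #F) = ∑ σ ∈ E, Real.log (Z / Nn I V #F) by simp,
    ← Finset.sum_sub_distrib, ← sub_nonneg, ← Finset.sum_sub_distrib]
  calc (0:ℝ) ≤ ∑ σ ∈ E, (1 - Nn I V #A * #E / Z * (Real.exp (lam * g σ) / #(cls E A σ))) := by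
        rw [Finset.sum_sub_distrib, ← Finset.mul_sum]
        have : (Nn I V #A * #E / Z : ℝ) * ∑ σ ∈ E, Real.exp (lam * g σ) / #(cls E A σ) ≤
            Nn I V #A * #E / Z * (Z / Nn I V #A) := by gcongr
        have e : (Nn I V #A * #E / Z : ℝ) * (Z / Nn I V #A) = #E := by field_simp
        simp only [sum_const, nsmul_eq_mul, mul_one]
        linarith
    _ ≤ _ := by
        refine Finset.sum_le_sum fun σ hσ => ?_
        have hc := card_cls_pos (A := A) hσ
        have he := Real.exp_pos (lam * g σ)
        have hr : 0 < Nn I V #A * #E / Z * (Real.exp (lam * g σ) / #(cls E A σ)) := by positivity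
        have h1 := Real.log_le_sub_one_of_pos hr
        have h2 : Real.log (Nn I V #A * #E / Z * (Real.exp (lam * g σ) / #(cls E A σ))) =
            lam * g σ - Real.log (Z / Nn I V #F) - (Real.log (#(cls E A σ) / Nn I V #A) -
              Real.log (#E / Nn I V #F)) := by
          rw [Real.log_mul (by positivity) (by positivity), Real.log_div (by positivity) (by positivity),
            Real.log_div (by positivity) (by positivity), Real.log_div (by positivity) (by positivity),
            Real.log_div (by positivity) (by positivity), Real.log_div (by positivity) (by positivity),
            Real.log_mul (by positivity) (by positivity), Real.log_exp]
          ring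
        linarith

lemma row_gain (E : Finset (I ↪ V)) (hEne : E.Nonempty) (F A : Finset I) (hFA : F ⊆ A) (σ0 : I ↪ V)
    (hE : E ⊆ cls univ F σ0) (g : (I ↪ V) → ℝ) (h01 : ∀ σ, 0 ≤ g σ ∧ g σ ≤ 1)
    (hA : ∀ σ τ : I ↪ V, (∀ p ∈ A, τ p = σ p) → g τ = g σ) (lam : ℝ) :
    #E * (lam * ((∑ σ ∈ E, g σ) / #E - (∑ σ ∈ cls univ F σ0, g σ) / #(cls univ F σ0)) - lam ^ 2 / 8)
      ≤ LL E A - LL E F := by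
  have h1 := dv E hEne F A hFA σ0 hE g hA lam
  have hne : (cls univ F σ0).Nonempty := ⟨σ0, self_mem_cls (mem_univ _)⟩
  have h2 := hoeff (cls univ F σ0) hne g h01 lam
  have hCpos : (0:ℝ) < #(cls univ F σ0) := card_cls_pos (mem_univ _)
  have hEpos : (0:ℝ) < #E := by exact_mod_cast hEne.card_pos
  have hZ0 : 0 < ∑ σ ∈ cls univ F σ0, Real.exp (lam * g σ) :=
    Finset.sum_pos (fun _ _ => Real.exp_pos _) hne
  have h3 := Real.log_le_log (by positivity) h2
  rw [Real.log_exp] at h3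
  have h4 := mul_le_mul_of_nonneg_left h3 hEpos.le
  have e : (#E : ℝ) * (lam * ((∑ σ ∈ E, g σ) / #E)) = lam * ∑ σ ∈ E, g σ := by field_simp
  linarith

end dv

lemma avg_subset {ι : Type*} [DecidableEq ι] (d : ι → ℝ) (k : ℕ) (hk : 0 < k) (r : ℕ) (R : Finset ι)
    (hr : #R = r) (hkr : k ≤ r) :
    ∃ T ⊆ R, #T = k ∧ k * ∑ j ∈ R, d j ≤ r * ∑ j ∈ T, d j := by
  induction r generalizing R with
  | zero => omega
  | succ r ih =>
    rcases hkr.eq_or_lt with h | h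
    · exact ⟨R, subset_rfl, by omega, by rw [h]⟩
    · have hRne : R.Nonempty := card_pos.1 (by omega)
      obtain ⟨j, hj, hmin⟩ := R.exists_min_image d hRne
      obtain ⟨T, hT, hTk, hTs⟩ := ih (R.erase j) (by rw [card_erase_of_mem hj]; omega) (by omega)
      refine ⟨T, hT.trans (erase_subset _ _), hTk, ?_⟩
      have h1 : (#R : ℝ) * d j ≤ ∑ i ∈ R, d i := by
        rw [← nsmul_eq_mul]; exact Finset.card_nsmul_le_sum R d (d j) hmin
      have h2 := Finset.add_sum_erase R d hj
      rw [hr] at h1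
      push_cast at h1 ⊢
      have hr0 : (0:ℝ) < r := by
        have : 0 < r := by omega
        exact_mod_cast this
      have hk0 : (0:ℝ) < k := by exact_mod_cast hk
      refine le_of_mul_le_mul_left ?_ hr0
      have h3 : (r:ℝ) * ∑ i ∈ R, d i ≤ (r + 1) * ∑ i ∈ R.erase j, d i := by
        rw [← h2] at h1 ⊢; nlinarith
      calc (r:ℝ) * (k * ∑ i ∈ R, d i) = k * (r * ∑ i ∈ R, d i) := by ring
        _ ≤ k * ((r + 1) * ∑ i ∈ R.erase j, d i) := by gcongr
        _ = (r + 1) * (k * ∑ i ∈ R.erase j, d i) := by ring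
        _ ≤ (r + 1) * (r * ∑ i ∈ T, d i) := by gcongr
        _ = _ := by ring

lemma alg3 (lam x s r : ℝ) (r0 : 0 < r) (hlam : lam = 4 * s / r) :
    lam * (x * s) - x * r * (lam ^ 2 / 8) = x * (2 * s ^ 2 / r) := by
  rw [hlam]; field_simp; ring

section conc
variable {I V : Type*} [Fintype I] [DecidableEq I] [Fintype V] [DecidableEq V]

lemma conc {ι : Type*} [DecidableEq ι] (F : Finset I) (σ0 : I ↪ V) (row : ι → Finset I) (l : ℕ)
    (hl0 : 0 < l) (R : Finset ι) (hl : ∀ j ∈ R, #(row j) = l) (hF : ∀ j ∈ R, Disjoint F (row j))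
    (hdis : ∀ j ∈ R, ∀ k ∈ R, j ≠ k → Disjoint (row j) (row k))
    (hn : #R * l ≤ Fintype.card V - #F) (g : ι → (I ↪ V) → ℝ)
    (h01 : ∀ i σ, 0 ≤ g i σ ∧ g i σ ≤ 1)
    (hg : ∀ i ∈ R, ∀ σ τ : I ↪ V, (∀ p ∈ row i, τ p = σ p) → g i τ = g i σ) (s : ℝ) (hs : 4 ≤ s) :
    (#((cls univ F σ0).filter fun σ => (∑ τ ∈ cls univ F σ0, ∑ i ∈ R, g i τ) / #(cls univ F σ0) + s
      ≤ ∑ i ∈ R, g i σ) : ℝ) ≤ #(cls univ F σ0) * Real.exp (-(3 / 16 * s ^ 2 / #R)) := by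
  have hCpos : (0:ℝ) < #(cls univ F σ0) := card_cls_pos (mem_univ _)
  set CC := cls univ F σ0 with hCC
  set mu := (∑ τ ∈ CC, ∑ i ∈ R, g i τ) / #CC with hmu
  set E := CC.filter fun σ => mu + s ≤ ∑ i ∈ R, g i σ with hE
  rcases E.eq_empty_or_nonempty with h | hEne
  · rw [h]; simp only [card_empty, Nat.cast_zero]; positivity
  have hmu0 : 0 ≤ mu := div_nonneg (Finset.sum_nonneg fun τ _ => Finset.sum_nonneg fun i _ => (h01 i τ).1)
    hCpos.le
  have hEC : E ⊆ CC := filter_subset _ _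
  have hsr : s ≤ #R := by
    obtain ⟨σ, hσ⟩ := hEne
    have h1 := (mem_filter.1 hσ).2
    have h2 : ∑ i ∈ R, g i σ ≤ ∑ i ∈ R, (1:ℝ) := Finset.sum_le_sum fun i _ => (h01 i σ).2
    simp only [sum_const, nsmul_eq_mul, mul_one] at h2
    linarith
  have hEpos : (0:ℝ) < #E := by exact_mod_cast hEne.card_pos
  obtain ⟨r, hr⟩ : ∃ r, r = #R := ⟨_, rfl⟩
  rw [← hr] at hsr hn ⊢
  have hr4 : 4 ≤ r := by
    have : (4:ℝ) ≤ r := hs.trans hsr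
    exact_mod_cast this
  obtain ⟨i, hi⟩ : ∃ i, i = Nat.log 2 (r / 4) := ⟨_, rfl⟩
  have hk1 : 2 ^ i ≤ r / 4 := by rw [hi]; exact Nat.pow_log_le_self 2 (by omega)
  have hk2 : r / 4 < 2 ^ (i + 1) := by rw [hi]; exact Nat.lt_pow_succ_log_self (by norm_num) _
  obtain ⟨k, hk⟩ : ∃ k, k = 2 ^ i := ⟨_, rfl⟩
  rw [pow_succ, ← hk] at hk2
  rw [← hk] at hk1
  have hk0 : 0 < k := by omega
  have hk4 : 4 * k ≤ r := by omega
  have hk8 : r ≤ 8 * k := by omega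
  let d : ι → ℝ := fun j => (∑ σ ∈ E, g j σ) / #E - (∑ σ ∈ CC, g j σ) / #CC
  have hd : s ≤ ∑ j ∈ R, d j := by
    simp only [d]
    rw [Finset.sum_sub_distrib, ← Finset.sum_div, ← Finset.sum_div, Finset.sum_comm,
      Finset.sum_comm (s := R) (t := CC), ← hmu, le_sub_iff_add_le, le_div_iff₀ hEpos]
    calc (s + mu) * #E = ∑ σ ∈ E, (mu + s) := by simp; ring
      _ ≤ _ := Finset.sum_le_sum fun σ hσ => (mem_filter.1 hσ).2
  obtain ⟨T, hTR, hTk, hTs⟩ := avg_subset d k hk0 r R hr.symm (by omega)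
  obtain ⟨n, hnn⟩ : ∃ n, n = Fintype.card V - #F := ⟨_, rfl⟩
  rw [← hnn] at hn
  have hrl : 0 < r * l := Nat.mul_pos (by omega) hl0
  have hn0 : 0 < n := by omega
  have hrows := LL_rows E F row l n hnn hn0 i T (by rw [hTk, hk]) (fun j hj => hl j (hTR hj))
    (fun j hj => hF j (hTR hj)) (fun j hj k hk => hdis j (hTR hj) k (hTR hk))
  have hk' : ((2:ℝ) ^ i) = k := by rw [hk]; push_cast; rfl
  rw [hk'] at hrows
  have r0 : (0:ℝ) < r := by linarith
  have k0 : (0:ℝ) < k := by exact_mod_cast hk0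
  have l0 : (0:ℝ) < l := by exact_mod_cast hl0
  have n0 : (0:ℝ) < n := by exact_mod_cast hn0
  have hn' : (r:ℝ) * l ≤ n := by exact_mod_cast hn
  have k4 : 4 * (k:ℝ) ≤ r := by exact_mod_cast hk4
  have k8 : (r:ℝ) ≤ 8 * k := by exact_mod_cast hk8
  obtain ⟨x, hx⟩ : ∃ x : ℝ, x = k / r := ⟨_, rfl⟩
  have hkx : (k:ℝ) = x * r := by rw [hx]; field_simp
  have x1 : 1 / 8 ≤ x := by rw [hx, le_div_iff₀ r0]; linarith
  have x2 : x ≤ 1 / 4 := by rw [hx, div_le_iff₀ r0]; linarith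
  obtain ⟨lam, hlam⟩ : ∃ lam : ℝ, lam = 4 * s / r := ⟨_, rfl⟩
  have hlr : lam * r = 4 * s := by rw [hlam]; field_simp
  have lam0 : 0 < lam := by rw [hlam]; positivity
  have hg1 : ∀ j ∈ T, #E * (lam * d j - lam ^ 2 / 8) ≤ LL E (F ∪ row j) - LL E F := fun j hj =>
    row_gain E hEne F (F ∪ row j) subset_union_left σ0 hEC (g j) (h01 j)
      (fun σ τ h => hg j (hTR hj) σ τ fun p hp => h p (mem_union_right _ hp)) lam
  have hg2 := Finset.sum_le_sum hg1
  rw [← Finset.mul_sum, Finset.sum_sub_distrib, ← Finset.mul_sum, sum_const, hTk, nsmul_eq_mul] at hg2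
  have hTd : x * s ≤ ∑ j ∈ T, d j := by
    rw [hkx] at hTs
    have : x * r * s ≤ x * r * ∑ j ∈ R, d j := by gcongr
    refine le_of_mul_le_mul_left ?_ r0
    linarith
  have hS : 0 ≤ ∑ j ∈ T, (LL E (F ∪ row j) - LL E F) :=
    Finset.sum_nonneg fun j _ => sub_nonneg.2 (LL_mono E subset_union_left)
  have hx' : 1 - 2 * x ≤ 1 - 2 * (k * l : ℝ) / n := by
    have : (2 * (k * l : ℝ)) / n ≤ 2 * x := by
      rw [div_le_iff₀ n0, hkx]; nlinarith
    linarith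
  have hup : LL E (F ∪ T.biUnion row) ≤ LL E univ := LL_mono E (subset_univ _)
  have hun : LL E univ = 0 := by
    unfold LL
    refine Finset.sum_eq_zero fun σ hσ => ?_
    have : cls E univ σ = {σ} := by
      ext τ
      simp only [mem_cls, mem_univ, true_imp_iff, mem_singleton]
      constructor
      · rintro ⟨_, h⟩; exact DFunLike.ext _ _ h
      · rintro rfl; exact ⟨hσ, fun _ => rfl⟩
    rw [this]; simp [Nn]
  have hEF : LL E F = #E * Real.log (#E / #CC) := by
    rw [hCC, card_cls_univ, LL, ← nsmul_eq_mul, ← sum_const]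
    refine Finset.sum_congr rfl fun σ hσ => ?_
    have : cls E F σ = E := by
      refine Finset.filter_true_of_mem fun τ hτ p hp => ?_
      rw [(mem_cls.1 (hEC hτ)).2 p hp, (mem_cls.1 (hEC hσ)).2 p hp]
    rw [this]
  have h1 : (1 - 2 * x) * (#E * (lam * (x * s) - x * r * (lam ^ 2 / 8))) ≤ - LL E F := by
    calc (1 - 2 * x) * (#E * (lam * (x * s) - x * r * (lam ^ 2 / 8)))
        ≤ (1 - 2 * x) * ∑ j ∈ T, (LL E (F ∪ row j) - LL E F) := by
          refine mul_le_mul_of_nonneg_left (le_trans ?_ hg2) (by linarith)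
          rw [hkx]
          exact mul_le_mul_of_nonneg_left (sub_le_sub_right
            (mul_le_mul_of_nonneg_left hTd lam0.le) _) hEpos.le
      _ ≤ (1 - 2 * (k * l : ℝ) / n) * ∑ j ∈ T, (LL E (F ∪ row j) - LL E F) :=
          mul_le_mul_of_nonneg_right hx' hS
      _ ≤ _ := hrows
      _ ≤ _ := by linarith
  rw [hEF, ← mul_neg, mul_left_comm] at h1
  have h2 := le_of_mul_le_mul_left h1 hEpos
  have h3 : lam * (x * s) - x * r * (lam ^ 2 / 8) = x * (2 * s ^ 2 / r) := by
    exact alg3 lam x s r r0 hlam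
  rw [h3] at h2
  have hq : 0 ≤ 2 * s ^ 2 / r := by positivity
  have h4 : 3 / 32 * (2 * s ^ 2 / r) ≤ (1 - 2 * x) * (x * (2 * s ^ 2 / r)) := by
    rw [← mul_assoc]
    refine mul_le_mul_of_nonneg_right ?_ hq
    nlinarith [mul_nonneg (sub_nonneg.2 x1) (sub_nonneg.2 x2)]
  have h5 : Real.log (#E / #CC) ≤ -(3 / 16 * s ^ 2 / r) := by
    have : 3 / 32 * (2 * s ^ 2 / r) = 3 / 16 * s ^ 2 / r := by ring
    linarith
  rw [Real.log_le_iff_le_exp (div_pos hEpos hCpos), div_le_iff₀ hCpos] at h5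
  linarith

lemma conc_lower {ι : Type*} [DecidableEq ι] (F : Finset I) (σ0 : I ↪ V) (row : ι → Finset I) (l : ℕ)
    (hl0 : 0 < l) (R : Finset ι) (hl : ∀ j ∈ R, #(row j) = l) (hF : ∀ j ∈ R, Disjoint F (row j))
    (hdis : ∀ j ∈ R, ∀ k ∈ R, j ≠ k → Disjoint (row j) (row k))
    (hn : #R * l ≤ Fintype.card V - #F) (g : ι → (I ↪ V) → ℝ)
    (h01 : ∀ i σ, 0 ≤ g i σ ∧ g i σ ≤ 1)
    (hg : ∀ i ∈ R, ∀ σ τ : I ↪ V, (∀ p ∈ row i, τ p = σ p) → g i τ = g i σ) (s : ℝ) (hs : 4 ≤ s) :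
    (#((cls univ F σ0).filter fun σ => ∑ i ∈ R, g i σ ≤
      (∑ τ ∈ cls univ F σ0, ∑ i ∈ R, g i τ) / #(cls univ F σ0) - s) : ℝ)
      ≤ #(cls univ F σ0) * Real.exp (-(3 / 16 * s ^ 2 / #R)) := by
  have h := conc F σ0 row l hl0 R hl hF hdis hn (fun i σ => 1 - g i σ)
    (fun i σ => ⟨by linarith [(h01 i σ).2], by linarith [(h01 i σ).1]⟩)
    (fun i hi σ τ h => by simp only [hg i hi σ τ h]) s hs
  have hCpos : (0:ℝ) < #(cls univ F σ0) := card_cls_pos (mem_univ _)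
  refine le_trans (le_of_eq ?_) h
  congr 2
  refine Finset.filter_congr fun σ _ => ?_
  simp only [Finset.sum_sub_distrib, sum_const, nsmul_eq_mul, mul_one, sub_div]
  have : (#(cls univ F σ0) * (#R : ℝ)) / #(cls univ F σ0) = #R := by field_simp
  rw [this]
  constructor <;> intro h <;> linarith

end conc

section rows
variable {t l : ℕ} {V : Type*} [Fintype V] [DecidableEq V]

/-- the `i`-th row of the index set -/
def rwo (t l : ℕ) (i : Fin t) : Finset (Fin t × Fin l) := univ.filter fun p => p.1 = i

lemma mem_rwo {i : Fin t} {p : Fin t × Fin l} : p ∈ rwo t l i ↔ p.1 = i := by simp [rwo]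

lemma card_rwo (i : Fin t) : #(rwo t l i) = l := by
  have : rwo t l i = ({i} : Finset (Fin t)) ×ˢ (univ : Finset (Fin l)) := by
    ext p; simp only [mem_rwo, mem_product, mem_singleton, mem_univ, and_true]
  rw [this, card_product]; simp

lemma disj_rwo {i j : Fin t} (h : i ≠ j) : Disjoint (rwo t l i) (rwo t l j) := by
  rw [disjoint_left]
  intro p hp hq
  exact h ((mem_rwo.1 hp).symm.trans (mem_rwo.1 hq))

/-- indicator that row `i` is mapped into the family -/
def gi (Q : Finset (Finset V)) (i : Fin t) (σ : Fin t × Fin l ↪ V) : ℝ :=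
  if (rwo t l i).image σ ∈ Q then 1 else 0

/-- number of rows mapped into the family -/
def eta (Q : Finset (Finset V)) (σ : Fin t × Fin l ↪ V) : ℝ := ∑ i, gi Q i σ

lemma gi_01 (Q : Finset (Finset V)) (i : Fin t) (σ : Fin t × Fin l ↪ V) :
    0 ≤ gi Q i σ ∧ gi Q i σ ≤ 1 := by
  unfold gi; split_ifs <;> norm_num

lemma gi_congr (Q : Finset (Finset V)) (i : Fin t) (σ τ : Fin t × Fin l ↪ V)
    (h : ∀ p ∈ rwo t l i, τ p = σ p) : gi Q i τ = gi Q i σ := by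
  unfold gi
  rw [Finset.image_congr (g := σ) (fun p hp => h p hp)]

/-- at most one row is partially revealed -/
def good (F : Finset (Fin t × Fin l)) (i0 : Fin t) : Prop :=
  ∀ i, i ≠ i0 → rwo t l i ⊆ F ∨ Disjoint F (rwo t l i)

lemma good_step (F : Finset (Fin t × Fin l)) (i0 : Fin t) (h : good F i0) (hF : F ≠ univ) :
    ∃ p i1, p ∉ F ∧ good (insert p F) i1 := by
  by_cases h0 : rwo t l i0 ⊆ F
  · obtain ⟨p, hp⟩ : ∃ p, p ∉ F := by
      by_contra! h; exact hF (by ext; simp [h])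
    refine ⟨p, p.1, hp, fun i hi => ?_⟩
    by_cases hi0 : i = i0
    · left; rw [hi0]; exact h0.trans (subset_insert _ _)
    rcases h i hi0 with h1 | h1
    · left; exact h1.trans (subset_insert _ _)
    · right; rw [disjoint_insert_left]
      exact ⟨fun h => hi (mem_rwo.1 h).symm, h1⟩
  · obtain ⟨p, hp, hpF⟩ := not_subset.1 h0
    refine ⟨p, i0, hpF, fun i hi => ?_⟩
    rcases h i hi with h1 | h1
    · left; exact h1.trans (subset_insert _ _)
    · right; rw [disjoint_insert_left]
      exact ⟨fun h => hi ((mem_rwo.1 h).symm.trans (mem_rwo.1 hp)), h1⟩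

lemma gi_sw (Q : Finset (Finset V)) (i : Fin t) (σ : Fin t × Fin l ↪ V) (v w : V) :
    gi Q i σ - (if v ∈ (rwo t l i).image σ then 1 else 0) -
      (if w ∈ (rwo t l i).image σ then 1 else 0) ≤ gi Q i (sw v w σ) := by
  have h1 := gi_01 Q i σ
  have h2 := gi_01 Q i (sw v w σ)
  by_cases hv : v ∈ (rwo t l i).image σ
  · rw [if_pos hv]; split_ifs <;> linarith
  by_cases hw : w ∈ (rwo t l i).image σ
  · rw [if_pos hw]; split_ifs <;> linarith
  rw [if_neg hv, if_neg hw, gi_congr Q i σ (sw v w σ)]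
  · simp
  · intro p hp
    rw [sw_apply, Equiv.swap_apply_of_ne_of_ne]
    · exact fun h => hv (mem_image.2 ⟨p, hp, h⟩)
    · exact fun h => hw (mem_image.2 ⟨p, hp, h⟩)

lemma sum_ind_le (σ : Fin t × Fin l ↪ V) (v : V) :
    ∑ i : Fin t, (if v ∈ (rwo t l i).image σ then (1:ℝ) else 0) ≤ 1 := by
  rw [Finset.sum_boole]
  have : #(univ.filter fun i : Fin t => v ∈ (rwo t l i).image σ) ≤ 1 := by
    rw [Finset.card_le_one]
    intro i hi j hj
    obtain ⟨p, hp, h1⟩ := mem_image.1 (mem_filter.1 hi).2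
    obtain ⟨q, hq, h2⟩ := mem_image.1 (mem_filter.1 hj).2
    have : p = q := σ.injective (h1.trans h2.symm)
    rw [← mem_rwo.1 hp, this, mem_rwo.1 hq]
  exact_mod_cast this

lemma eta_sw (Q : Finset (Finset V)) (σ : Fin t × Fin l ↪ V) (v w : V) :
    eta Q σ - 2 ≤ eta Q (sw v w σ) := by
  have h := Finset.sum_le_sum fun i (_ : i ∈ (univ : Finset (Fin t))) => gi_sw Q i σ v w
  rw [Finset.sum_sub_distrib, Finset.sum_sub_distrib] at h
  have h1 := sum_ind_le σ v
  have h2 := sum_ind_le σ w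
  unfold eta
  linarith

/-- conditional expectation of `eta` -/
noncomputable def av (Q : Finset (Finset V)) (F : Finset (Fin t × Fin l)) (σ0 : Fin t × Fin l ↪ V) : ℝ :=
  (∑ τ ∈ cls univ F σ0, eta Q τ) / #(cls univ F σ0)

lemma av_jump (Q : Finset (Finset V)) (F : Finset (Fin t × Fin l)) (x : Fin t × Fin l) (hx : x ∉ F)
    (σ : Fin t × Fin l ↪ V) : av Q (insert x F) σ ≤ av Q F σ + 2 := by
  have hx' : ∀ p ∈ F, σ p ≠ σ x := fun p hp h => hx (σ.injective h ▸ hp)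
  have key : ∀ v ∈ avail F σ, ∑ τ ∈ cls univ (insert x F) σ, (eta Q τ - 2) ≤
      ∑ τ ∈ (cls univ F σ).filter (fun τ => τ x = v), eta Q τ := by
    intro v hv'
    have hv := mem_avail.1 hv'
    have e : ∑ τ ∈ (cls univ F σ).filter (fun τ => τ x = v), eta Q τ =
        ∑ τ ∈ cls univ (insert x F) σ, eta Q (sw (σ x) v τ) := by
      refine Finset.sum_nbij' (fun τ => sw (σ x) v τ) (fun τ => sw (σ x) v τ) ?_ ?_ ?_ ?_ ?_
      · intro τ hτ
        simp only [mem_filter, mem_cls, mem_univ, true_and, mem_insert, forall_eq_or_imp] at hτ ⊢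
        refine ⟨by rw [sw_apply, hτ.2, Equiv.swap_apply_right], fun p hp => ?_⟩
        rw [sw_apply, hτ.1 p hp, Equiv.swap_apply_of_ne_of_ne (hx' p hp) (hv p hp)]
      · intro τ hτ
        simp only [mem_filter, mem_cls, mem_univ, true_and, mem_insert, forall_eq_or_imp] at hτ ⊢
        refine ⟨fun p hp => ?_, by rw [sw_apply, hτ.1, Equiv.swap_apply_left]⟩
        rw [sw_apply, hτ.2 p hp, Equiv.swap_apply_of_ne_of_ne (hx' p hp) (hv p hp)]
      · intro τ _; exact sw_sw _ _ _
      · intro τ _; exact sw_sw _ _ _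
      · intro τ _; rw [sw_sw]
    rw [e]
    exact Finset.sum_le_sum fun τ _ => eta_sw Q τ _ _
  have h := Finset.sum_le_sum key
  rw [Finset.sum_fiberwise_of_maps_to (fun τ hτ => val_mem_avail hx hτ), sum_const, card_avail,
    Finset.sum_sub_distrib, sum_const] at h
  simp only [nsmul_eq_mul] at h
  have hc := card_cls_step F x hx σ
  have hc' : (#(cls univ F σ) : ℝ) = ((Fintype.card V - #F : ℕ) : ℝ) * #(cls univ (insert x F) σ) := by
    exact_mod_cast hc
  have p1 : (0:ℝ) < #(cls univ F σ) := card_cls_pos (mem_univ _)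
  have p2 : (0:ℝ) < #(cls univ (insert x F) σ) := card_cls_pos (mem_univ _)
  unfold av
  rw [← sub_le_iff_le_add, le_div_iff₀ p1, hc']
  refine le_trans (le_of_eq ?_) h
  field_simp

end rows

section stopped
variable {t l : ℕ} {V : Type*} [Fintype V] [DecidableEq V]

lemma conc2 (Q : Finset (Finset V)) (hl : 0 < l) (ht : 0 < t) (F : Finset (Fin t × Fin l))
    (σ0 : Fin t × Fin l ↪ V) (R : Finset (Fin t)) (hR : ∀ i ∈ R, Disjoint F (rwo t l i))
    (s : ℝ) (hs : 4 ≤ s) :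
    (#((cls univ F σ0).filter fun σ => (∑ τ ∈ cls univ F σ0, ∑ i ∈ R, gi Q i τ) / #(cls univ F σ0) + s
      ≤ ∑ i ∈ R, gi Q i σ) : ℝ) ≤ #(cls univ F σ0) * Real.exp (-(3 / 16 * s ^ 2 / t)) ∧
    (#((cls univ F σ0).filter fun σ => ∑ i ∈ R, gi Q i σ ≤
      (∑ τ ∈ cls univ F σ0, ∑ i ∈ R, gi Q i τ) / #(cls univ F σ0) - s) : ℝ)
      ≤ #(cls univ F σ0) * Real.exp (-(3 / 16 * s ^ 2 / t)) := by
  rcases R.eq_empty_or_nonempty with rfl | hRne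
  · have h1 : ¬ (s ≤ 0) := by linarith
    simp only [sum_empty, sum_const_zero, zero_div, zero_add, zero_sub, Left.nonneg_neg_iff, h1,
      filter_false, card_empty, Nat.cast_zero]
    constructor <;> positivity
  have hn : #R * l ≤ Fintype.card V - #F := by
    have h1 : #(F ∪ R.biUnion (rwo t l)) = #F + #R * l := by
      rw [card_union_of_disjoint ((disjoint_biUnion_right _ _ _).2 hR),
        card_biUnion fun i _ j _ h => disj_rwo h, sum_congr rfl fun i _ => card_rwo i, sum_const,
        smul_eq_mul]
    have h2 := card_le_univ (F ∪ R.biUnion (rwo t l))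
    have h3 := Fintype.card_le_of_embedding σ0
    omega
  have hc : (#R : ℝ) ≤ t := by
    have := card_le_univ R
    rw [Fintype.card_fin] at this
    exact_mod_cast this
  have hRpos : (0:ℝ) < #R := by exact_mod_cast hRne.card_pos
  have hexp : Real.exp (-(3 / 16 * s ^ 2 / #R)) ≤ Real.exp (-(3 / 16 * s ^ 2 / t)) := by
    rw [Real.exp_le_exp, neg_le_neg_iff]; gcongr
  have hm := mul_le_mul_of_nonneg_left hexp (Nat.cast_nonneg (α := ℝ) #(cls univ F σ0))
  exact ⟨(conc F σ0 (rwo t l) l hl R (fun i _ => card_rwo i) hR (fun i _ j _ h => disj_rwo h) hn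
      (gi Q) (gi_01 Q) (fun i _ => gi_congr Q i) s hs).trans hm,
    (conc_lower F σ0 (rwo t l) l hl R (fun i _ => card_rwo i) hR (fun i _ j _ h => disj_rwo h) hn
      (gi Q) (gi_01 Q) (fun i _ => gi_congr Q i) s hs).trans hm⟩

/-- `eta` deviates from its conditional mean like its unrevealed part, up to one -/
lemma dev (Q : Finset (Finset V)) (F : Finset (Fin t × Fin l)) (i0 : Fin t) (hg : good F i0)
    (σ0 : Fin t × Fin l ↪ V) (R : Finset (Fin t)) (hR : R = univ.filter fun i => Disjoint F (rwo t l i))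
    (σ : Fin t × Fin l ↪ V) (hσ : σ ∈ cls univ F σ0) :
    |(eta Q σ - av Q F σ0) - (∑ i ∈ R, gi Q i σ -
      (∑ τ ∈ cls univ F σ0, ∑ i ∈ R, gi Q i τ) / #(cls univ F σ0))| ≤ 1 := by
  have p1 : (0:ℝ) < #(cls univ F σ0) := card_cls_pos (mem_univ _)
  have hsplit : ∀ τ : Fin t × Fin l ↪ V, eta Q τ = ∑ i ∈ R, gi Q i τ + ∑ i ∈ Rᶜ, gi Q i τ := fun τ =>
    (Finset.sum_add_sum_compl R _).symm
  have hrest : ∀ τ ∈ cls univ F σ0, |∑ i ∈ Rᶜ, gi Q i σ - ∑ i ∈ Rᶜ, gi Q i τ| ≤ 1 := by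
    intro τ hτ
    rw [← Finset.sum_sub_distrib]
    calc |∑ i ∈ Rᶜ, (gi Q i σ - gi Q i τ)| ≤ ∑ i ∈ Rᶜ, |gi Q i σ - gi Q i τ| :=
          Finset.abs_sum_le_sum_abs _ _
      _ ≤ ∑ i ∈ Rᶜ, (if i = i0 then (1:ℝ) else 0) := by
          refine Finset.sum_le_sum fun i hi => ?_
          split_ifs with h
          · have h1 := gi_01 Q i σ
            have h2 := gi_01 Q i τ
            rw [abs_le]; constructor <;> linarith
          · have hi' : ¬ Disjoint F (rwo t l i) := by
              rw [mem_compl, hR, mem_filter] at hi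
              exact fun h => hi ⟨mem_univ _, h⟩
            have hsub := (hg i h).resolve_right hi'
            rw [gi_congr Q i σ τ, sub_self, abs_zero]
            intro p hp
            rw [(mem_cls.1 hτ).2 p (hsub hp), (mem_cls.1 hσ).2 p (hsub hp)]
      _ ≤ 1 := by
          rw [Finset.sum_ite_eq']; split_ifs <;> norm_num
  have e : (eta Q σ - av Q F σ0) - (∑ i ∈ R, gi Q i σ -
      (∑ τ ∈ cls univ F σ0, ∑ i ∈ R, gi Q i τ) / #(cls univ F σ0)) =
      (∑ τ ∈ cls univ F σ0, (∑ i ∈ Rᶜ, gi Q i σ - ∑ i ∈ Rᶜ, gi Q i τ)) / #(cls univ F σ0) := by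
    unfold av
    simp_rw [hsplit]
    simp only [Finset.sum_add_distrib, Finset.sum_sub_distrib, sum_const, nsmul_eq_mul]
    field_simp
    ring
  rw [e, abs_div, abs_of_pos p1, div_le_one p1]
  calc _ ≤ ∑ τ ∈ cls univ F σ0, |∑ i ∈ Rᶜ, gi Q i σ - ∑ i ∈ Rᶜ, gi Q i τ| :=
        Finset.abs_sum_le_sum_abs _ _
    _ ≤ ∑ τ ∈ cls univ F σ0, (1:ℝ) := Finset.sum_le_sum hrest
    _ = _ := by simp

/-- the test function -/
noncomputable def phi (Q : Finset (Finset V)) (b kap : ℝ) (σ : Fin t × Fin l ↪ V) : ℝ :=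
  kap * (if |eta Q σ - 2 * b| ≤ b then 1 else 0) - (if 4 * b ≤ eta Q σ then 1 else 0)

lemma stop_step (Q : Finset (Finset V)) (hl : 0 < l) (ht : 0 < t) (F : Finset (Fin t × Fin l))
    (i0 : Fin t) (hg : good F i0) (σ0 : Fin t × Fin l ↪ V) (b : ℝ) (hb : 32 ≤ b)
    (hbt : 16 ≤ b ^ 2 / t) (h1 : 2 * b - 2 ≤ av Q F σ0) (h2 : av Q F σ0 ≤ 2 * b) :
    0 ≤ ∑ σ ∈ cls univ F σ0, phi Q b (2 * Real.exp (-(b ^ 2 / t) / 2)) σ := by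
  have t0 : (0:ℝ) < t := by exact_mod_cast ht
  obtain ⟨R, hR⟩ : ∃ R : Finset (Fin t), R = univ.filter fun i => Disjoint F (rwo t l i) := ⟨_, rfl⟩
  have hR' : ∀ i ∈ R, Disjoint F (rwo t l i) := fun i hi => by
    rw [hR] at hi; exact (mem_filter.1 hi).2
  have hdev := dev Q F i0 hg σ0 R hR
  have c1 := (conc2 Q hl ht F σ0 R hR' (2 * b - 1) (by linarith)).1
  have c2 := conc2 Q hl ht F σ0 R hR' (b - 3) (by linarith)
  have p1 : (0:ℝ) < #(cls univ F σ0) := card_cls_pos (mem_univ _)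
  set CC := cls univ F σ0 with hCC
  set mu := (∑ τ ∈ CC, ∑ i ∈ R, gi Q i τ) / #CC with hmu
  have hbig : (#(CC.filter fun σ => 4 * b ≤ eta Q σ) : ℝ) ≤ #CC * Real.exp (-(b ^ 2 / t) / 2) := by
    refine le_trans ?_ (c1.trans ?_)
    · refine Nat.cast_le.2 (card_le_card fun σ hσ => ?_)
      rw [mem_filter] at hσ ⊢
      refine ⟨hσ.1, ?_⟩
      have := abs_le.1 (hdev σ hσ.1)
      linarith
    · refine mul_le_mul_of_nonneg_left ?_ p1.le
      rw [Real.exp_le_exp]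
      have : b ^ 2 / 2 ≤ 3 / 16 * (2 * b - 1) ^ 2 := by nlinarith
      have h3 := div_le_div_of_nonneg_right this t0.le
      have e : -(b ^ 2 / t) / 2 = - (b ^ 2 / 2 / t) := by ring
      rw [e]; linarith
  have hq : Real.exp (-(3 / 16 * (b - 3) ^ 2 / t)) ≤ 1 / 4 := by
    have h3 : 3 / 4 * b ^ 2 ≤ (b - 3) ^ 2 := by nlinarith
    have h4 : 2 ≤ 3 / 16 * (b - 3) ^ 2 / t := by
      have h5 : 3 / 16 * (3 / 4 * b ^ 2) / t ≤ 3 / 16 * (b - 3) ^ 2 / t := by gcongr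
      have h6 : 3 / 16 * (3 / 4 * b ^ 2) / t = 9 / 64 * (b ^ 2 / t) := by ring
      linarith
    have h5 : (4:ℝ) ≤ Real.exp 2 := by
      have : Real.exp 2 = Real.exp 1 * Real.exp 1 := by rw [← Real.exp_add]; norm_num
      have h6 := Real.exp_one_gt_d9
      rw [this]; nlinarith
    calc _ ≤ Real.exp (-2) := by rw [Real.exp_le_exp]; linarith
      _ = (Real.exp 2)⁻¹ := Real.exp_neg 2
      _ ≤ 4⁻¹ := by gcongr
      _ = _ := by norm_num
  have hmid : (#CC : ℝ) / 2 ≤ #(CC.filter fun σ => |eta Q σ - 2 * b| ≤ b) := by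
    have hcov : CC ⊆ (CC.filter fun σ => |eta Q σ - 2 * b| ≤ b) ∪
        ((CC.filter fun σ => mu + (b - 3) ≤ ∑ i ∈ R, gi Q i σ) ∪
          (CC.filter fun σ => ∑ i ∈ R, gi Q i σ ≤ mu - (b - 3))) := by
      intro σ hσ
      simp only [mem_union, mem_filter, hσ, true_and]
      by_cases h : |eta Q σ - 2 * b| ≤ b
      · exact Or.inl h
      right
      have := abs_le.1 (hdev σ hσ)
      rw [abs_le, not_and_or] at h
      rcases h with h | h
      · right; push Not at h; linarith
      · left; push Not at h; linarith
    have h3 := (card_le_card hcov).trans ((card_union_le _ _).trans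
      (Nat.add_le_add_left (card_union_le _ _) _))
    have h4 : (#CC : ℝ) ≤ #(CC.filter fun σ => |eta Q σ - 2 * b| ≤ b) +
        (#(CC.filter fun σ => mu + (b - 3) ≤ ∑ i ∈ R, gi Q i σ) +
          #(CC.filter fun σ => ∑ i ∈ R, gi Q i σ ≤ mu - (b - 3))) := by exact_mod_cast h3
    have h5 := mul_le_mul_of_nonneg_left hq p1.le
    linarith [c2.1, c2.2]
  unfold phi
  rw [Finset.sum_sub_distrib, ← Finset.mul_sum, Finset.sum_boole, Finset.sum_boole]
  have he := Real.exp_pos (-(b ^ 2 / t) / 2)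
  nlinarith

lemma walk (Q : Finset (Finset V)) (hl : 0 < l) (ht : 0 < t) (b : ℝ) (hb : 32 ≤ b)
    (hbt : 16 ≤ b ^ 2 / t) (d : ℕ) : ∀ (F : Finset (Fin t × Fin l)) (i0 : Fin t), good F i0 →
    ∀ σ0 : Fin t × Fin l ↪ V, #F + d = t * l → av Q F σ0 < 2 * b - 2 →
    0 ≤ ∑ σ ∈ cls univ F σ0, phi Q b (2 * Real.exp (-(b ^ 2 / t) / 2)) σ := by
  induction d with
  | zero =>
    intro F i0 hg σ0 hd hav
    have hF : F = univ := by
      rw [← Finset.card_eq_iff_eq_univ]; simpa using hd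
    have hc : cls univ F σ0 = {σ0} := by
      ext τ
      simp [mem_cls, hF, DFunLike.ext_iff]
    rw [av, hc] at hav
    simp only [sum_singleton, card_singleton, Nat.cast_one, div_one] at hav
    rw [hc, sum_singleton, phi, if_neg (show ¬ (4 * b ≤ eta Q σ0) by linarith), sub_zero]
    split_ifs <;> positivity
  | succ d ih =>
    intro F i0 hg σ0 hd hav
    have hF : F ≠ univ := by
      rintro rfl
      rw [card_univ, Fintype.card_prod, Fintype.card_fin, Fintype.card_fin] at hd
      omega
    obtain ⟨p, i1, hp, hg1⟩ := good_step F i0 hg hF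
    apply sum_class_nonneg _ (insert p F)
    intro σ hσ
    have hσF := (mem_cls.1 hσ).2
    have e : cls (cls univ F σ0) (insert p F) σ = cls univ (insert p F) σ := by
      ext τ
      simp only [mem_cls, mem_univ, true_and, mem_insert, forall_eq_or_imp]
      constructor
      · exact fun h => h.2
      · exact fun h => ⟨fun q hq => by rw [h.2 q hq, hσF q hq], h⟩
    rw [e]
    have hav2 : av Q F σ = av Q F σ0 := by unfold av; rw [cls_congr hσF]
    have hj := av_jump Q F p hp σ
    by_cases h : av Q (insert p F) σ < 2 * b - 2
    · exact ih (insert p F) i1 hg1 σ (by rw [card_insert_of_notMem hp]; omega) h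
    · push Not at h
      exact stop_step Q hl ht (insert p F) i1 hg1 σ b hb hbt h (by linarith)

end stopped

lemma perm_ext {J V : Type*} [Fintype J] [Fintype V] [DecidableEq V] (a b : J ↪ V) :
    ∃ e : Equiv.Perm V, ∀ j, e (a j) = b j := by
  classical
  let f : {x // x ∈ Set.range a} ≃ {x // x ∈ Set.range b} :=
    (Equiv.ofInjective a a.injective).symm.trans (Equiv.ofInjective b b.injective)
  refine ⟨f.extendSubtype, fun j => ?_⟩
  rw [Equiv.extendSubtype_apply_of_mem f (a j) ⟨j, rfl⟩]
  have : (⟨a j, ⟨j, rfl⟩⟩ : {x // x ∈ Set.range a}) = Equiv.ofInjective a a.injective j := rfl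
  simp only [f, Equiv.trans_apply]
  rw [this, Equiv.symm_apply_apply]
  rfl

section trans
variable {t l : ℕ} {V : Type*} [Fintype V] [DecidableEq V]

lemma image_comp_perm (e : Equiv.Perm V) (τ : Fin t × Fin l ↪ V) (A : Finset (Fin t × Fin l)) :
    A.image (τ.trans e.toEmbedding) = (A.image τ).image e := by
  rw [Finset.image_image]; rfl

lemma card_row_fiber (i : Fin t) (S S' : Finset V) (hS : #S = l) (hS' : #S' = l) :
    #(univ.filter fun σ : Fin t × Fin l ↪ V => (rwo t l i).image σ = S) =
    #(univ.filter fun σ : Fin t × Fin l ↪ V => (rwo t l i).image σ = S') := by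
  have key : ∃ e : Equiv.Perm V, S.image e = S' := by
    obtain ⟨e, he⟩ := perm_ext
      ((S.equivFinOfCardEq hS).symm.toEmbedding.trans (Function.Embedding.subtype _))
      ((S'.equivFinOfCardEq hS').symm.toEmbedding.trans (Function.Embedding.subtype _))
    refine ⟨e, Finset.eq_of_subset_of_card_le (fun x hx => ?_) ?_⟩
    · obtain ⟨y, hy, rfl⟩ := mem_image.1 hx
      have := he (S.equivFinOfCardEq hS ⟨y, hy⟩)
      simp only [Function.Embedding.trans_apply, Equiv.coe_toEmbedding, Equiv.symm_apply_apply,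
        Function.Embedding.subtype_apply] at this
      rw [this]; exact Subtype.property _
    · rw [card_image_of_injective _ e.injective, hS, hS']
  obtain ⟨e, rfl⟩ := key
  refine Finset.card_bij' (fun τ _ => τ.trans e.toEmbedding) (fun τ _ => τ.trans e.symm.toEmbedding)
    ?_ ?_ ?_ ?_
  · intro τ hτ
    rw [mem_filter] at hτ ⊢
    exact ⟨mem_univ _, by rw [image_comp_perm, hτ.2]⟩
  · intro τ hτ
    rw [mem_filter] at hτ ⊢
    refine ⟨mem_univ _, ?_⟩
    rw [image_comp_perm, hτ.2, Finset.image_image]; simp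
  · intro τ _; ext p; simp
  · intro τ _; ext p; simp

lemma sum_gi (Q : Finset (Finset V)) (hQ : Q ⊆ univ.powersetCard l) (i : Fin t) :
    (∑ σ : Fin t × Fin l ↪ V, gi Q i σ) * ((Fintype.card V).choose l) =
      #Q * (Fintype.card (Fin t × Fin l ↪ V) : ℝ) := by
  unfold gi
  rw [Finset.sum_boole]
  have hcard : ∀ σ : Fin t × Fin l ↪ V, #((rwo t l i).image σ) = l := fun σ => by
    rw [card_image_of_injective _ σ.injective, card_rwo]
  rcases Q.eq_empty_or_nonempty with rfl | ⟨S0, hS0⟩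
  · simp
  have hmem : ∀ S : Finset V, S ∈ univ.powersetCard l → #S = l := fun S hS => (mem_powersetCard.1 hS).2
  have h1 : #(univ.filter fun σ : Fin t × Fin l ↪ V => (rwo t l i).image σ ∈ Q) =
      #Q * #(univ.filter fun σ : Fin t × Fin l ↪ V => (rwo t l i).image σ = S0) := by
    rw [Finset.card_eq_sum_card_fiberwise (f := fun σ : Fin t × Fin l ↪ V => (rwo t l i).image σ)
      (s := univ.filter fun σ : Fin t × Fin l ↪ V => (rwo t l i).image σ ∈ Q)
      (t := Q) (fun σ hσ => (mem_filter.1 hσ).2), ← smul_eq_mul, ← sum_const]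
    refine Finset.sum_congr rfl fun S hS => ?_
    rw [card_row_fiber i S0 S (hmem _ (hQ hS0)) (hmem _ (hQ hS)), Finset.filter_filter]
    congr 1
    refine Finset.filter_congr fun σ _ => ?_
    constructor
    · exact fun h => h.2
    · exact fun h => ⟨h ▸ hS, h⟩
  have h2 : Fintype.card (Fin t × Fin l ↪ V) = (Fintype.card V).choose l *
      #(univ.filter fun σ : Fin t × Fin l ↪ V => (rwo t l i).image σ = S0) := by
    rw [← card_univ, Finset.card_eq_sum_card_fiberwise
      (f := fun σ : Fin t × Fin l ↪ V => (rwo t l i).image σ)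
      (t := univ.powersetCard l) (fun σ _ => mem_powersetCard.2 ⟨subset_univ _, hcard σ⟩),
      ← card_univ (α := V), ← card_powersetCard, ← smul_eq_mul, ← sum_const]
    exact Finset.sum_congr rfl fun S hS => card_row_fiber i S S0 (hmem _ hS) (hmem _ (hQ hS0))
  rw [h1, h2]
  push_cast
  ring

lemma count_all (Q : Finset (Finset V)) (hQ : Q ⊆ univ.powersetCard l) (hl : 0 < l) (ht : 0 < t)
    (b : ℝ) (hb : 32 ≤ b) (hbt : 16 ≤ b ^ 2 / t)
    (hα : (#Q : ℝ) * t ≤ b * (Fintype.card V).choose l) (σ0 : Fin t × Fin l ↪ V) :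
    0 ≤ ∑ σ : Fin t × Fin l ↪ V, phi Q b (2 * Real.exp (-(b ^ 2 / t) / 2)) σ := by
  have hc : cls univ ∅ σ0 = univ := by ext; simp [mem_cls]
  have h := walk Q hl ht b hb hbt (t * l) ∅ ⟨0, ht⟩ (fun i _ => Or.inr (disjoint_empty_left _)) σ0
    (by simp)
  rw [hc] at h
  apply h
  have hpos : (0:ℝ) < Fintype.card (Fin t × Fin l ↪ V) := by
    exact_mod_cast Fintype.card_pos_iff.2 ⟨σ0⟩
  have hlV : l ≤ Fintype.card V := by
    have := Fintype.card_le_of_embedding σ0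
    rw [Fintype.card_prod, Fintype.card_fin, Fintype.card_fin] at this
    exact (Nat.le_mul_of_pos_left l ht).trans this
  have hch : (0:ℝ) < (Fintype.card V).choose l := by exact_mod_cast Nat.choose_pos hlV
  have hsum : (∑ σ : Fin t × Fin l ↪ V, eta Q σ) * ((Fintype.card V).choose l) =
      t * (#Q * (Fintype.card (Fin t × Fin l ↪ V) : ℝ)) := by
    unfold eta
    rw [Finset.sum_comm, Finset.sum_mul, Finset.sum_congr rfl fun i _ => sum_gi Q hQ i]
    simp
  have : av Q ∅ σ0 ≤ b := by
    unfold av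
    rw [hc, card_univ, div_le_iff₀ hpos]
    refine le_of_mul_le_mul_right ?_ hch
    rw [hsum]
    nlinarith
  linarith

end trans

section final
variable {m l t : ℕ}

/-- the tuple of row images -/
def Phi (σ : Fin t × Fin l ↪ Fin m) : Fin t → Finset ℕ :=
  fun i => ((rwo t l i).image σ).map Fin.valEmbedding

lemma Phi_mem (σ : Fin t × Fin l ↪ Fin m) : Phi σ ∈ tupleSpace m l t := by
  unfold tupleSpace
  rw [mem_filter, Fintype.mem_piFinset]
  refine ⟨fun i => ?_, fun i j hij => ?_⟩
  · rw [mem_powersetCard]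
    refine ⟨fun x hx => ?_, ?_⟩
    · obtain ⟨y, _, rfl⟩ := mem_map.1 hx
      simp
    · rw [Phi, card_map, card_image_of_injective _ σ.injective, card_rwo]
  · unfold Phi
    rw [disjoint_map, disjoint_image σ.injective]
    exact disj_rwo hij

lemma Phi_surj (B : Fin t → Finset ℕ) (hB : B ∈ tupleSpace m l t) :
    ∃ σ : Fin t × Fin l ↪ Fin m, Phi σ = B := by
  unfold tupleSpace at hB
  rw [mem_filter, Fintype.mem_piFinset] at hB
  obtain ⟨h1, h2⟩ := hB
  have hc : ∀ i, #(B i) = l := fun i => (mem_powersetCard.1 (h1 i)).2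
  have hlt : ∀ i, ∀ x ∈ B i, x < m := fun i x hx => mem_range.1 ((mem_powersetCard.1 (h1 i)).1 hx)
  have hm : ∀ i j, (B i).orderEmbOfFin (hc i) j ∈ B i := fun i j => orderEmbOfFin_mem _ _ _
  let σ : Fin t × Fin l ↪ Fin m := ⟨fun p => ⟨(B p.1).orderEmbOfFin (hc p.1) p.2, hlt _ _ (hm _ _)⟩, by
    rintro ⟨i, j⟩ ⟨i', j'⟩ h
    simp only [Fin.mk.injEq] at h
    by_cases hi : i = i'
    · subst hi
      rw [((B i).orderEmbOfFin (hc i)).injective h]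
    · exfalso
      exact disjoint_left.1 (h2 i i' hi) (hm i j) (h ▸ hm i' j')⟩
  refine ⟨σ, funext fun i => ?_⟩
  have hsub : Phi σ i ⊆ B i := by
    intro x hx
    obtain ⟨y, hy, rfl⟩ := mem_map.1 hx
    obtain ⟨p, hp, rfl⟩ := mem_image.1 hy
    rw [← mem_rwo.1 hp]
    exact hm p.1 p.2
  refine Finset.eq_of_subset_of_card_le hsub ?_
  rw [Phi, card_map, card_image_of_injective _ σ.injective, card_rwo, hc]

lemma Phi_perm (e : Equiv.Perm (Fin m)) (τ σ : Fin t × Fin l ↪ Fin m) (h : Phi τ = Phi σ) :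
    Phi (τ.trans e.toEmbedding) = Phi (σ.trans e.toEmbedding) := by
  funext i
  have hi := congrFun h i
  unfold Phi at hi ⊢
  rw [map_inj] at hi
  rw [image_comp_perm, image_comp_perm, hi]

lemma card_Phi_fiber (σ σ' : Fin t × Fin l ↪ Fin m) :
    #(univ.filter fun τ : Fin t × Fin l ↪ Fin m => Phi τ = Phi σ) =
    #(univ.filter fun τ : Fin t × Fin l ↪ Fin m => Phi τ = Phi σ') := by
  obtain ⟨e, he⟩ := perm_ext σ σ'
  have h1 : σ.trans e.toEmbedding = σ' := by ext p; simp [he]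
  have h2 : σ'.trans e.symm.toEmbedding = σ := by rw [← h1]; ext p; simp
  refine Finset.card_bij' (fun τ _ => τ.trans e.toEmbedding) (fun τ _ => τ.trans e.symm.toEmbedding)
    ?_ ?_ ?_ ?_
  · intro τ hτ
    rw [mem_filter] at hτ ⊢
    exact ⟨mem_univ _, by rw [Phi_perm e τ σ hτ.2, h1]⟩
  · intro τ hτ
    rw [mem_filter] at hτ ⊢
    exact ⟨mem_univ _, by rw [Phi_perm e.symm τ σ' hτ.2, h2]⟩
  · intro τ _; ext p; simp
  · intro τ _; ext p; simp

lemma transfer (σ0 : Fin t × Fin l ↪ Fin m) (P : (Fin t → Finset ℕ) → Prop) [DecidablePred P] :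
    #(univ.filter fun σ : Fin t × Fin l ↪ Fin m => P (Phi σ)) =
      #((tupleSpace m l t).filter P) *
        #(univ.filter fun τ : Fin t × Fin l ↪ Fin m => Phi τ = Phi σ0) := by
  rw [Finset.card_eq_sum_card_fiberwise (f := fun σ : Fin t × Fin l ↪ Fin m => Phi σ)
    (s := univ.filter fun σ : Fin t × Fin l ↪ Fin m => P (Phi σ))
    (t := (tupleSpace m l t).filter P)
    (fun σ hσ => mem_coe.2 (mem_filter.2 ⟨Phi_mem σ, (mem_filter.1 hσ).2⟩)), ← smul_eq_mul, ← sum_const]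
  refine Finset.sum_congr rfl fun B hB => ?_
  obtain ⟨h1, h2⟩ := mem_filter.1 hB
  obtain ⟨σ, rfl⟩ := Phi_surj B h1
  rw [card_Phi_fiber σ0 σ, Finset.filter_filter]
  congr 1
  refine Finset.filter_congr fun τ _ => ?_
  constructor
  · exact fun h => h.2
  · exact fun h => ⟨h ▸ h2, h⟩

end final

theorem big_versus_very_big (m l t : ℕ) (hm : 0 < m) (hl : 0 < l) (ht : 0 < t)
    (hml : t * l ≤ m) (G : Finset (Finset ℕ)) (hG : G ⊆ (Finset.range m).powersetCard l)
    (α : ℝ) (hα : α = (G.card : ℝ) / (m.choose l : ℝ))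
    (C : ℝ) (hC0 : 0 < C) (hC1 : C ≤ 1 / 2) (hCα : α ≤ C) (hCt : 16 ≤ C ^ 2 * t) :
    (((tupleSpace m l t).filter fun B => 4 * C * t ≤ (hits G B : ℝ)).card : ℝ) /
        ((tupleSpace m l t).card : ℝ) ≤
      2 * Real.exp (-(C ^ 2 * t) / 2) *
        ((((tupleSpace m l t).filter
              fun B => |(hits G B : ℝ) - 2 * C * t| ≤ C * t).card : ℝ) /
          ((tupleSpace m l t).card : ℝ)) := by
  rcases (tupleSpace m l t).eq_empty_or_nonempty with h0 | ⟨B0, hB0⟩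
  · rw [h0]; simp
  obtain ⟨σ0, -⟩ := Phi_surj B0 hB0
  have t0 : (0:ℝ) < t := by exact_mod_cast ht
  let Q : Finset (Finset (Fin m)) := univ.filter fun S => S.map Fin.valEmbedding ∈ G
  have hQ : Q ⊆ univ.powersetCard l := by
    intro S hS
    have h1 := (mem_powersetCard.1 (hG (mem_filter.1 hS).2)).2
    rw [card_map] at h1
    exact mem_powersetCard.2 ⟨subset_univ _, h1⟩
  have hQc : #Q ≤ #G := by
    refine Finset.card_le_card_of_injOn (fun S => S.map Fin.valEmbedding)
      (fun S hS => (mem_filter.1 hS).2) ?_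
    intro S _ S' _ h
    exact map_injective _ h
  have hch : (0:ℝ) < m.choose l := by
    exact_mod_cast Nat.choose_pos ((Nat.le_mul_of_pos_left l ht).trans hml)
  have hGc : (#G : ℝ) ≤ C * m.choose l := by
    rw [hα, div_le_iff₀ hch] at hCα; exact hCα
  have hQG : (#Q : ℝ) ≤ #G := by exact_mod_cast hQc
  have hbt : (C * t) ^ 2 / t = C ^ 2 * t := by field_simp
  have hmain := count_all Q hQ hl ht (C * t) (by nlinarith) (by rw [hbt]; exact hCt)
    (by rw [Fintype.card_fin]; nlinarith) σ0
  have heta : ∀ σ : Fin t × Fin l ↪ Fin m, eta Q σ = (hits G (Phi σ) : ℝ) := by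
    intro σ
    unfold eta gi hits
    rw [Finset.sum_boole]
    congr 2
    refine Finset.filter_congr fun i _ => ?_
    simp [Q, Phi]
  rw [hbt] at hmain
  unfold phi at hmain
  rw [Finset.sum_sub_distrib, ← Finset.mul_sum, Finset.sum_boole, Finset.sum_boole] at hmain
  simp only [heta, ← mul_assoc] at hmain
  have T1 := transfer σ0 (fun B => 4 * C * t ≤ (hits G B : ℝ))
  have T2 := transfer σ0 (fun B => |(hits G B : ℝ) - 2 * C * t| ≤ C * t)
  have hK : 0 < #(univ.filter fun τ : Fin t × Fin l ↪ Fin m => Phi τ = Phi σ0) :=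
    card_pos.2 ⟨σ0, by simp⟩
  have hK' : (0:ℝ) < #(univ.filter fun τ : Fin t × Fin l ↪ Fin m => Phi τ = Phi σ0) := by
    exact_mod_cast hK
  rw [T1, T2] at hmain
  push_cast at hmain
  rw [← mul_div_assoc]
  refine div_le_div_of_nonneg_right ?_ (Nat.cast_nonneg _)
  refine le_of_mul_le_mul_right ?_ hK'
  linarith
end

section
/- Let Y be a finite set and l, s, t positive integers. Let F_1, …, F_{s+1} be families of l-element subsets of Y that are cross-dependent and nested, and let B = {B_1, …, B_t} be a collection of t pairwise disjoint l-element subsets of Y. Let x, q be reals with 1 ≤ x ≤ s+1, 1 ≤ q ≤ s+1, and suppose t ≥ s + x + 1. Then: (i) if |B ∩ F_{s+1}| ≥ x, one has |B ∩ F_1| + … + |B ∩ F_s| + q·|B ∩ F_{s+1}| ≤ st + q·|B ∩ F_{s+1}| − sx; and (ii) if |B ∩ F_{s+1}| ≤ x, one has |B ∩ F_1| + … + |B ∩ F_s| + q·|B ∩ F_{s+1}| ≤ st − |B ∩ F_{s+1}|·(x − q·|B ∩ F_{s+1}|/(s+1)). -/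
open Finset

theorem cross_dependent_matching_bound (Y : Finset ℕ) (l s t : ℕ)
    (hl : 0 < l) (hs : 0 < s) (ht : 0 < t)
    (F : ℕ → Finset (Finset ℕ))
    (hF : ∀ i ∈ Finset.Icc 1 (s + 1), ∀ A ∈ F i, A ⊆ Y ∧ A.card = l)
    (hnested : ∀ i ∈ Finset.Icc 1 s, F (i + 1) ⊆ F i)
    (hcross : ¬ ∃ g : ℕ → Finset ℕ,
      (∀ i ∈ Finset.Icc 1 (s + 1), g i ∈ F i) ∧
      ∀ i ∈ Finset.Icc 1 (s + 1), ∀ j ∈ Finset.Icc 1 (s + 1), i ≠ j → Disjoint (g i) (g j))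
    (B : Finset (Finset ℕ)) (hBcard : B.card = t)
    (hBsets : ∀ A ∈ B, A ⊆ Y ∧ A.card = l)
    (hBdisj : (B : Set (Finset ℕ)).Pairwise (fun A A' => Disjoint A A'))
    (x q : ℝ) (hx1 : 1 ≤ x) (hx2 : x ≤ (s : ℝ) + 1) (hq1 : 1 ≤ q) (hq2 : q ≤ (s : ℝ) + 1)
    (htsx : (s : ℝ) + x + 1 ≤ (t : ℝ)) :
    ((x ≤ ((B ∩ F (s + 1)).card : ℝ) →
      (∑ i ∈ Finset.Icc 1 s, ((B ∩ F i).card : ℝ)) + q * ((B ∩ F (s + 1)).card : ℝ) ≤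
        (s : ℝ) * t + q * ((B ∩ F (s + 1)).card : ℝ) - (s : ℝ) * x) ∧
    (((B ∩ F (s + 1)).card : ℝ) ≤ x →
      (∑ i ∈ Finset.Icc 1 s, ((B ∩ F i).card : ℝ)) + q * ((B ∩ F (s + 1)).card : ℝ) ≤
        (s : ℝ) * t - ((B ∩ F (s + 1)).card : ℝ) *
          (x - q * ((B ∩ F (s + 1)).card : ℝ) / ((s : ℝ) + 1)))) := by
  classical
  -- monotonicity
  have hmono : ∀ i, 1 ≤ i → ∀ j, i ≤ j → j ≤ s + 1 → F j ⊆ F i := by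
    intro i hi j hij
    induction j, hij using Nat.le_induction with
    | base => intro _; exact Finset.Subset.refl _
    | succ n hn ih =>
      intro h
      exact (hnested n (Finset.mem_Icc.2 ⟨by omega, by omega⟩)).trans (ih (by omega))
  have hbm : ∀ i, 1 ≤ i → ∀ j, i ≤ j → j ≤ s + 1 → (B ∩ F j).card ≤ (B ∩ F i).card := by
    intro i hi j hij hj
    exact Finset.card_le_card (Finset.inter_subset_inter_left (hmono i hi j hij hj))
  have key : ∃ i, 1 ≤ i ∧ i ≤ s + 1 ∧ (B ∩ F i).card + i ≤ s + 1 := by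
    by_contra hcon
    push Not at hcon
    apply hcross
    have hall := (Finset.all_card_le_biUnion_card_iff_exists_injective
      (fun i : Fin (s + 1) => B ∩ F (i.val + 1))).1 (by
        intro S
        rcases S.eq_empty_or_nonempty with rfl | hS
        · simp
        · have h1 : S.card ≤ (Finset.Ici (S.min' hS)).card :=
            Finset.card_le_card (fun a ha => Finset.mem_Ici.2 (S.min'_le a ha))
          rw [Fin.card_Ici] at h1
          have h2 : (B ∩ F ((S.min' hS).val + 1)).card ≤
              (S.biUnion (fun i : Fin (s + 1) => B ∩ F (i.val + 1))).card :=
            Finset.card_le_card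
              (Finset.subset_biUnion_of_mem (fun i : Fin (s + 1) => B ∩ F (i.val + 1))
                (S.min'_mem hS))
          have h3 := hcon ((S.min' hS).val + 1) (by omega) (by omega)
          omega)
    obtain ⟨f, hf, hfm⟩ := hall
    refine ⟨fun i => if h : i - 1 < s + 1 then f ⟨i - 1, h⟩ else ∅, ?_, ?_⟩
    · intro i hi
      rw [Finset.mem_Icc] at hi
      have h : i - 1 < s + 1 := by omega
      have h' := (Finset.mem_inter.1 (hfm ⟨i - 1, h⟩)).2
      simp only [h, dif_pos]
      simpa [Nat.sub_add_cancel hi.1] using h'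
    · intro i hi j hj hij
      rw [Finset.mem_Icc] at hi hj
      have h : i - 1 < s + 1 := by omega
      have h' : j - 1 < s + 1 := by omega
      simp only [h, h', dif_pos]
      apply hBdisj
      · exact Finset.mem_coe.2 (Finset.mem_inter.1 (hfm ⟨i - 1, h⟩)).1
      · exact Finset.mem_coe.2 (Finset.mem_inter.1 (hfm ⟨j - 1, h'⟩)).1
      · intro he
        have := congrArg Fin.val (hf he)
        simp only at this
        omega
  obtain ⟨i, hi1, hi2, hi3⟩ := key
  obtain ⟨m, hm⟩ : ∃ m, s + 1 = i + m := ⟨s + 1 - i, by omega⟩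
  have hbim : (B ∩ F i).card ≤ m := by omega
  have hbm' : (B ∩ F (s + 1)).card ≤ m := (hbm i hi1 (s + 1) hi2 le_rfl).trans hbim
  have hsum : ∑ k ∈ Finset.Icc 1 s, ((B ∩ F k).card : ℝ) ≤ ((s : ℝ) - m) * t + m * m := by
    have hle : ∀ k ∈ Finset.Icc 1 s, ((B ∩ F k).card : ℝ) ≤ if k < i then (t : ℝ) else m := by
      intro k hk
      rw [Finset.mem_Icc] at hk
      split_ifs with h
      · have : (B ∩ F k).card ≤ t := hBcard ▸ Finset.card_le_card Finset.inter_subset_left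
        exact_mod_cast this
      · have := (hbm i hi1 k (by omega) (by omega)).trans hbim
        exact_mod_cast this
    refine (Finset.sum_le_sum hle).trans (le_of_eq ?_)
    rw [Finset.sum_ite, Finset.sum_const, Finset.sum_const]
    have e1 : (Finset.Icc 1 s).filter (fun k => k < i) = Finset.Ico 1 i := by
      ext k; simp only [Finset.mem_filter, Finset.mem_Icc, Finset.mem_Ico]; omega
    have e2 : (Finset.Icc 1 s).filter (fun k => ¬ k < i) = Finset.Ico i (s + 1) := by
      ext k; simp only [Finset.mem_filter, Finset.mem_Icc, Finset.mem_Ico]; omega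
    rw [e1, e2, Nat.card_Ico, Nat.card_Ico, show s + 1 - i = m by omega, nsmul_eq_mul,
      nsmul_eq_mul, Nat.cast_sub hi1]
    have : (s : ℝ) + 1 = i + m := by exact_mod_cast hm
    push_cast
    rw [show (i : ℝ) - 1 = s - m by linarith]
  have hms : (m : ℝ) ≤ s := by exact_mod_cast (by omega : m ≤ s)
  have hm0 : (0 : ℝ) ≤ m := Nat.cast_nonneg m
  have hbR : ((B ∩ F (s + 1)).card : ℝ) ≤ m := by exact_mod_cast hbm'
  have hb0 : (0 : ℝ) ≤ ((B ∩ F (s + 1)).card : ℝ) := Nat.cast_nonneg _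
  generalize ((B ∩ F (s + 1)).card : ℝ) = b at *
  generalize ∑ k ∈ Finset.Icc 1 s, ((B ∩ F k).card : ℝ) = S at *
  have hmt := mul_le_mul_of_nonneg_left htsx hm0
  constructor
  · intro hxb
    have := mul_nonneg (sub_nonneg.2 hms) (sub_nonneg.2 (hxb.trans hbR))
    nlinarith
  · intro hbx
    have hs1 : (0 : ℝ) < (s : ℝ) + 1 := by positivity
    have h1 := mul_nonneg (sub_nonneg.2 hbR)
      (by linarith : (0 : ℝ) ≤ (s : ℝ) + x + 1 - m - b)
    have h2 : q * b - q * b * b / ((s : ℝ) + 1) ≤ b * ((s : ℝ) + 1 - b) := by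
      have e : q * b - q * b * b / ((s : ℝ) + 1) =
          q / ((s : ℝ) + 1) * (b * ((s : ℝ) + 1 - b)) := by
        field_simp
      rw [e]
      exact mul_le_of_le_one_left (mul_nonneg hb0 (by linarith)) ((div_le_one hs1).2 hq2)
    have e3 : b * (x - q * b / ((s : ℝ) + 1)) = b * x - q * b * b / ((s : ℝ) + 1) := by ring
    rw [e3]
    nlinarith
end
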